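/- Let d > 2 be an integer, c₀ ∈ (0,1], and ε > 0. There exist constants c⋆, C⋆ > 0 depending only on (d, c₀) such that for all constants c ∈ (0, c⋆] and C ≥ C⋆ there exist η ∈ (0,1) and δ₂ ∈ (0,1/2] with the following property. For every admissible kernel J on ℤ^d with constant c₀ and every G ∈ 𝒢 with (J,G) satisfying Assumption G, for every β < β(δ₂): if for every β' ≤ β and every x ∈ ℤ^d one has F_{β'}(x) ≤ (C/σ_J^d)·(σ_J/(σ_J∨|x|))^{d−2−ε}·exp(−c·|x|/ξ(β')), then for every x ∈ ℤ^d with 2σ_J ≤ |x| ≤ η·ξ(β): F_β(x) ≤ (1/6)·(C/σ_J^d)·(σ_J/(σ_J∨|x|))^{d−2−ε}. -/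

import Mathlib

open scoped ENNReal

noncomputable section

namespace Blackbox

/-- Supremum norm of a lattice point. -/
def supNorm {d : ℕ} (x : Fin d → ℤ) : ℝ :=
  ((Finset.univ.sup fun i => (x i).natAbs : ℕ) : ℝ)

/-- Squared Euclidean norm of a lattice point. -/
def sqNorm {d : ℕ} (x : Fin d → ℤ) : ℝ :=
  ∑ i, ((x i : ℝ)) ^ 2

/-- Invariance under coordinate permutations and sign flips of individual coordinates. -/
def IsSymmFun {d : ℕ} {α : Type*} (f : (Fin d → ℤ) → α) : Prop :=
  ∀ (π : Equiv.Perm (Fin d)) (e : Fin d → Bool) (x : Fin d → ℤ),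
    f (fun i => (if e i then -1 else 1) * x (π i)) = f x

/-- First coordinate (dot product with `e₁`). -/
def e1 {d : ℕ} {α : Type*} [Zero α] (y : Fin d → α) : α :=
  if h : 0 < d then y ⟨0, h⟩ else 0

/-- An admissible kernel on `ℤ^d` with constant `c₀`. -/
structure AdmissibleKernel (d : ℕ) (c₀ : ℝ) where
  J : (Fin d → ℤ) → ℝ
  nonneg : ∀ x, 0 ≤ J x
  zero_at_zero : J 0 = 0
  summable : Summable J
  norm_one : ∑' x, J x = 1
  symm : IsSymmFun J
  R : ℝ
  R_ge_one : 1 ≤ R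
  range_le : ∀ x, 0 < J x → supNorm x ≤ R
  range_attained : ∃ x, 0 < J x ∧ supNorm x = R
  summable_sq : Summable fun x => sqNorm x * J x
  sigma_lower : c₀ * R ≤ Real.sqrt (∑' x, sqNorm x * J x)
  J_upper : ∀ x, J x ≤ c₀⁻¹ / R ^ d

/-- `σ_J`, the square root of the variance of the kernel. -/
def AdmissibleKernel.sigma {d : ℕ} {c₀ : ℝ} (K : AdmissibleKernel d c₀) : ℝ :=
  Real.sqrt (∑' x, sqNorm x * K.J x)

/-- A family `G ∈ 𝒢` together with an admissible kernel `J` such that `(J,G)` satisfies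
Assumption G (with error-term family `H`). -/
structure Model (d : ℕ) (c₀ : ℝ) where
  K : AdmissibleKernel d c₀
  G : ℝ → (Fin d → ℤ) → ℝ≥0∞
  βc : ℝ≥0∞
  βc_pos : 0 < βc
  init : ∀ x, G 0 x = if x = 0 then 1 else 0
  G' : ℝ → (Fin d → ℤ) → ℝ
  mono : ∀ (x : Fin d → ℤ) ⦃β₁ β₂ : ℝ⦄, 0 ≤ β₁ → β₁ ≤ β₂ →
    ENNReal.ofReal β₂ ≤ βc → G β₁ x ≤ G β₂ x
  deriv : ∀ (x : Fin d → ℤ) ⦃β : ℝ⦄, 0 ≤ β → ENNReal.ofReal β < βc →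
    HasDerivWithinAt (fun t => (G t x).toReal) (G' β x) (Set.Ici 0) β
  symm : ∀ β, IsSymmFun (G β)
  expDecay : ∀ ⦃β : ℝ⦄, 0 ≤ β → ENNReal.ofReal β < βc →
    ∃ C > (0:ℝ), ∃ c > (0:ℝ), ∀ x, G β x ≤ ENNReal.ofReal (C * Real.exp (-c * supNorm x))
  limit : βc ≠ ⊤ → ∀ x, G βc.toReal x = ⨆ β ∈ Set.Ico (0 : ℝ) βc.toReal, G β x
  I1 : ∀ ⦃β' β : ℝ⦄, 0 ≤ β' → β' ≤ β → ENNReal.ofReal β < βc →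
    ∀ x, G β x ≤ G β' x + ENNReal.ofReal (β - β') *
      ∑' p : (Fin d → ℤ) × (Fin d → ℤ),
        G β' p.1 * ENNReal.ofReal (K.J p.2) * G β (x - p.1 - p.2)
  H : ℝ → (Fin d → ℤ) → ℝ
  H_nonneg : ∀ β x, 0 ≤ H β x
  H_zero : ∀ x, H 0 x = 0
  H_symm : ∀ β x, H β (-x) = H β x
  H_cont : ∀ x, ContinuousOn (fun β => H β x)
    {β : ℝ | 0 ≤ β ∧ ENNReal.ofReal β < βc}
  H_expDecay : ∀ ⦃β : ℝ⦄, 0 ≤ β → ENNReal.ofReal β < βc →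
    ∃ C > (0:ℝ), ∃ c > (0:ℝ), ∀ x, H β x ≤ C * Real.exp (-c * supNorm x)
  I2 : ∀ ⦃β : ℝ⦄, 0 ≤ β → ENNReal.ofReal β < βc → ∀ x,
    (∑' p : (Fin d → ℤ) × (Fin d → ℤ),
      (G β p.1).toReal * (K.J p.2 - H β p.2) * (G β (x - p.1 - p.2)).toReal)
      ≤ G' β x

namespace Model

variable {d : ℕ} {c₀ : ℝ}

def sigma (M : Model d c₀) : ℝ := M.K.sigma

/-- `F_β = J * G_β`. -/
def F (M : Model d c₀) (β : ℝ) (x : Fin d → ℤ) : ℝ≥0∞ :=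
  ∑' y, ENNReal.ofReal (M.K.J y) * M.G β (x - y)

/-- The susceptibility `χ(β)`. -/
def chi (M : Model d c₀) (β : ℝ) : ℝ≥0∞ := ∑' x, M.G β x

/-- `ξ(β)²`. -/
def xiSq (M : Model d c₀) (β : ℝ) : ℝ≥0∞ :=
  (∑' x, ENNReal.ofReal (sqNorm x) * M.F β x) / M.chi β

/-- The correlation length of order two, `ξ(β)`. -/
def xi (M : Model d c₀) (β : ℝ) : ℝ := Real.sqrt (M.xiSq β).toReal

/-- The error term `E(β)`. -/
def E (M : Model d c₀) (β : ℝ) : ℝ≥0∞ :=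
  ⨆ t ∈ Set.Icc (0 : ℝ) β,
    (ENNReal.ofReal (∑' x, M.H t x) +
      ENNReal.ofReal (∑' x, sqNorm x * M.H t x) / M.xiSq t)

/-- `β(δ)`. -/
def betaOf (M : Model d c₀) (δ : ℝ) : ℝ :=
  sSup {β : ℝ | 0 ≤ β ∧ ENNReal.ofReal β < M.βc ∧ M.E β < ENNReal.ofReal δ}

/-- One-step distribution of the effective random walk at parameter `β`. -/
def effStep (M : Model d c₀) (β : ℝ) (y : Fin d → ℤ) : ℝ≥0∞ :=
  M.F β y / M.chi β

/-- `k`-step distribution of the effective random walk at parameter `β`. -/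
def effIter (M : Model d c₀) (β : ℝ) : ℕ → (Fin d → ℤ) → ℝ≥0∞
  | 0 => fun x => if x = 0 then 1 else 0
  | n + 1 => fun x => ∑' y, M.effStep β y * M.effIter β n (x - y)

/-- Moment generating function `M_β(s)` of the first coordinate of one step of the
effective random walk. -/
def Mgf (M : Model d c₀) (β s : ℝ) : ℝ≥0∞ :=
  ∑' y : Fin d → ℤ, M.effStep β y * ENNReal.ofReal (Real.exp (s / M.xi β * ((e1 y : ℤ) : ℝ)))

end Model

end Blackbox
open Blackbox

namespace S18

abbrev V (d : ℕ) := Fin d → ℤ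

/-- convolution -/
def conv {d : ℕ} (f g : V d → ℝ≥0∞) (x : V d) : ℝ≥0∞ := ∑' y, f y * g (x - y)

def delta {d : ℕ} : V d → ℝ≥0∞ := fun x => if x = 0 then 1 else 0

def cpow {d : ℕ} (f : V d → ℝ≥0∞) : ℕ → V d → ℝ≥0∞
  | 0 => delta
  | n + 1 => conv f (cpow f n)

def box {d : ℕ} (r : ℝ) : V d → ℝ≥0∞ := fun x => if supNorm x ≤ r then 1 else 0

def mass {d : ℕ} (f : V d → ℝ≥0∞) : ℝ≥0∞ := ∑' x, f x

variable {d : ℕ}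

lemma conv_comm (f g : V d → ℝ≥0∞) : conv f g = conv g f := by
  funext x
  unfold conv
  rw [← (Equiv.subLeft x).tsum_eq]
  refine tsum_congr fun y => ?_
  simp [mul_comm]

lemma conv_assoc (f g h : V d → ℝ≥0∞) : conv (conv f g) h = conv f (conv g h) := by
  funext x
  unfold conv
  simp_rw [← ENNReal.tsum_mul_right, ← ENNReal.tsum_mul_left]
  rw [ENNReal.tsum_comm]
  refine tsum_congr fun z => ?_
  rw [← (Equiv.addLeft z).tsum_eq]
  refine tsum_congr fun y => ?_
  simp [mul_assoc, sub_sub]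

lemma conv_mono {f g f' g' : V d → ℝ≥0∞} (h : ∀ x, f x ≤ f' x) (h' : ∀ x, g x ≤ g' x) (x : V d) :
    conv f g x ≤ conv f' g' x :=
  ENNReal.tsum_le_tsum fun y => mul_le_mul' (h y) (h' _)

lemma conv_delta (f : V d → ℝ≥0∞) : conv f delta = f := by
  funext x
  unfold conv delta
  rw [tsum_eq_single x]
  · simp
  · intro y hy
    rw [if_neg]
    · simp
    · intro h; exact hy (sub_eq_zero.mp h).symm

lemma delta_conv (f : V d → ℝ≥0∞) : conv delta f = f := by rw [conv_comm, conv_delta]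

lemma conv_add_right (f g h : V d → ℝ≥0∞) :
    conv f (fun x => g x + h x) = fun x => conv f g x + conv f h x := by
  funext x
  simp [conv, mul_add, ENNReal.tsum_add]

lemma conv_add_left (f g h : V d → ℝ≥0∞) :
    conv (fun x => g x + h x) f = fun x => conv g f x + conv h f x := by
  funext x
  simp [conv, add_mul, ENNReal.tsum_add]

lemma conv_smul_right (c : ℝ≥0∞) (f g : V d → ℝ≥0∞) :
    conv f (fun x => c * g x) = fun x => c * conv f g x := by
  funext x
  simp only [conv, ← ENNReal.tsum_mul_left]
  refine tsum_congr fun y => ?_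
  ring

lemma conv_smul_left (c : ℝ≥0∞) (f g : V d → ℝ≥0∞) :
    conv (fun x => c * f x) g = fun x => c * conv f g x := by
  rw [conv_comm, conv_smul_right, conv_comm]

lemma mass_conv (f g : V d → ℝ≥0∞) : mass (conv f g) = mass f * mass g := by
  unfold mass conv
  rw [ENNReal.tsum_comm, ← ENNReal.tsum_mul_right]
  refine tsum_congr fun y => ?_
  rw [ENNReal.tsum_mul_left]
  congr 1
  exact (Equiv.subRight y).tsum_eq g

/-- general weighted sum of a convolution -/
lemma tsum_mul_conv (w : V d → ℝ≥0∞) (f g : V d → ℝ≥0∞) :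
    ∑' x, w x * conv f g x = ∑' y, ∑' z, w (y + z) * (f y * g z) := by
  unfold conv
  simp_rw [← ENNReal.tsum_mul_left]
  rw [ENNReal.tsum_comm]
  refine tsum_congr fun y => ?_
  rw [← (Equiv.addLeft y).tsum_eq]
  refine tsum_congr fun z => ?_
  simp

lemma mass_delta : mass (delta : V d → ℝ≥0∞) = 1 := by
  simp [mass, delta]

lemma mass_cpow (f : V d → ℝ≥0∞) (n : ℕ) : mass (cpow f n) = mass f ^ n := by
  induction n with
  | zero => simp [cpow, mass_delta]
  | succ n ih => rw [cpow, mass_conv, ih, pow_succ']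

lemma cpow_one (f : V d → ℝ≥0∞) : cpow f 1 = f := by simp [cpow, conv_delta]

lemma cpow_add (f : V d → ℝ≥0∞) (m n : ℕ) : cpow f (m + n) = conv (cpow f m) (cpow f n) := by
  induction m with
  | zero => simp [cpow, delta_conv]
  | succ m ih => rw [Nat.add_right_comm, cpow, ih, cpow, conv_assoc]

lemma cpow_smul (c : ℝ≥0∞) (f : V d → ℝ≥0∞) (n : ℕ) :
    cpow (fun x => c * f x) n = fun x => c ^ n * cpow f n x := by
  induction n with
  | zero => simp [cpow]
  | succ n ih =>
    rw [cpow, ih, conv_smul_left, conv_smul_right]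
    funext x; simp only [cpow]; ring

/-- sup bound times mass -/
lemma conv_le_mass_mul (f g : V d → ℝ≥0∞) (B : ℝ≥0∞) (h : ∀ x, g x ≤ B) (x : V d) :
    conv f g x ≤ mass f * B := by
  unfold conv mass
  rw [← ENNReal.tsum_mul_right]
  exact ENNReal.tsum_le_tsum fun y => mul_le_mul' le_rfl (h _)

/-! supNorm -/

lemma supNorm_nonneg (x : V d) : 0 ≤ supNorm x := by unfold supNorm; positivity

lemma abs_le_supNorm (x : V d) (i : Fin d) : |(x i : ℝ)| ≤ supNorm x := by
  unfold supNorm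
  rw [← Int.cast_abs, Int.abs_eq_natAbs]
  have := Finset.le_sup (f := fun i => (x i).natAbs) (Finset.mem_univ i)
  exact_mod_cast this

lemma supNorm_le_iff (x : V d) {r : ℝ} (hr : 0 ≤ r) : supNorm x ≤ r ↔ ∀ i, |(x i : ℝ)| ≤ r := by
  constructor
  · intro h i; exact (abs_le_supNorm x i).trans h
  · intro h
    unfold supNorm
    have h2 : (Finset.univ.sup fun i => (x i).natAbs) ≤ ⌊r⌋₊ := by
      apply Finset.sup_le
      intro i _
      apply Nat.le_floor
      have := h i
      rw [← Int.cast_abs, Int.abs_eq_natAbs, Int.cast_natCast] at this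
      exact this
    exact (Nat.le_floor_iff hr).mp h2

lemma supNorm_add_le (x y : V d) : supNorm (x + y) ≤ supNorm x + supNorm y := by
  rw [supNorm_le_iff _ (add_nonneg (supNorm_nonneg _) (supNorm_nonneg _))]
  intro i
  have := abs_add_le (x i : ℝ) (y i : ℝ)
  have h1 := abs_le_supNorm x i
  have h2 := abs_le_supNorm y i
  simp only [Pi.add_apply, Int.cast_add]
  linarith

lemma supNorm_neg (x : V d) : supNorm (-x) = supNorm x := by simp [supNorm]

lemma supNorm_sub_comm (x y : V d) : supNorm (x - y) = supNorm (y - x) := by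
  rw [← supNorm_neg, neg_sub]

lemma supNorm_zero : supNorm (0 : V d) = 0 := by
  apply le_antisymm _ (supNorm_nonneg _)
  rw [supNorm_le_iff _ le_rfl]; simp

lemma exists_supNorm (hd : 0 < d) (x : V d) : ∃ i, |(x i : ℝ)| = supNorm x := by
  have : Nonempty (Fin d) := ⟨⟨0, hd⟩⟩
  obtain ⟨i, _, hi⟩ := Finset.exists_mem_eq_sup (Finset.univ : Finset (Fin d)) Finset.univ_nonempty
    (fun i => (x i).natAbs)
  refine ⟨i, ?_⟩
  unfold supNorm
  rw [hi, ← Int.cast_abs, Int.abs_eq_natAbs]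
  simp

lemma sqNorm_nonneg (x : V d) : 0 ≤ sqNorm x := by unfold sqNorm; positivity

lemma sqNorm_neg (x : V d) : sqNorm (-x) = sqNorm x := by simp [sqNorm]

lemma sqNorm_le (x : V d) : sqNorm x ≤ d * supNorm x ^ 2 := by
  unfold sqNorm
  calc _ ≤ ∑ i : Fin d, supNorm x ^ 2 := Finset.sum_le_sum fun i _ => by
        rw [← sq_abs]; exact pow_le_pow_left₀ (abs_nonneg _) (abs_le_supNorm x i) 2
    _ = _ := by simp

lemma one_le_sqNorm {x : V d} (hx : x ≠ 0) : 1 ≤ sqNorm x := by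
  obtain ⟨i, hi⟩ := Function.ne_iff.mp hx
  unfold sqNorm
  calc (1:ℝ) ≤ (x i : ℝ) ^ 2 := by
        have : (1:ℤ) ≤ (x i)^2 := by
          have : 0 < (x i)^2 := by
            have : x i ≠ 0 := hi
            positivity
          omega
        exact_mod_cast this
    _ ≤ _ := Finset.single_le_sum (f := fun i => (x i : ℝ)^2) (fun j _ => by positivity) (Finset.mem_univ i)

/-! symmetric functions -/

lemma IsSymmFun.even {α : Type*} {f : V d → α} (h : IsSymmFun f) (x : V d) : f (-x) = f x := by
  have := h (Equiv.refl _) (fun _ => true) x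
  simpa [Function.comp_def, ← Pi.neg_def] using this

/-- signed permutation as an additive equiv -/
def symEquiv (π : Equiv.Perm (Fin d)) (e : Fin d → Bool) : V d ≃ V d where
  toFun x := fun i => (if e i then -1 else 1) * x (π i)
  invFun x := fun i => (if e (π.symm i) then -1 else 1) * x (π.symm i)
  left_inv x := by funext i; by_cases h : e (π.symm i) <;> simp [h]
  right_inv x := by funext i; by_cases h : e i <;> simp [h]

lemma conv_symm {f g : V d → ℝ≥0∞} (hf : IsSymmFun f) (hg : IsSymmFun g) : IsSymmFun (conv f g) := by
  intro π e x
  unfold conv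
  rw [← (symEquiv π e).tsum_eq]
  refine tsum_congr fun y => ?_
  have h1 := hf π e y
  have h2 := hg π e (x - y)
  simp only [symEquiv, Equiv.coe_fn_mk]
  rw [h1, ← h2]
  congr 2
  funext i
  simp [mul_sub]

lemma delta_even (x : V d) : (delta (-x) : ℝ≥0∞) = delta x := by simp [delta]

lemma conv_even {f g : V d → ℝ≥0∞} (hf : ∀ x, f (-x) = f x) (hg : ∀ x, g (-x) = g x) (x : V d) :
    conv f g (-x) = conv f g x := by
  unfold conv
  rw [← (Equiv.neg (V d)).tsum_eq]
  refine tsum_congr fun y => ?_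
  have h1 := hg (x - y)
  simp only [Equiv.neg_apply]
  rw [hf, ← h1]; congr 2; abel

lemma cpow_even {f : V d → ℝ≥0∞} (hf : ∀ x, f (-x) = f x) (n : ℕ) (x : V d) :
    cpow f n (-x) = cpow f n x := by
  induction n generalizing x with
  | zero => exact delta_even x
  | succ n ih => exact conv_even hf ih x

lemma box_even (r : ℝ) (x : V d) : box r (-x) = box r x := by simp [box, supNorm_neg]

end S18

namespace S18
variable {d : ℕ}

lemma tsum_pi_prod (d : ℕ) (g : ℤ → ℝ≥0∞) : ∑' w : V d, ∏ i, g (w i) = (∑' n, g n) ^ d := by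
  induction d with
  | zero => 
    rw [tsum_eq_single (0 : V 0)]
    · simp
    · intro b hb; exact absurd (Subsingleton.elim _ _) hb
  | succ d ih =>
    rw [← (Fin.consEquiv (fun _ : Fin (d+1) => ℤ)).tsum_eq]
    rw [ENNReal.tsum_prod']
    simp only [Fin.consEquiv_apply, Fin.prod_univ_succ, Fin.cons_zero, Fin.cons_succ]
    simp_rw [ENNReal.tsum_mul_left]
    rw [ih, ENNReal.tsum_mul_right, pow_succ']

lemma tsum_int_weight (s : ℝ) (hs : 1 ≤ s) :
    ∑' n : ℤ, ENNReal.ofReal (((1 + |(n:ℝ)| / s) ^ 2)⁻¹) ≤ ENNReal.ofReal (4 * s) := by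
  have hs0 : 0 < s := by linarith
  have key : ∀ N : ℕ, ∑ n ∈ Finset.range N, ((1 + (n:ℝ) / s) ^ 2)⁻¹ ≤ 2 * s := by
    have h1 : ∀ N : ℕ, ∑ n ∈ Finset.range (N+1), ((1 + (n:ℝ) / s) ^ 2)⁻¹ ≤ 1 + s - s^2/(s+N) := by
      intro N
      induction N with
      | zero => simp; field_simp; linarith
      | succ N ih =>
        rw [Finset.sum_range_succ]
        have : ((1 + ((N+1:ℕ):ℝ) / s) ^ 2)⁻¹ ≤ s^2/(s+N) - s^2/(s+(N+1:ℕ)) := by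
          push_cast
          have e1 : ((1 + ((N:ℝ)+1) / s) ^ 2)⁻¹ = s^2 / (s+(N+1))^2 := by field_simp
          have e2 : s^2/(s+N) - s^2/(s+(N+1)) = s^2 / ((s+N)*(s+(N+1))) := by field_simp; ring
          rw [e1, e2]
          apply div_le_div_of_nonneg_left (by positivity) (by positivity)
          rw [sq]
          gcongr
          linarith
        linarith
    intro N
    cases N with
    | zero => simp; linarith
    | succ N =>
      have := h1 N
      have h2 : 0 ≤ s^2/(s+N) := by positivity
      linarith
  have key2 : ∑' n : ℕ, ENNReal.ofReal (((1 + (n:ℝ) / s) ^ 2)⁻¹) ≤ ENNReal.ofReal (2*s) := by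
    apply ENNReal.tsum_le_of_sum_range_le
    intro N
    rw [← ENNReal.ofReal_sum_of_nonneg (fun i _ => by positivity)]
    exact ENNReal.ofReal_le_ofReal (key N)
  have hsum := (HasSum.of_nat_of_neg_add_one
    (f := fun n : ℤ => ENNReal.ofReal (((1 + |(n:ℝ)| / s) ^ 2)⁻¹))
    ENNReal.summable.hasSum ENNReal.summable.hasSum).tsum_eq
  rw [hsum]
  have e : ENNReal.ofReal (4*s) = ENNReal.ofReal (2*s) + ENNReal.ofReal (2*s) := by
    rw [← ENNReal.ofReal_add (by positivity) (by positivity)]; congr 1; ring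
  rw [e]
  apply add_le_add
  · refine le_trans (le_of_eq ?_) key2
    refine tsum_congr fun n => ?_
    simp
  · refine le_trans ?_ key2
    refine ENNReal.tsum_le_tsum fun n => ENNReal.ofReal_le_ofReal ?_
    push_cast
    have : |(-((n:ℝ)+1))| = n + 1 := by rw [abs_neg]; exact abs_of_nonneg (by positivity)
    rw [this]
    gcongr
    linarith

lemma wsum (s : ℝ) (hs : 1 ≤ s) :
    ∑' w : V d, ENNReal.ofReal (((1 + supNorm w / s) ^ (2*d))⁻¹) ≤ ENNReal.ofReal ((4*s)^d) := by
  have hs0 : 0 < s := by linarith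
  calc _ ≤ ∑' w : V d, ∏ i, ENNReal.ofReal (((1 + |(w i:ℝ)| / s) ^ 2)⁻¹) := by
        refine ENNReal.tsum_le_tsum fun w => ?_
        rw [← ENNReal.ofReal_prod_of_nonneg (fun i _ => by positivity)]
        apply ENNReal.ofReal_le_ofReal
        rw [pow_mul, ← inv_pow]
        have : ((1 + supNorm w / s)^2)⁻¹ ^ d = ∏ i : Fin d, ((1 + supNorm w / s)^2)⁻¹ := by simp
        rw [this]
        have h0 := supNorm_nonneg w
        refine Finset.prod_le_prod (fun i _ => by positivity) (fun i _ => ?_)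
        have := abs_le_supNorm w i
        gcongr
    _ = (∑' n : ℤ, ENNReal.ofReal (((1 + |(n:ℝ)| / s) ^ 2)⁻¹)) ^ d :=
        tsum_pi_prod d (fun n : ℤ => ENNReal.ofReal (((1 + |(n:ℝ)| / s) ^ 2)⁻¹))
    _ ≤ ENNReal.ofReal (4*s) ^ d := pow_le_pow_left' (tsum_int_weight s hs) d
    _ = _ := by rw [ENNReal.ofReal_pow (by positivity)]

lemma box_mass_ge (s : ℝ) (hs : 1 ≤ s) : ENNReal.ofReal (s^d) ≤ mass (box s : V d → ℝ≥0∞) := by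
  have hs0 : 0 < s := by linarith
  have e : mass (box s : V d → ℝ≥0∞) = (∑' n : ℤ, if |(n:ℝ)| ≤ s then (1:ℝ≥0∞) else 0) ^ d := by
    rw [← tsum_pi_prod]
    unfold mass
    refine tsum_congr fun w => ?_
    unfold box
    rw [Finset.prod_ite_zero]
    simp only [supNorm_le_iff _ hs0.le]
    simp
  rw [e, ENNReal.ofReal_pow hs0.le]
  gcongr
  calc ENNReal.ofReal s ≤ ((⌊s⌋₊ + 1 : ℕ) : ℝ≥0∞) := by
        rw [← ENNReal.ofReal_natCast]
        apply ENNReal.ofReal_le_ofReal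
        push_cast
        exact (Nat.lt_floor_add_one s).le
    _ = ∑ n ∈ Finset.range (⌊s⌋₊+1), (1:ℝ≥0∞) := by simp
    _ ≤ ∑' n : ℕ, if ((n:ℝ)) ≤ s then (1:ℝ≥0∞) else 0 := by
        refine le_trans (Finset.sum_le_sum ?_) (ENNReal.sum_le_tsum (Finset.range (⌊s⌋₊+1)))
        intro n hn
        have : (n:ℝ) ≤ s := (Nat.le_floor_iff hs0.le).mp (by simpa [Nat.lt_succ_iff] using hn)
        simp [this]
    _ ≤ _ := by
        have := ENNReal.tsum_comp_le_tsum_of_injective (f := fun n : ℕ => (n:ℤ)) Nat.cast_injective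
          (fun n : ℤ => if |(n:ℝ)| ≤ s then (1:ℝ≥0∞) else 0)
        simpa using this

def Kd (d : ℕ) : ℝ := 2^(4*d) * 4^d

lemma Kd_pos (d : ℕ) : 0 < Kd d := by unfold Kd; positivity

lemma peetre (s : ℝ) (hs : 0 < s) (x w : V d) :
    1 + supNorm x / s ≤ (1 + supNorm w / s) * (1 + supNorm (x - w) / s) := by
  have h := supNorm_add_le (x - w) w
  rw [sub_add_cancel] at h
  have h1 := supNorm_nonneg w
  have h2 := supNorm_nonneg (x - w)
  have : supNorm x / s ≤ supNorm (x-w) / s + supNorm w / s := by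
    rw [← add_div]; gcongr
  have : 0 ≤ supNorm w / s * (supNorm (x-w) / s) := by positivity
  nlinarith

lemma sum_weight (U : V d → ℝ≥0∞) (D a s : ℝ) (hD : 0 ≤ D) (ha : 0 ≤ a) (had : a ≤ d) (hs : 1 ≤ s)
    (hU : ∀ w, conv U (box s) w ≤ ENNReal.ofReal (D * (1 + supNorm w / s) ^ (-a))) (x : V d) :
    ∑' y, U y * ENNReal.ofReal (((1 + supNorm (x - y) / s) ^ (4*d))⁻¹) ≤
      ENNReal.ofReal (Kd d * (D * (1 + supNorm x / s) ^ (-a))) := by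
  have hs0 : 0 < s := by linarith
  set g : V d → ℝ≥0∞ := fun y => ENNReal.ofReal (((1 + supNorm y / s) ^ (4*d))⁻¹) with hg
  have step1 : ENNReal.ofReal (s^d) * ∑' y, U y * g (x - y) ≤
      ∑' w, ENNReal.ofReal (2^(4*d)) * g (x - w) * conv U (box s) w := by
    calc _ ≤ mass (box s : V d → ℝ≥0∞) * ∑' y, U y * g (x - y) := by
          gcongr; exact box_mass_ge s hs
      _ = ∑' y, ∑' w, U y * g (x - y) * box s (w - y) := by
          rw [← ENNReal.tsum_mul_left]
          refine tsum_congr fun y => ?_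
          rw [ENNReal.tsum_mul_left, mul_comm]
          congr 1
          exact ((Equiv.subRight y).tsum_eq (box s : V d → ℝ≥0∞)).symm
      _ ≤ ∑' y, ∑' w, ENNReal.ofReal (2^(4*d)) * g (x - w) * (U y * box s (w - y)) := by
          refine ENNReal.tsum_le_tsum fun y => ENNReal.tsum_le_tsum fun w => ?_
          unfold box
          split_ifs with h
          · have h1 : g (x - y) ≤ ENNReal.ofReal (2^(4*d)) * g (x - w) := by
              rw [hg]
              simp only
              rw [← ENNReal.ofReal_mul (by positivity)]
              apply ENNReal.ofReal_le_ofReal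
              rw [← div_eq_mul_inv, ← div_pow, ← inv_pow]
              have h2 := supNorm_nonneg (x - w)
              have h2' := supNorm_nonneg (x - y)
              gcongr
              rw [inv_eq_one_div, div_le_div_iff₀ (by positivity) (by positivity)]
              have h3 := supNorm_add_le (x - y) (y - w)
              rw [sub_add_sub_cancel, supNorm_sub_comm y w] at h3
              have h4 : supNorm (x - w) / s ≤ supNorm (x-y) / s + 1 := by
                rw [div_le_iff₀ hs0, add_mul, div_mul_cancel₀ _ hs0.ne']; linarith
              have : 0 ≤ supNorm (x-y) / s := by positivity
              linarith
            calc _ = U y * g (x - y) := by simp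
              _ ≤ U y * (ENNReal.ofReal (2^(4*d)) * g (x - w)) := by gcongr
              _ = _ := by ring
          · simp
      _ = _ := by
          rw [ENNReal.tsum_comm]
          refine tsum_congr fun w => ?_
          rw [ENNReal.tsum_mul_left]; rfl
  have step2 : ∀ w, g (x - w) * conv U (box s) w ≤
      ENNReal.ofReal (D * (1 + supNorm x / s) ^ (-a)) *
        ENNReal.ofReal (((1 + supNorm (x-w) / s) ^ (2*d))⁻¹) := by
    intro w
    refine le_trans (mul_le_mul' le_rfl (hU w)) ?_
    rw [hg]
    simp only
    have h1 := supNorm_nonneg (x - w)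
    have h2 := supNorm_nonneg w
    have h3 := supNorm_nonneg x
    rw [← ENNReal.ofReal_mul (by positivity), ← ENNReal.ofReal_mul (by positivity)]
    apply ENNReal.ofReal_le_ofReal
    have hp := peetre s hs0 x w
    set A := 1 + supNorm x / s
    set B := 1 + supNorm w / s
    set T := 1 + supNorm (x-w) / s
    have hA : 0 < A := by positivity
    have hB : 0 < B := by positivity
    have hT : 1 ≤ T := by
      have : 0 ≤ supNorm (x-w) / s := by positivity
      simp only [T]; linarith
    have hT0 : 0 < T := by linarith
    have e1 : B ^ (-a) ≤ A ^ (-a) * T ^ d := by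
      have : A ^ a ≤ B ^ a * T ^ a := by
        rw [← Real.mul_rpow hB.le hT0.le]; exact Real.rpow_le_rpow hA.le hp ha
      have h5 : T ^ a ≤ T ^ d := by
        rw [← Real.rpow_natCast]; exact Real.rpow_le_rpow_of_exponent_le hT had
      rw [Real.rpow_neg hB.le, Real.rpow_neg hA.le, inv_mul_eq_div, inv_eq_one_div,
        div_le_div_iff₀ (by positivity) (by positivity), one_mul]
      calc A^a ≤ B^a * T^a := this
        _ ≤ B^a * T^d := by gcongr
        _ = _ := by ring
    have e2 : (T^(4*d))⁻¹ * T^d ≤ (T^(2*d))⁻¹ := by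
      rw [inv_mul_eq_div, inv_eq_one_div, div_le_div_iff₀ (by positivity) (by positivity), one_mul,
        ← pow_add]
      exact pow_le_pow_right₀ hT (by omega)
    calc (T^(4*d))⁻¹ * (D * B^(-a)) ≤ (T^(4*d))⁻¹ * (D * (A ^ (-a) * T ^ d)) := by gcongr
      _ = D * A^(-a) * ((T^(4*d))⁻¹ * T^d) := by ring
      _ ≤ _ := by gcongr
  have hA0 : 0 ≤ D * (1 + supNorm x / s) ^ (-a) := by
    have h3 := supNorm_nonneg x
    positivity
  have step3 : ENNReal.ofReal (s^d) * ∑' y, U y * g (x - y) ≤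
      ENNReal.ofReal (s^d) * ENNReal.ofReal (Kd d * (D * (1 + supNorm x / s) ^ (-a))) := by
    refine step1.trans ?_
    calc _ ≤ ∑' w, ENNReal.ofReal (2^(4*d)) * (ENNReal.ofReal (D * (1 + supNorm x / s) ^ (-a)) *
        ENNReal.ofReal (((1 + supNorm (x-w) / s) ^ (2*d))⁻¹)) := by
          refine ENNReal.tsum_le_tsum fun w => ?_
          rw [mul_assoc]
          exact mul_le_mul' le_rfl (step2 w)
      _ = ENNReal.ofReal (2^(4*d)) * (ENNReal.ofReal (D * (1 + supNorm x / s) ^ (-a)) * 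
            ∑' w : V d, ENNReal.ofReal (((1 + supNorm w / s) ^ (2*d))⁻¹)) := by
          rw [ENNReal.tsum_mul_left, ENNReal.tsum_mul_left]
          congr 2
          exact (Equiv.subLeft x).tsum_eq (fun w : V d => ENNReal.ofReal (((1 + supNorm w / s) ^ (2*d))⁻¹))
      _ ≤ ENNReal.ofReal (2^(4*d)) * (ENNReal.ofReal (D * (1 + supNorm x / s) ^ (-a)) * 
            ENNReal.ofReal ((4*s)^d)) := by
          gcongr; exact wsum s hs
      _ = _ := by
          rw [← ENNReal.ofReal_mul hA0, ← ENNReal.ofReal_mul (by positivity), ← ENNReal.ofReal_mul (by positivity)]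
          congr 1
          unfold Kd
          rw [mul_pow]; ring
  have hne : ENNReal.ofReal (s^d) ≠ 0 := by
    have : 0 < s^d := by positivity
    simpa using this
  exact (ENNReal.mul_le_mul_iff_right hne ENNReal.ofReal_ne_top).mp step3

end S18

namespace S18
variable {d : ℕ}

def pw (q : ℕ) (x : V d) : ℝ := ∑ i, (x i : ℝ) ^ (2*q)

def mom (q : ℕ) (f : V d → ℝ≥0∞) : ℝ≥0∞ := ∑' x, ENNReal.ofReal (pw q x) * f x

lemma pw_nonneg (q : ℕ) (x : V d) : 0 ≤ pw q x :=
  Finset.sum_nonneg fun i _ => by rw [pow_mul]; positivity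

lemma pw_neg (q : ℕ) (x : V d) : pw q (-x) = pw q x := by
  unfold pw
  refine Finset.sum_congr rfl fun i _ => ?_
  simp [pow_mul]

lemma pw_one (x : V d) : pw 1 x = sqNorm x := by simp [pw, sqNorm]

lemma pw_zero (x : V d) : pw 0 x = d := by simp [pw]

lemma mom_zero (f : V d → ℝ≥0∞) : mom 0 f = d * mass f := by
  simp [mom, pw_zero, mass, ENNReal.tsum_mul_left]

lemma pow_supNorm_le (hd : 0 < d) (q : ℕ) (x : V d) : supNorm x ^ (2*q) ≤ pw q x := by
  obtain ⟨i, hi⟩ := exists_supNorm hd x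
  rw [← hi, pow_mul, sq_abs, ← pow_mul]
  exact Finset.single_le_sum (f := fun i => (x i : ℝ)^(2*q))
    (fun i _ => by rw [pow_mul]; positivity) (Finset.mem_univ i)

lemma pw_le_pow (q : ℕ) (x : V d) : pw q x ≤ d * supNorm x ^ (2*q) := by
  unfold pw
  calc _ ≤ ∑ i : Fin d, supNorm x ^ (2*q) := Finset.sum_le_sum fun i _ => by
        rw [pow_mul, ← sq_abs, ← pow_mul]
        exact pow_le_pow_left₀ (abs_nonneg _) (abs_le_supNorm x i) _
    _ = _ := by simp

lemma mom_mono {f g : V d → ℝ≥0∞} (h : ∀ x, f x ≤ g x) (q : ℕ) : mom q f ≤ mom q g :=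
  ENNReal.tsum_le_tsum fun x => mul_le_mul' le_rfl (h x)

lemma mass_mono {f g : V d → ℝ≥0∞} (h : ∀ x, f x ≤ g x) : mass f ≤ mass g :=
  ENNReal.tsum_le_tsum fun x => h x

lemma mom_add (f g : V d → ℝ≥0∞) (q : ℕ) : mom q (fun x => f x + g x) = mom q f + mom q g := by
  simp [mom, mul_add, ENNReal.tsum_add]

lemma mass_add (f g : V d → ℝ≥0∞) : mass (fun x => f x + g x) = mass f + mass g := by
  simp [mass, ENNReal.tsum_add]

lemma mom_smul (c : ℝ≥0∞) (f : V d → ℝ≥0∞) (q : ℕ) : mom q (fun x => c * f x) = c * mom q f := by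
  simp only [mom, ← ENNReal.tsum_mul_left]
  refine tsum_congr fun x => by ring

lemma mass_smul (c : ℝ≥0∞) (f : V d → ℝ≥0∞) : mass (fun x => c * f x) = c * mass f := by
  simp only [mass, ENNReal.tsum_mul_left]

lemma scal_aux (x t : ℝ) (h : t^2 ≤ x^2) (n : ℕ) :
    (0 ≤ ((x+t)^(2*(n+1)) + (x-t)^(2*(n+1)))/2 ∧
    ((x+t)^(2*(n+1)) + (x-t)^(2*(n+1)))/2 ≤ (x^2)^(n+1) + (4^(n+1)/2 - 1) * ((x^2)^n * t^2)) ∧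
    (0 ≤ x*t*(((x+t)^(2*(n+1)) - (x-t)^(2*(n+1)))/2) ∧
    x*t*(((x+t)^(2*(n+1)) - (x-t)^(2*(n+1)))/2) ≤ 4^(n+1)/2 * ((x^2)^(n+1) * t^2)) := by
  induction n with
  | zero =>
    refine ⟨⟨by norm_num; nlinarith [sq_nonneg x, sq_nonneg t], by norm_num; nlinarith⟩,
      ⟨by norm_num; nlinarith [sq_nonneg (x*t)], by norm_num; nlinarith⟩⟩
  | succ n ih =>
    obtain ⟨⟨e0, e1⟩, ⟨s0, s1⟩⟩ := ih
    set e := ((x+t)^(2*(n+1)) + (x-t)^(2*(n+1)))/2 with he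
    set s := x*t*(((x+t)^(2*(n+1)) - (x-t)^(2*(n+1)))/2) with hs
    have r1 : ((x+t)^(2*(n+1+1)) + (x-t)^(2*(n+1+1)))/2 = (x^2+t^2)*e + 2*s := by
      rw [he, hs, mul_add 2 (n+1) 1, pow_add, pow_add]; ring
    have r2 : x*t*(((x+t)^(2*(n+1+1)) - (x-t)^(2*(n+1+1)))/2) = (x^2+t^2)*s + 2*(x^2*t^2)*e := by
      rw [he, hs, mul_add 2 (n+1) 1, pow_add, pow_add]; ring
    rw [r1, r2]
    set a := x^2
    set b := t^2
    have ha : 0 ≤ a := sq_nonneg x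
    have hb : 0 ≤ b := sq_nonneg t
    set B : ℝ := 4^(n+1)/2 with hB
    have hB1 : 1 ≤ B := by
      have : (1:ℝ) ≤ 4^n := one_le_pow₀ (by norm_num)
      rw [hB, pow_succ]; linarith
    have hB2 : (4:ℝ)^(n+1+1)/2 = 4*B := by rw [hB, pow_succ]; ring
    rw [hB2]
    have hm : (B-1) * (a^n * b^2) ≤ (B-1) * (a^(n+1) * b) := by
      have : a^n*b^2 ≤ a^(n+1)*b := by
        calc a^n*b^2 = a^n*b*b := by ring
          _ ≤ a^n*b*a := by gcongr
          _ = _ := by ring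
      exact mul_le_mul_of_nonneg_left this (by linarith)
    have hm2 : B * (a^(n+1) * b^2) ≤ B * (a^(n+2) * b) := by
      have : a^(n+1)*b^2 ≤ a^(n+2)*b := by
        calc a^(n+1)*b^2 = a^(n+1)*b*b := by ring
          _ ≤ a^(n+1)*b*a := by gcongr
          _ = _ := by ring
      exact mul_le_mul_of_nonneg_left this (by linarith)
    have hm3 : (B-1) * (a^(n+1) * b^2) ≤ (B-1) * (a^(n+2) * b) := by
      have : a^(n+1)*b^2 ≤ a^(n+2)*b := by
        calc a^(n+1)*b^2 = a^(n+1)*b*b := by ring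
          _ ≤ a^(n+1)*b*a := by gcongr
          _ = _ := by ring
      exact mul_le_mul_of_nonneg_left this (by linarith)
    refine ⟨⟨by positivity, ?_⟩, ⟨by positivity, ?_⟩⟩
    · have h1 : (a+b)*e ≤ (a+b)*(a^(n+1) + (B-1)*(a^n*b)) := by gcongr
      calc (a+b)*e + 2*s ≤ (a+b)*(a^(n+1) + (B-1)*(a^n*b)) + 2*(B*(a^(n+1)*b)) := by linarith
        _ = a^(n+1+1) + (1 + (B-1) + 2*B)*(a^(n+1)*b) + (B-1)*(a^n*b^2) := by ring
        _ ≤ a^(n+1+1) + (1 + (B-1) + 2*B)*(a^(n+1)*b) + (B-1)*(a^(n+1)*b) := by linarith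
        _ = _ := by ring
    · have h1 : (a+b)*s ≤ (a+b)*(B*(a^(n+1)*b)) := by gcongr
      have h2 : 2*(a*b)*e ≤ 2*(a*b)*(a^(n+1) + (B-1)*(a^n*b)) := by gcongr
      calc _ ≤ (a+b)*(B*(a^(n+1)*b)) + 2*(a*b)*(a^(n+1) + (B-1)*(a^n*b)) := by linarith
        _ = (B+2)*(a^(n+2)*b) + B*(a^(n+1)*b^2) + 2*((B-1)*(a^(n+1)*b^2)) := by ring
        _ ≤ (B+2)*(a^(n+2)*b) + B*(a^(n+2)*b) + 2*((B-1)*(a^(n+2)*b)) := by linarith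
        _ = _ := by ring

lemma scal (x t : ℝ) (n : ℕ) :
    (x+t)^(2*(n+1)) + (x-t)^(2*(n+1)) ≤
      2 * (x^(2*(n+1)) + t^(2*(n+1)) + 4^(n+1) * (x^(2*n) * t^2 + x^2*t^(2*n))) := by
  have key : ∀ x t : ℝ, t^2 ≤ x^2 → (x+t)^(2*(n+1)) + (x-t)^(2*(n+1)) ≤
      2 * (x^(2*(n+1)) + t^(2*(n+1)) + 4^(n+1) * (x^(2*n) * t^2 + x^2*t^(2*n))) := by
    intro x t h
    have := (scal_aux x t h n).1.2
    have h1 : 0 ≤ t^(2*(n+1)) := by rw [pow_mul]; positivity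
    have h2 : 0 ≤ (4:ℝ)^(n+1) * (x^2*t^(2*n)) := by rw [pow_mul t]; positivity
    have h3 : (4^(n+1)/2 - 1) * ((x^2)^n * t^2) ≤ 4^(n+1) * (x^(2*n) * t^2) := by
      rw [pow_mul x]
      apply mul_le_mul_of_nonneg_right _ (by positivity)
      have : (0:ℝ) < 4^(n+1) := by positivity
      linarith
    rw [← pow_mul x 2 (n+1)] at this
    nlinarith
  rcases le_total (t^2) (x^2) with h | h
  · exact key x t h
  · have := key t x h
    have e : (t - x)^(2*(n+1)) = (x-t)^(2*(n+1)) := by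
      rw [pow_mul, pow_mul]; congr 1; ring
    rw [add_comm t x, e] at this
    linarith

lemma pw_scal (x t : V d) (n : ℕ) :
    pw (n+1) (x + t) + pw (n+1) (x - t) ≤
      2 * (pw (n+1) x + pw (n+1) t + 4^(n+1) * (pw n x * pw 1 t + pw 1 x * pw n t)) := by
  have hc : ∀ (a b : ℕ), ∑ i, (x i : ℝ)^(2*a) * (t i:ℝ)^(2*b) ≤ pw a x * pw b t := by
    intro a b
    unfold pw
    rw [Finset.sum_mul]
    refine Finset.sum_le_sum fun i _ => ?_
    have h1 : ∀ j, 0 ≤ (t j : ℝ)^(2*b) := fun j => by rw [pow_mul]; positivity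
    have h2 : 0 ≤ (x i : ℝ)^(2*a) := by rw [pow_mul]; positivity
    exact mul_le_mul_of_nonneg_left (Finset.single_le_sum (f := fun j => (t j : ℝ)^(2*b))
      (fun j _ => h1 j) (Finset.mem_univ i)) h2
  have h1 := hc n 1
  have h2 := hc 1 n
  calc pw (n+1) (x + t) + pw (n+1) (x - t)
      = ∑ i, (((x i:ℝ)+t i)^(2*(n+1)) + ((x i:ℝ)-t i)^(2*(n+1))) := by
        simp [pw, Finset.sum_add_distrib]
    _ ≤ ∑ i, 2 * ((x i:ℝ)^(2*(n+1)) + (t i:ℝ)^(2*(n+1)) +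
          4^(n+1) * ((x i:ℝ)^(2*n) * (t i:ℝ)^(2*1) + (x i:ℝ)^(2*1)*(t i:ℝ)^(2*n))) :=
        Finset.sum_le_sum fun i _ => scal _ _ n
    _ = 2 * (pw (n+1) x + pw (n+1) t + 4^(n+1) * (∑ i, (x i : ℝ)^(2*n) * (t i:ℝ)^(2*1)
          + ∑ i, (x i : ℝ)^(2*1) * (t i:ℝ)^(2*n))) := by
        simp only [pw, Finset.mul_sum, ← Finset.sum_add_distrib]
    _ ≤ _ := by gcongr

lemma pw_one_add (x t : V d) : pw 1 (x+t) + pw 1 (x-t) = 2 * (pw 1 x + pw 1 t) := by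
  simp only [pw, ← Finset.sum_add_distrib, Finset.mul_sum]
  refine Finset.sum_congr rfl fun i _ => ?_
  simp; ring

lemma mom_conv_double (f g : V d → ℝ≥0∞) (hg : ∀ x, g (-x) = g x) (q : ℕ) :
    2 * mom q (conv f g) =
      ∑' y, ∑' z, ENNReal.ofReal (pw q (y+z) + pw q (y-z)) * (f y * g z) := by
  have h1 : mom q (conv f g) = ∑' y, ∑' z, ENNReal.ofReal (pw q (y+z)) * (f y * g z) :=
    tsum_mul_conv _ f g
  have h2 : mom q (conv f g) = ∑' y, ∑' z, ENNReal.ofReal (pw q (y-z)) * (f y * g z) := by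
    rw [h1]
    refine tsum_congr fun y => ?_
    rw [← (Equiv.neg (V d)).tsum_eq]
    refine tsum_congr fun z => ?_
    simp [hg, sub_eq_add_neg]
  rw [two_mul]
  nth_rewrite 1 [h1]
  rw [h2, ← ENNReal.tsum_add]
  refine tsum_congr fun y => ?_
  rw [← ENNReal.tsum_add]
  refine tsum_congr fun z => ?_
  rw [ENNReal.ofReal_add (pw_nonneg _ _) (pw_nonneg _ _), add_mul]

lemma tsum_tsum_mul (a b f g : V d → ℝ≥0∞) :
    ∑' y, ∑' z, (a y * b z) * (f y * g z) = (∑' y, a y * f y) * (∑' z, b z * g z) := by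
  rw [← ENNReal.tsum_mul_right]
  refine tsum_congr fun y => ?_
  rw [← ENNReal.tsum_mul_left]
  refine tsum_congr fun z => ?_
  ring

lemma two_cancel {a b : ℝ≥0∞} (h : 2 * a ≤ 2 * b) : a ≤ b :=
  (ENNReal.mul_le_mul_iff_right (by norm_num) (by norm_num)).mp h

lemma mom_one_conv (f g : V d → ℝ≥0∞) (hg : ∀ x, g (-x) = g x) :
    mom 1 (conv f g) = mom 1 f * mass g + mass f * mom 1 g := by
  have h := mom_conv_double f g hg 1
  have e : 2 * mom 1 (conv f g) = 2 * (mom 1 f * mass g + mass f * mom 1 g) := by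
    rw [h]
    have h1 := tsum_tsum_mul (fun y => ENNReal.ofReal (pw 1 y)) (fun _ => 1) f g
    have h2 := tsum_tsum_mul (fun _ => 1) (fun y => ENNReal.ofReal (pw 1 y)) f g
    simp only [mul_one, one_mul] at h1 h2
    unfold mom mass
    rw [← h1, ← h2, ← ENNReal.tsum_add, ← ENNReal.tsum_mul_left]
    refine tsum_congr fun y => ?_
    rw [← ENNReal.tsum_add, ← ENNReal.tsum_mul_left]
    refine tsum_congr fun z => ?_
    rw [pw_one_add, ENNReal.ofReal_mul (by norm_num), ENNReal.ofReal_add (pw_nonneg _ _) (pw_nonneg _ _)]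
    simp only [ENNReal.ofReal_ofNat]; ring
  exact le_antisymm (two_cancel e.le) (two_cancel e.ge)

lemma mom_conv (f g : V d → ℝ≥0∞) (hg : ∀ x, g (-x) = g x) (n : ℕ) :
    mom (n+1) (conv f g) ≤ mom (n+1) f * mass g + mass f * mom (n+1) g +
      4^(n+1) * (mom n f * mom 1 g + mom 1 f * mom n g) := by
  apply two_cancel
  rw [mom_conv_double f g hg]
  have h1 := tsum_tsum_mul (fun y => ENNReal.ofReal (pw (n+1) y)) (fun _ => 1) f g
  have h2 := tsum_tsum_mul (fun _ => 1) (fun y => ENNReal.ofReal (pw (n+1) y)) f g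
  have h3 := tsum_tsum_mul (fun y => ENNReal.ofReal (pw n y)) (fun y => ENNReal.ofReal (pw 1 y)) f g
  have h4 := tsum_tsum_mul (fun y => ENNReal.ofReal (pw 1 y)) (fun y => ENNReal.ofReal (pw n y)) f g
  simp only [mul_one, one_mul] at h1 h2
  unfold mom mass
  rw [← h1, ← h2, ← h3, ← h4]
  simp only [← ENNReal.tsum_add, ← ENNReal.tsum_mul_left]
  refine ENNReal.tsum_le_tsum fun y => ENNReal.tsum_le_tsum fun z => ?_
  refine le_trans (mul_le_mul' (ENNReal.ofReal_le_ofReal (pw_scal y z n)) le_rfl) (le_of_eq ?_)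
  have p1 := pw_nonneg (n+1) y
  have p2 := pw_nonneg (n+1) z
  have p3 := pw_nonneg n y
  have p4 := pw_nonneg n z
  have p5 := pw_nonneg 1 y
  have p6 := pw_nonneg 1 z
  rw [ENNReal.ofReal_mul (by norm_num), ENNReal.ofReal_add (by positivity) (by positivity),
    ENNReal.ofReal_add p1 p2, ENNReal.ofReal_mul (by positivity),
    ENNReal.ofReal_add (by positivity) (by positivity), ENNReal.ofReal_mul p3, ENNReal.ofReal_mul p5,
    ENNReal.ofReal_pow (by norm_num)]
  simp only [ENNReal.ofReal_ofNat]; ring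

def Kmom (d : ℕ) (κ : ℕ → ℝ) : ℕ → ℝ
  | 0 => d
  | 1 => 1
  | q + 2 => κ (q+2) + 4^(q+2) * (Kmom d κ (q+1) + κ (q+1))

lemma Kmom_nonneg (κ : ℕ → ℝ) (hκ : ∀ q, 0 ≤ κ q) : ∀ q, 0 ≤ Kmom d κ q
  | 0 => by simp [Kmom]
  | 1 => by simp [Kmom]
  | q + 2 => by
    have := Kmom_nonneg κ hκ (q+1)
    have h1 := hκ (q+2)
    have h2 := hκ (q+1)
    simp only [Kmom]; positivity

lemma mom_delta (q : ℕ) : mom (q+1) (delta : V d → ℝ≥0∞) = 0 := by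
  unfold mom delta
  simp only [mul_ite, mul_one, mul_zero, ENNReal.tsum_eq_zero]
  intro i
  split_ifs with h
  · simp [h, pw]
  · rfl

lemma mom_cpow (κ : ℕ → ℝ) (hκ : ∀ q, 0 ≤ κ q) (P : V d → ℝ≥0∞) (hP : ∀ x, P (-x) = P x)
    (hm : mass P = 1) (r : ℝ) (hr : 0 ≤ r) (h1 : mom 1 P = ENNReal.ofReal (r^2)) (Q : ℕ)
    (hQ : ∀ q ≤ Q, mom q P ≤ ENNReal.ofReal (κ q * r^(2*q))) :
    ∀ q ≤ Q, ∀ k : ℕ, mom q (cpow P k) ≤ ENNReal.ofReal (Kmom d κ q * (k:ℝ)^q * r^(2*q)) := by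
  have hmk : ∀ k, mass (cpow P k) = 1 := fun k => by rw [mass_cpow, hm, one_pow]
  have hm1 : ∀ k : ℕ, mom 1 (cpow P k) = ENNReal.ofReal (k * r^2) := by
    intro k
    induction k with
    | zero => simp [cpow, mom_delta 0]
    | succ k ih =>
      rw [cpow, mom_one_conv _ _ (cpow_even hP k), ih, h1, hmk, hm,
        mul_one, one_mul, ← ENNReal.ofReal_add (by positivity) (by positivity)]
      congr 1; push_cast; ring
  intro q
  induction q with
  | zero => intro _ k; simp [mom_zero, hmk, Kmom]
  | succ q ih =>
    intro hq k
    cases q with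
    | zero => rw [hm1]; simp [Kmom]
    | succ q =>
      have ih' := ih (by omega)
      induction k with
      | zero => simp [cpow, mom_delta]
      | succ k ihk =>
        have hK := Kmom_nonneg (d := d) κ hκ (q+1)
        have hK2 := Kmom_nonneg (d := d) κ hκ (q+1+1)
        have k1 := hκ (q+1)
        have k2 := hκ (q+2)
        rw [cpow]
        refine (mom_conv P (cpow P k) (cpow_even hP k) (q+1)).trans ?_
        rw [hmk, hm, h1, hm1, mul_one, one_mul]
        have hA := hQ (q+1) (by omega)
        have hB := hQ (q+1+1) (by omega)
        have hC := ih' k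
        calc _ ≤ ENNReal.ofReal (κ (q+1+1) * r^(2*(q+1+1))) +
              ENNReal.ofReal (Kmom d κ (q+1+1) * (k:ℝ)^(q+1+1) * r^(2*(q+1+1))) +
              4^(q+1+1) * (ENNReal.ofReal (κ (q+1) * r^(2*(q+1))) * ENNReal.ofReal (k*r^2) +
                ENNReal.ofReal (r^2) * ENNReal.ofReal (Kmom d κ (q+1) * (k:ℝ)^(q+1) * r^(2*(q+1)))) := by
              gcongr
          _ = ENNReal.ofReal (κ (q+1+1) * r^(2*(q+1+1)) +
              Kmom d κ (q+1+1) * (k:ℝ)^(q+1+1) * r^(2*(q+1+1)) +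
              4^(q+1+1) * ((κ (q+1) * r^(2*(q+1))) * (k*r^2) +
                (r^2) * (Kmom d κ (q+1) * (k:ℝ)^(q+1) * r^(2*(q+1))))) := by
              rw [← ENNReal.ofReal_mul (by positivity), ← ENNReal.ofReal_mul (by positivity),
                ← ENNReal.ofReal_add (by positivity) (by positivity),
                ← ENNReal.ofReal_add (by positivity) (by positivity)]
              have : (4:ℝ≥0∞)^(q+1+1) = ENNReal.ofReal (4^(q+1+1)) := by
                rw [ENNReal.ofReal_pow (by norm_num)]; simp
              rw [this, ← ENNReal.ofReal_mul (by positivity),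
                ← ENNReal.ofReal_add (by positivity) (by positivity)]
          _ ≤ _ := by
              apply ENNReal.ofReal_le_ofReal
              have e : r^(2*(q+1)) * r^2 = r^(2*(q+1+1)) := by rw [← pow_add]; congr 1
              have hk0 : (0:ℝ) ≤ k := by positivity
              have c1 : (k:ℝ)^(q+1+1) + (k+1)^(q+1) ≤ (k+1)^(q+1+1) := by
                have : (k:ℝ)^(q+1) ≤ (k+1)^(q+1) := by gcongr; linarith
                rw [pow_succ, pow_succ _ (q+1)]
                nlinarith
              have c2 : (1:ℝ) ≤ (k+1)^(q+1) := one_le_pow₀ (by linarith)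
              have c3 : (k:ℝ)^(q+1) ≤ (k+1)^(q+1) := by gcongr; linarith
              have c4 : (k:ℝ) ≤ (k+1)^(q+1) := by
                have : (k:ℝ)+1 ≤ (k+1)^(q+1) := le_self_pow₀ (by linarith) (by omega)
                linarith
              push_cast
              set S := ((k:ℝ)+1)^(q+1)
              calc _ = (κ (q+1+1) + Kmom d κ (q+1+1) * (k:ℝ)^(q+1+1) +
                    4^(q+1+1) * (κ (q+1) * k + Kmom d κ (q+1) * (k:ℝ)^(q+1))) * r^(2*(q+1+1)) := by
                    rw [← e]; ring
                _ ≤ (κ (q+1+1) * S + Kmom d κ (q+1+1) * (k:ℝ)^(q+1+1) +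
                    4^(q+1+1) * (κ (q+1) * S + Kmom d κ (q+1) * S)) * r^(2*(q+1+1)) := by
                    gcongr
                    nlinarith
                _ = (Kmom d κ (q+1+1) * ((k:ℝ)^(q+1+1) + S)) * r^(2*(q+1+1)) := by
                    have : Kmom d κ (q+1+1) = κ (q+2) + 4^(q+2) * (Kmom d κ (q+1) + κ (q+1)) := rfl
                    rw [this]; ring
                _ ≤ _ := by gcongr

end S18

namespace S18
variable {d : ℕ}

def dot (θ : Fin d → ℝ) (x : V d) : ℝ := ∑ i, θ i * x i

lemma dot_add (θ : Fin d → ℝ) (x y : V d) : dot θ (x + y) = dot θ x + dot θ y := by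
  simp [dot, mul_add, Finset.sum_add_distrib]

lemma dot_neg (θ : Fin d → ℝ) (x : V d) : dot θ (-x) = - dot θ x := by
  simp [dot]

lemma dot_sub_left (θ η : Fin d → ℝ) (x : V d) : dot (θ - η) x = dot θ x - dot η x := by
  simp [dot, sub_mul, Finset.sum_sub_distrib]

def ee (θ : Fin d → ℝ) (x : V d) : ℂ := Complex.exp (dot θ x * Complex.I)

lemma norm_ee (θ : Fin d → ℝ) (x : V d) : ‖ee θ x‖ = 1 := Complex.norm_exp_ofReal_mul_I _

lemma ee_add (θ : Fin d → ℝ) (x y : V d) : ee θ (x + y) = ee θ x * ee θ y := by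
  unfold ee
  rw [dot_add, ← Complex.exp_add]; push_cast; ring_nf

def phi (f : V d → ℝ≥0∞) (θ : Fin d → ℝ) : ℂ := ∑' x, ((f x).toReal : ℂ) * ee θ x

lemma summable_toReal {f : V d → ℝ≥0∞} (hf : mass f ≠ ⊤) : Summable fun x => (f x).toReal :=
  ENNReal.summable_toReal hf

lemma ne_top_of_mass {f : V d → ℝ≥0∞} (hf : mass f ≠ ⊤) (x : V d) : f x ≠ ⊤ :=
  ENNReal.ne_top_of_tsum_ne_top hf x

lemma summable_phi {f : V d → ℝ≥0∞} (hf : mass f ≠ ⊤) (θ : Fin d → ℝ) :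
    Summable fun x => ‖((f x).toReal : ℂ) * ee θ x‖ := by
  simpa [norm_ee] using summable_toReal hf

lemma phi_conv {f g : V d → ℝ≥0∞} (hf : mass f ≠ ⊤) (hg : mass g ≠ ⊤) (θ : Fin d → ℝ) :
    phi (conv f g) θ = phi f θ * phi g θ := by
  unfold phi
  have hs := summable_mul_of_summable_norm (summable_phi hf θ) (summable_phi hg θ)
  rw [tsum_mul_tsum_of_summable_norm (summable_phi hf θ) (summable_phi hg θ)]
  let E : V d × V d ≃ V d × V d :=
    { toFun := fun p => (p.2, p.1 - p.2)
      invFun := fun p => (p.1 + p.2, p.1)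
      left_inv := fun p => by ext <;> simp
      right_inv := fun p => by ext <;> simp }
  have hs2 : Summable fun c => ((f (E c).1).toReal : ℂ) * ee θ (E c).1 *
      (((g (E c).2).toReal : ℂ) * ee θ (E c).2) := (E.summable_iff).mpr hs
  rw [← E.tsum_eq, hs2.tsum_prod]
  refine tsum_congr fun x => ?_
  unfold conv
  rw [ENNReal.tsum_toReal_eq (fun y => ENNReal.mul_ne_top (ne_top_of_mass hf _) (ne_top_of_mass hg _)),
    Complex.ofReal_tsum, ← tsum_mul_right]
  refine tsum_congr fun y => ?_
  have : ee θ x = ee θ y * ee θ (x - y) := by rw [← ee_add]; congr 1; abel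
  simp only [E, Equiv.coe_fn_mk, ENNReal.toReal_mul, this]
  push_cast; ring

lemma phi_delta (θ : Fin d → ℝ) : phi delta θ = 1 := by
  unfold phi
  rw [tsum_eq_single 0]
  · simp [delta, ee, dot]
  · intro b hb; simp [delta, hb]

lemma phi_cpow {f : V d → ℝ≥0∞} (hf : mass f ≠ ⊤) (θ : Fin d → ℝ) (k : ℕ) :
    phi (cpow f k) θ = phi f θ ^ k := by
  induction k with
  | zero => simp [cpow, phi_delta]
  | succ k ih =>
    rw [cpow, phi_conv hf (by rw [mass_cpow]; exact ENNReal.pow_ne_top hf), ih, pow_succ']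

lemma phi_real {f : V d → ℝ≥0∞} (hf : mass f ≠ ⊤) (he : ∀ x, f (-x) = f x) (θ : Fin d → ℝ) :
    phi f θ = ((∑' x, (f x).toReal * Real.cos (dot θ x) : ℝ) : ℂ) := by
  have hs : Summable fun x => ((f x).toReal : ℂ) * ee θ x := (summable_phi hf θ).of_norm
  have h2 : phi f θ = ∑' x, ((f x).toReal : ℂ) * ee θ (-x) := by
    unfold phi
    rw [← (Equiv.neg (V d)).tsum_eq]
    refine tsum_congr fun x => ?_
    simp [he]
  have hs2 : Summable fun x => ((f x).toReal : ℂ) * ee θ (-x) := by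
    have := (Equiv.neg (V d)).summable_iff.mpr hs
    refine this.congr fun x => ?_
    simp [he]
  have h3 : phi f θ + phi f θ = ∑' x, (((f x).toReal : ℂ) * ee θ x + ((f x).toReal : ℂ) * ee θ (-x)) := by
    nth_rewrite 2 [h2]
    exact (hs.tsum_add hs2).symm
  have h4 : phi f θ + phi f θ = 2 * ((∑' x, (f x).toReal * Real.cos (dot θ x) : ℝ) : ℂ) := by
    rw [h3, Complex.ofReal_tsum, ← tsum_mul_left]
    refine tsum_congr fun x => ?_
    unfold ee
    rw [dot_neg]
    push_cast
    rw [Complex.cos]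
    ring_nf
  have : (2:ℂ) * phi f θ = 2 * ((∑' x, (f x).toReal * Real.cos (dot θ x) : ℝ) : ℂ) := by
    rw [← h4]; ring
  exact mul_left_cancel₀ two_ne_zero this

lemma conc {ι : Type*} [Fintype ι] (θ : ι → Fin d → ℝ) {f : V d → ℝ≥0∞} (hf : mass f ≠ ⊤) (z : V d) :
    ∑' y, (f y).toReal * ‖∑ j, ee (θ j) (z - y)‖^2 ≤ ∑ j, ∑ l, ‖phi f (θ l - θ j)‖ := by
  have key : ((∑' y, (f y).toReal * ‖∑ j, ee (θ j) (z - y)‖^2 : ℝ) : ℂ) =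
      ∑ j, ∑ l, ee (θ j - θ l) z * phi f (θ l - θ j) := by
    have h1 : ∀ y, ((f y).toReal : ℂ) * ((‖∑ j, ee (θ j) (z - y)‖^2 : ℝ) : ℂ) =
        ∑ j, ∑ l, ee (θ j - θ l) z * (((f y).toReal : ℂ) * ee (θ l - θ j) y) := by
      intro y
      have : ((‖∑ j, ee (θ j) (z - y)‖^2 : ℝ) : ℂ) =
          (∑ j, ee (θ j) (z - y)) * (starRingEnd ℂ) (∑ j, ee (θ j) (z - y)) := by
        rw [Complex.mul_conj, Complex.normSq_eq_norm_sq]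
      rw [this, map_sum, Finset.sum_mul_sum, Finset.mul_sum]
      refine Finset.sum_congr rfl fun j _ => ?_
      rw [Finset.mul_sum]
      refine Finset.sum_congr rfl fun l _ => ?_
      have : ee (θ j) (z - y) * (starRingEnd ℂ) (ee (θ l) (z - y)) =
          ee (θ j - θ l) z * ee (θ l - θ j) y := by
        unfold ee
        rw [← Complex.exp_conj, ← Complex.exp_add, ← Complex.exp_add]
        congr 1
        simp only [map_mul, Complex.conj_ofReal, Complex.conj_I, dot_sub_left, sub_eq_add_neg z y,
          dot_add, dot_neg]
        push_cast; ring
      rw [this]; ring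
    rw [Complex.ofReal_tsum]
    simp only [Complex.ofReal_mul]
    simp_rw [h1]
    have hs : ∀ j l, Summable fun y => ee (θ j - θ l) z * (((f y).toReal : ℂ) * ee (θ l - θ j) y) :=
      fun j l => (summable_phi hf _).of_norm.mul_left _
    rw [Summable.tsum_finsetSum (fun j _ => summable_sum fun l _ => hs j l)]
    refine Finset.sum_congr rfl fun j _ => ?_
    rw [Summable.tsum_finsetSum (fun l _ => hs j l)]
    refine Finset.sum_congr rfl fun l _ => ?_
    rw [tsum_mul_left]; rfl
  have h0 : 0 ≤ ∑' y, (f y).toReal * ‖∑ j, ee (θ j) (z - y)‖^2 :=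
    tsum_nonneg fun y => by positivity
  calc _ = ‖((∑' y, (f y).toReal * ‖∑ j, ee (θ j) (z - y)‖^2 : ℝ) : ℂ)‖ := by
        rw [Complex.norm_real, Real.norm_of_nonneg h0]
    _ ≤ ∑ j, ∑ l, ‖ee (θ j - θ l) z * phi f (θ l - θ j)‖ := by
        rw [key]
        refine (norm_sum_le _ _).trans (Finset.sum_le_sum fun j _ => norm_sum_le _ _)
    _ = _ := by simp [norm_ee]

lemma cos_upper (u : ℝ) : Real.cos u ≤ 1 - u^2/2 + u^4/2 := by
  rcases le_total |u| 1 with h | h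
  · have := abs_le.mp (Real.cos_bound h)
    have h2 : |u|^4 = u^4 := by rw [← abs_pow]; exact abs_of_nonneg (by positivity)
    rw [h2] at this
    have : 0 ≤ u^4 := by positivity
    linarith
  · have h1 : 1 ≤ u^2 := by rw [← sq_abs]; exact one_le_pow₀ h
    have := Real.cos_le_one u
    nlinarith

/-- real second moment -/
lemma mom_real {f : V d → ℝ≥0∞} (hf : ∀ x, f x ≠ ⊤) (q : ℕ) :
    (mom q f).toReal = ∑' x, pw q x * (f x).toReal := by
  unfold mom
  rw [ENNReal.tsum_toReal_eq (fun x => ENNReal.mul_ne_top ENNReal.ofReal_ne_top (hf x))]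
  refine tsum_congr fun x => ?_
  rw [ENNReal.toReal_mul, ENNReal.toReal_ofReal (pw_nonneg _ _)]

lemma summable_mom {f : V d → ℝ≥0∞} (q : ℕ) (hq : mom q f ≠ ⊤) :
    Summable fun x => pw q x * (f x).toReal := by
  have := ENNReal.summable_toReal hq
  refine this.congr fun x => ?_
  rw [ENNReal.toReal_mul, ENNReal.toReal_ofReal (pw_nonneg _ _)]

lemma dot_sq_le (θ : Fin d → ℝ) (x : V d) : (dot θ x)^2 ≤ (∑ i, θ i ^2) * pw 1 x := by
  unfold dot pw
  have := Finset.sum_mul_sq_le_sq_mul_sq Finset.univ θ (fun i => (x i : ℝ))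
  simpa using this

lemma dot_four_le (θ : Fin d → ℝ) (x : V d) : (dot θ x)^4 ≤ (∑ i, θ i ^2)^2 * (d * pw 2 x) := by
  have h1 := dot_sq_le θ x
  have h2 : (pw 1 x)^2 ≤ d * pw 2 x := by
    unfold pw
    have := sq_sum_le_card_mul_sum_sq (s := Finset.univ) (f := fun i : Fin d => (x i : ℝ)^(2*1))
    simp only [Finset.card_univ, Fintype.card_fin, ← pow_mul] at this
    exact this
  calc (dot θ x)^4 = ((dot θ x)^2)^2 := by ring
    _ ≤ ((∑ i, θ i ^2) * pw 1 x)^2 := by gcongr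
    _ = (∑ i, θ i ^2)^2 * (pw 1 x)^2 := by ring
    _ ≤ _ := by gcongr

lemma var_dot (hd : 0 < d) {f : V d → ℝ≥0∞} (hs : IsSymmFun f) (h1 : mom 1 f ≠ ⊤) (hf : mass f ≠ ⊤)
    (θ : Fin d → ℝ) :
    ∑' x, (f x).toReal * (dot θ x)^2 = (∑ i, θ i^2) * ((mom 1 f).toReal / d) := by
  have hsum := summable_mom 1 h1
  have hc : ∀ i j : Fin d, Summable fun x : V d => (f x).toReal * ((x i : ℝ) * x j) := by
    intro i j
    refine Summable.of_norm_bounded hsum fun x => ?_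
    rw [norm_mul, Real.norm_of_nonneg ENNReal.toReal_nonneg, mul_comm]
    gcongr
    rw [Real.norm_eq_abs, abs_mul]
    have a1 : (x i : ℝ)^2 ≤ pw 1 x := by
      unfold pw
      exact Finset.single_le_sum (f := fun i => (x i : ℝ)^2) (fun i _ => sq_nonneg _) (Finset.mem_univ i)
    have a2 : (x j : ℝ)^2 ≤ pw 1 x := by
      unfold pw
      exact Finset.single_le_sum (f := fun i => (x i : ℝ)^2) (fun i _ => sq_nonneg _) (Finset.mem_univ j)
    nlinarith [sq_nonneg (|(x i:ℝ)| - |(x j:ℝ)|), sq_abs (x i : ℝ), sq_abs (x j : ℝ)]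
  have hzero : ∀ i j : Fin d, i ≠ j → ∑' x : V d, (f x).toReal * ((x i : ℝ) * x j) = 0 := by
    intro i j hij
    have e := (symEquiv (Equiv.refl (Fin d)) (fun l => decide (l = i))).tsum_eq
      (fun x : V d => (f x).toReal * ((x i : ℝ) * x j))
    have e2 : ∀ x : V d, (f (symEquiv (Equiv.refl (Fin d)) (fun l => decide (l = i)) x)).toReal *
      (((symEquiv (Equiv.refl (Fin d)) (fun l => decide (l = i)) x) i : ℝ) *
        ((symEquiv (Equiv.refl (Fin d)) (fun l => decide (l = i)) x) j : ℝ)) =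
        - ((f x).toReal * ((x i : ℝ) * x j)) := by
      intro x
      have : f (symEquiv (Equiv.refl (Fin d)) (fun l => decide (l = i)) x) = f x := hs _ _ x
      rw [this]
      simp [symEquiv, hij.symm]
    simp_rw [e2] at e
    rw [tsum_neg] at e
    linarith
  have hswap : ∀ i j : Fin d, ∑' x : V d, (f x).toReal * ((x i : ℝ) * x i) =
      ∑' x : V d, (f x).toReal * ((x j : ℝ) * x j) := by
    intro i j
    have e := (symEquiv (Equiv.swap i j) (fun _ => false)).tsum_eq
      (fun x : V d => (f x).toReal * ((x i : ℝ) * x i))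
    rw [← e]
    refine tsum_congr fun x => ?_
    have : f (symEquiv (Equiv.swap i j) (fun _ => false) x) = f x := hs _ _ x
    rw [this]
    simp [symEquiv]
  have hdiag : ∀ i : Fin d, ∑' x : V d, (f x).toReal * ((x i : ℝ) * x i) = (mom 1 f).toReal / d := by
    intro i
    have hd' : (d:ℝ) ≠ 0 := by positivity
    rw [eq_div_iff hd', mom_real (ne_top_of_mass hf)]
    have : ∀ x : V d, pw 1 x * (f x).toReal = ∑ j, (f x).toReal * ((x j : ℝ) * x j) := by
      intro x
      unfold pw; rw [Finset.sum_mul]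
      refine Finset.sum_congr rfl fun j _ => by ring
    simp_rw [this]
    rw [Summable.tsum_finsetSum (fun j _ => hc j j), Finset.sum_congr rfl (fun j _ => hswap j i)]
    simp; ring
  have hexp : ∀ x : V d, (f x).toReal * (dot θ x)^2 =
      ∑ i, ∑ j, θ i * θ j * ((f x).toReal * ((x i : ℝ) * x j)) := by
    intro x
    unfold dot
    rw [sq, Finset.sum_mul_sum, Finset.mul_sum]
    refine Finset.sum_congr rfl fun i _ => ?_
    rw [Finset.mul_sum]
    refine Finset.sum_congr rfl fun j _ => by ring
  simp_rw [hexp]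
  rw [Summable.tsum_finsetSum (fun i _ => summable_sum fun j _ => (hc i j).mul_left _), Finset.sum_mul]
  refine Finset.sum_congr rfl fun i _ => ?_
  rw [Summable.tsum_finsetSum (fun j _ => (hc i j).mul_left _)]
  rw [Finset.sum_eq_single i]
  · rw [tsum_mul_left, hdiag]; ring
  · intro j _ hj
    rw [tsum_mul_left, hzero i j hj.symm, mul_zero]
  · simp

lemma phi_bound (hd : 0 < d) {f : V d → ℝ≥0∞} (hs : IsSymmFun f) (hf : mass f = 1)
    (r κ : ℝ) (hr : 0 < r) (hκ : 1 ≤ κ) (h1 : mom 1 f = ENNReal.ofReal (r^2))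
    (h2 : mom 2 f ≤ ENNReal.ofReal (κ * r^4)) (θ : Fin d → ℝ)
    (hθ : (∑ i, θ i^2) * r^2 ≤ 1/(2*d^2*κ)) :
    ‖phi f θ‖ ≤ Real.exp (-((∑ i, θ i^2) * r^2 / (4*d))) := by
  have hft : mass f ≠ ⊤ := by rw [hf]; simp
  have h1t : mom 1 f ≠ ⊤ := by rw [h1]; simp
  have h2t : mom 2 f ≠ ⊤ := ne_top_of_le_ne_top ENNReal.ofReal_ne_top h2
  rw [phi_real hft (IsSymmFun.even hs), Complex.norm_real]
  set T := ∑ i, θ i^2 with hT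
  have hT0 : 0 ≤ T := Finset.sum_nonneg fun i _ => sq_nonneg _
  have hv := var_dot hd hs h1t hft θ
  rw [h1, ENNReal.toReal_ofReal (by positivity)] at hv
  have hd1 : (1:ℝ) ≤ d := by exact_mod_cast hd
  have s0 := summable_toReal hft
  have m0 : ∑' x, (f x).toReal = 1 := by
    rw [← ENNReal.tsum_toReal_eq (ne_top_of_mass hft)]; change (mass f).toReal = 1; simp [hf]
  have s1 := summable_mom 1 h1t
  have s2 := summable_mom 2 h2t
  have sc : Summable fun x => (f x).toReal * Real.cos (dot θ x) := by
    refine Summable.of_norm_bounded s0 fun x => ?_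
    rw [norm_mul, Real.norm_of_nonneg ENNReal.toReal_nonneg]
    have := Real.abs_cos_le_one (dot θ x)
    have h : 0 ≤ (f x).toReal := ENNReal.toReal_nonneg
    rw [Real.norm_eq_abs]; nlinarith
  have sd : Summable fun x => (f x).toReal * (dot θ x)^2 := by
    refine Summable.of_norm_bounded (s1.mul_left T) fun x => ?_
    have h : 0 ≤ (f x).toReal := ENNReal.toReal_nonneg
    rw [Real.norm_of_nonneg (by positivity)]
    have := dot_sq_le θ x
    nlinarith
  have sq : Summable fun x => (f x).toReal * (dot θ x)^4 := by
    refine Summable.of_norm_bounded (s2.mul_left (T^2*d)) fun x => ?_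
    have h : 0 ≤ (f x).toReal := ENNReal.toReal_nonneg
    rw [Real.norm_of_nonneg (by positivity)]
    have := dot_four_le θ x
    nlinarith
  have q4 : ∑' x, (f x).toReal * (dot θ x)^4 ≤ T^2*d*(κ*r^4) := by
    have hh : (mom 2 f).toReal ≤ κ*r^4 := ENNReal.toReal_le_of_le_ofReal (by positivity) h2
    calc _ ≤ ∑' x, T^2*d*(pw 2 x * (f x).toReal) := by
          refine Summable.tsum_le_tsum (fun x => ?_) sq (s2.mul_left _)
          have h : 0 ≤ (f x).toReal := ENNReal.toReal_nonneg
          have := dot_four_le θ x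
          nlinarith
      _ = T^2*d*(mom 2 f).toReal := by rw [tsum_mul_left, mom_real (ne_top_of_mass hft)]
      _ ≤ _ := by gcongr
  have lower : 1 - T*(r^2/d)/2 ≤ ∑' x, (f x).toReal * Real.cos (dot θ x) := by
    rw [← hv, ← m0]
    have : (∑' x, (f x).toReal) - (∑' x, (f x).toReal * (dot θ x)^2)/2 =
        ∑' x, ((f x).toReal - (f x).toReal * (dot θ x)^2 / 2) := by
      rw [s0.tsum_sub (sd.div_const 2), tsum_div_const]
    rw [this]
    refine Summable.tsum_le_tsum (fun x => ?_) (s0.sub (sd.div_const 2)) sc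
    have h : 0 ≤ (f x).toReal := ENNReal.toReal_nonneg
    have := Real.one_sub_sq_div_two_le_cos (x := dot θ x)
    nlinarith
  have upper : ∑' x, (f x).toReal * Real.cos (dot θ x) ≤
      1 - T*(r^2/d)/2 + (∑' x, (f x).toReal * (dot θ x)^4)/2 := by
    rw [← hv, ← m0]
    have : (∑' x, (f x).toReal) - (∑' x, (f x).toReal * (dot θ x)^2)/2 +
        (∑' x, (f x).toReal * (dot θ x)^4)/2 =
        ∑' x, ((f x).toReal - (f x).toReal * (dot θ x)^2 / 2 + (f x).toReal * (dot θ x)^4 / 2) := by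
      rw [(s0.sub (sd.div_const 2)).tsum_add (sq.div_const 2), s0.tsum_sub (sd.div_const 2),
        tsum_div_const, tsum_div_const]
    rw [this]
    refine Summable.tsum_le_tsum (fun x => ?_) sc ((s0.sub (sd.div_const 2)).add (sq.div_const 2))
    have h : 0 ≤ (f x).toReal := ENNReal.toReal_nonneg
    have := cos_upper (dot θ x)
    nlinarith
  set S := T*r^2 with hS
  have hS0 : 0 ≤ S := by positivity
  have hSk : S * (d^2*κ) ≤ 1/2 := by
    rw [le_div_iff₀ (by positivity)] at hθ; linarith
  have hd2 : (1:ℝ) ≤ d^2 := one_le_pow₀ hd1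
  have hS1 : S ≤ 1 := by
    have : S * 1 ≤ S * (d^2*κ) := by
      apply mul_le_mul_of_nonneg_left _ hS0; nlinarith
    linarith
  have e1 : T*(r^2/d)/2 = S/(2*d) := by rw [hS]; field_simp
  rw [e1] at lower upper
  have e3 : S/(2*d) ≤ 1 := by rw [div_le_one (by positivity)]; linarith
  rw [Real.norm_of_nonneg (by linarith)]
  have e4 : T^2*d*(κ*r^4)/2 ≤ S/(4*d) := by
    rw [le_div_iff₀ (by positivity)]
    calc T^2*d*(κ*r^4)/2*(4*d) = 2*S*(S*(d^2*κ)) := by rw [hS]; ring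
      _ ≤ 2*S*(1/2) := by gcongr
      _ = S := by ring
  have e5 : S/(2*d) = 2*(S/(4*d)) := by field_simp; ring
  have := Real.add_one_le_exp (-(S/(4*d)))
  linarith

end S18

namespace S18
variable {d : ℕ}

lemma row_bound (s : ℝ) (hs : 1 ≤ s) (m : ℕ) (a : Fin m) :
    ∑ b : Fin m, Real.exp (-(((a:ℝ) - (b:ℝ))^2 / s^2)) ≤ 8 * s := by
  have hs0 : 0 < s := by linarith
  have h1 : ∀ u : ℝ, Real.exp (-(u^2/s^2)) ≤ 2 * ((1 + |u|/s)^2)⁻¹ := by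
    intro u
    rw [Real.exp_neg]
    have e1 : 1 + u^2/s^2 ≤ Real.exp (u^2/s^2) := by
      have := Real.add_one_le_exp (u^2/s^2); linarith
    have e2 : (1 + |u|/s)^2 ≤ 2 * (1 + u^2/s^2) := by
      have : u^2/s^2 = (|u|/s)^2 := by rw [div_pow, sq_abs]
      rw [this]; nlinarith [sq_nonneg (1 - |u|/s)]
    have e3 : 0 < (1 + |u|/s)^2 := by positivity
    rw [← div_eq_mul_inv, inv_eq_one_div, div_le_div_iff₀ (by positivity) e3]
    linarith
  have h2 : ENNReal.ofReal (∑ b : Fin m, ((1 + |(a:ℝ) - (b:ℝ)|/s)^2)⁻¹) ≤ ENNReal.ofReal (4*s) := by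
    refine le_trans ?_ (tsum_int_weight s hs)
    rw [ENNReal.ofReal_sum_of_nonneg (fun i _ => by positivity), ← tsum_fintype (L := .unconditional _)]
    have := ENNReal.tsum_comp_le_tsum_of_injective (f := fun b : Fin m => ((a:ℤ) - (b:ℤ)))
      (fun b c h => by
        have : (b:ℤ) = c := by simpa using h
        exact Fin.ext (by exact_mod_cast this))
      (fun n : ℤ => ENNReal.ofReal (((1 + |(n:ℝ)| / s) ^ 2)⁻¹))
    simpa using this
  have h3 := (ENNReal.ofReal_le_ofReal_iff (by positivity)).mp h2
  calc _ ≤ ∑ b : Fin m, 2 * ((1 + |(a:ℝ) - (b:ℝ)|/s)^2)⁻¹ := Finset.sum_le_sum fun b _ => h1 _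
    _ = 2 * ∑ b : Fin m, ((1 + |(a:ℝ) - (b:ℝ)|/s)^2)⁻¹ := by rw [Finset.mul_sum]
    _ ≤ _ := by linarith

lemma double_sum_bound (s : ℝ) (hs : 1 ≤ s) (m : ℕ) :
    ∑ j : Fin d → Fin m, ∑ l : Fin d → Fin m,
      Real.exp (-((∑ i, (((l i : ℕ):ℝ) - ((j i:ℕ):ℝ))^2) / s^2)) ≤ (m:ℝ)^d * (8*s)^d := by
  calc _ ≤ ∑ j : Fin d → Fin m, (8*s)^d := by
        refine Finset.sum_le_sum fun j _ => ?_
        have : ∀ l : Fin d → Fin m, Real.exp (-((∑ i, (((l i : ℕ):ℝ) - ((j i:ℕ):ℝ))^2) / s^2)) =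
            ∏ i, Real.exp (-((((j i : ℕ):ℝ) - ((l i:ℕ):ℝ))^2 / s^2)) := by
          intro l
          rw [← Real.exp_sum]
          congr 1
          rw [Finset.sum_neg_distrib, Finset.sum_div]
          congr 1
          refine Finset.sum_congr rfl fun i _ => ?_
          congr 1; ring
        simp_rw [this]
        have h := Finset.prod_univ_sum (fun _ : Fin d => (Finset.univ : Finset (Fin m)))
          (fun i b => Real.exp (-((((j i : ℕ):ℝ) - ((b:ℕ):ℝ))^2 / s^2)))
        rw [Fintype.piFinset_univ] at h
        rw [← h]
        calc _ ≤ ∏ i : Fin d, (8*s) := Finset.prod_le_prod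
              (fun i _ => Finset.sum_nonneg fun b _ => (Real.exp_pos _).le)
              (fun i _ => row_bound s hs m (j i))
          _ = _ := by simp
    _ = _ := by simp

lemma AC_aux (hd : 0 < d) (κ : ℝ) (hκ : 1 ≤ κ) (f : V d → ℝ≥0∞) (r : ℝ) (hs : IsSymmFun f)
    (hf : mass f = 1) (hr : 0 < r) (h1 : mom 1 f = ENNReal.ofReal (r^2))
    (h2 : mom 2 f ≤ ENNReal.ofReal (κ * r^4)) (m k : ℕ) (hm : 0 < m) (hmk : m^2 ≤ k) (z : V d) :
    conv (cpow f k) (box r) z ≤ ENNReal.ofReal (4 * (8 * (4*d^3*κ) / m)^d) := by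
  have hd1 : (1:ℝ) ≤ d := by exact_mod_cast hd
  have hft : mass f ≠ ⊤ := by rw [hf]; simp
  have hfk : mass (cpow f k) = 1 := by rw [mass_cpow, hf, one_pow]
  have hfkt : mass (cpow f k) ≠ ⊤ := by rw [hfk]; simp
  have hm0 : (0:ℝ) < m := by exact_mod_cast hm
  set c : ℝ := 1/(2*d^2*κ) with hc
  have hc0 : 0 < c := by positivity
  set s : ℝ := 4*d^3*κ with hsdef
  have hsc : s = 2*d/c := by rw [hc, hsdef]; field_simp; ring
  have hs1 : 1 ≤ s := by
    have : (1:ℝ) ≤ d^3 := one_le_pow₀ hd1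
    rw [hsdef]; nlinarith
  have hd2 : (1:ℝ) ≤ d^2 := one_le_pow₀ hd1
  have hcd : d * c ≤ 1 := by
    rw [hc, mul_one_div, div_le_one (by positivity)]; nlinarith
  have hc2 : d * c^2 ≤ c := by nlinarith
  let θ : (Fin d → Fin m) → Fin d → ℝ := fun j i => c / (r*m) * (j i : ℕ)
  have hT : ∀ j l : Fin d → Fin m, (∑ i, ((θ l - θ j) i)^2) * r^2 =
      c^2/m^2 * ∑ i, (((l i : ℕ):ℝ) - ((j i:ℕ):ℝ))^2 := by
    intro j l
    rw [Finset.sum_mul, Finset.mul_sum]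
    refine Finset.sum_congr rfl fun i _ => ?_
    simp only [θ, Pi.sub_apply]
    field_simp
  have hphi : ∀ j l : Fin d → Fin m, ‖phi (cpow f k) (θ l - θ j)‖ ≤
      Real.exp (-((∑ i, (((l i : ℕ):ℝ) - ((j i:ℕ):ℝ))^2) / s^2)) := by
    intro j l
    set S := ∑ i, (((l i : ℕ):ℝ) - ((j i:ℕ):ℝ))^2 with hS
    have hS0 : 0 ≤ S := Finset.sum_nonneg fun i _ => sq_nonneg _
    have hSm : S ≤ d * m^2 := by
      calc S ≤ ∑ i : Fin d, (m:ℝ)^2 := by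
            refine Finset.sum_le_sum fun i _ => ?_
            have a1 : ((l i : ℕ):ℝ) ≤ m := by exact_mod_cast (l i).2.le
            have a2 : ((j i : ℕ):ℝ) ≤ m := by exact_mod_cast (j i).2.le
            have a3 : (0:ℝ) ≤ ((l i : ℕ):ℝ) := by positivity
            have a4 : (0:ℝ) ≤ ((j i : ℕ):ℝ) := by positivity
            exact sq_le_sq' (by linarith) (by linarith)
        _ = _ := by simp
    rw [phi_cpow hft, norm_pow]
    have hb := phi_bound hd hs hf r κ hr hκ h1 h2 (θ l - θ j) (by
      rw [hT]
      calc c^2/m^2*S ≤ c^2/m^2*(d*m^2) := by gcongr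
        _ = d*c^2 := by field_simp
        _ ≤ _ := hc2)
    rw [hT] at hb
    calc _ ≤ (Real.exp (-(c^2/m^2*S/(4*d))))^k := by gcongr
      _ = Real.exp (-(k*(c^2/m^2*S/(4*d)))) := by rw [← Real.exp_nat_mul]; congr 1; ring
      _ ≤ _ := by
        apply Real.exp_le_exp.mpr
        apply neg_le_neg
        have hkm : (m:ℝ)^2 ≤ k := by exact_mod_cast hmk
        calc S/s^2 = c^2*S/(4*d^2) := by rw [hsc]; field_simp; norm_num
          _ ≤ c^2*S/(4*d) := by
            apply div_le_div_of_nonneg_left (by positivity) (by positivity)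
            nlinarith
          _ = m^2*(c^2/m^2*S/(4*d)) := by field_simp
          _ ≤ _ := by gcongr
  have hsum := (conc θ hfkt z).trans
    ((Finset.sum_le_sum fun j _ => Finset.sum_le_sum fun l _ => hphi j l).trans (double_sum_bound s hs1 m))
  have hlow : ∀ w : V d, supNorm w ≤ r → ((m:ℝ)^d/2)^2 ≤ ‖∑ j, ee (θ j) w‖^2 := by
    intro w hw
    have : (m:ℝ)^d/2 ≤ ‖∑ j, ee (θ j) w‖ := by
      refine le_trans ?_ (Complex.re_le_norm _)
      rw [Complex.re_sum]
      calc (m:ℝ)^d/2 = ∑ j : Fin d → Fin m, (1/2 : ℝ) := by simp; ring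
        _ ≤ _ := by
          refine Finset.sum_le_sum fun j _ => ?_
          unfold ee
          rw [Complex.exp_ofReal_mul_I_re]
          have hdot : |dot (θ j) w| ≤ 1 := by
            calc |dot (θ j) w| ≤ ∑ i, |θ j i * w i| := Finset.abs_sum_le_sum_abs _ _
              _ ≤ ∑ i : Fin d, c := by
                refine Finset.sum_le_sum fun i _ => ?_
                have a1 : ((j i : ℕ):ℝ) ≤ m := by exact_mod_cast (j i).2.le
                have a2 := (abs_le_supNorm w i).trans hw
                simp only [θ]
                rw [abs_mul, abs_of_nonneg (by positivity)]
                calc c/(r*m)*((j i:ℕ):ℝ)*|(w i:ℝ)| ≤ c/(r*m)*m*r := by gcongr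
                  _ = c := by field_simp
              _ = d*c := by simp
              _ ≤ 1 := hcd
          have := Real.one_sub_sq_div_two_le_cos (x := dot (θ j) w)
          have : (dot (θ j) w)^2 ≤ 1 := by rw [← sq_abs]; exact pow_le_one₀ (abs_nonneg _) hdot
          linarith
    gcongr
  have hbt : ∀ y, (cpow f k) y * box r (z - y) ≠ ⊤ := fun y => by
    apply ENNReal.mul_ne_top (ne_top_of_mass hfkt y)
    unfold box; split_ifs <;> simp
  have hct : conv (cpow f k) (box r) z ≠ ⊤ := by
    refine ne_top_of_le_ne_top hfkt ?_
    refine (conv_le_mass_mul _ _ 1 (fun x => ?_) z).trans (by simp)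
    unfold box; split_ifs <;> simp
  rw [ENNReal.le_ofReal_iff_toReal_le hct (by positivity)]
  have hreal : (conv (cpow f k) (box r) z).toReal = ∑' y, ((cpow f k) y * box r (z - y)).toReal := by
    unfold conv; rw [ENNReal.tsum_toReal_eq hbt]
  have hcs : Summable fun y => ((cpow f k) y).toReal * ‖∑ j, ee (θ j) (z - y)‖^2 := by
    refine Summable.of_norm_bounded ((summable_toReal hfkt).mul_right (((m:ℝ)^d)^2)) fun y => ?_
    rw [Real.norm_of_nonneg (by positivity)]
    gcongr
    refine (norm_sum_le _ _).trans ?_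
    simp [norm_ee]
  have hle : (conv (cpow f k) (box r) z).toReal * ((m:ℝ)^d/2)^2 ≤
      ∑' y, ((cpow f k) y).toReal * ‖∑ j, ee (θ j) (z - y)‖^2 := by
    rw [hreal, ← tsum_mul_right]
    refine Summable.tsum_le_tsum (fun y => ?_) ((ENNReal.summable_toReal hct).mul_right _) hcs
    rw [ENNReal.toReal_mul, mul_assoc]
    gcongr
    unfold box
    split_ifs with h
    · simpa using hlow _ h
    · simp
  have hfin := hle.trans hsum
  have e : (m:ℝ)^d * (8*s)^d = 4*(8*s/m)^d * ((m:ℝ)^d/2)^2 := by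
    rw [div_pow]; field_simp; ring
  rw [e] at hfin
  exact le_of_mul_le_mul_right hfin (by positivity)

def KA (d : ℕ) (κ : ℝ) : ℝ := 4 * (16 * (4*d^3*κ))^d

lemma box_le_one (r : ℝ) (x : V d) : box r x ≤ 1 := by unfold box; split_ifs <;> simp

lemma AC (hd : 0 < d) (κ : ℝ) (hκ : 1 ≤ κ) (f : V d → ℝ≥0∞) (r : ℝ) (hs : IsSymmFun f)
    (hf : mass f = 1) (hr : 0 < r) (h1 : mom 1 f = ENNReal.ofReal (r^2))
    (h2 : mom 2 f ≤ ENNReal.ofReal (κ * r^4)) (k : ℕ) (z : V d) :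
    conv (cpow f k) (box r) z ≤ ENNReal.ofReal (KA d κ / (Real.sqrt (k+1))^d) := by
  have hd1 : (1:ℝ) ≤ d := by exact_mod_cast hd
  rcases Nat.eq_zero_or_pos k with rfl | hk
  · rw [cpow, delta_conv]
    refine (box_le_one _ _).trans ?_
    rw [← ENNReal.ofReal_one]
    apply ENNReal.ofReal_le_ofReal
    simp only [Nat.cast_zero, zero_add, Real.sqrt_one, one_pow, div_one]
    unfold KA
    have h3 : (1:ℝ) ≤ d^3 := one_le_pow₀ hd1
    have : (1:ℝ) ≤ (16 * (4*d^3*κ))^d := one_le_pow₀ (by nlinarith)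
    linarith
  · have hm : 0 < Nat.sqrt k := Nat.sqrt_pos.mpr hk
    refine (AC_aux hd κ hκ f r hs hf hr h1 h2 (Nat.sqrt k) k hm (Nat.sqrt_le' k) z).trans ?_
    apply ENNReal.ofReal_le_ofReal
    unfold KA
    set m := Nat.sqrt k
    have hm1 : (1:ℝ) ≤ m := by exact_mod_cast hm
    have : Real.sqrt (k+1) ≤ 2*m := by
      apply Real.sqrt_le_iff.mpr
      refine ⟨by positivity, ?_⟩
      have : k < (m+1)^2 := Nat.lt_succ_sqrt' k
      have : (k:ℝ)+1 ≤ (m+1)^2 := by exact_mod_cast this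
      nlinarith
    have hsq : 0 < Real.sqrt (k+1) := Real.sqrt_pos.mpr (by positivity)
    rw [mul_div_assoc 4, ← div_pow]
    gcongr 4 * ?_ ^ d
    rw [div_le_div_iff₀ (by positivity) hsq]
    have : 0 < 4*(d:ℝ)^3*κ := by positivity
    nlinarith

def KD (d : ℕ) (κ : ℕ → ℝ) : ℝ :=
  2^(4*d) * (2 * (2^(4*d) * (1 + Kmom d κ (2*d)) * (KA d (κ 2) * 2^d)))

lemma decay (hd : 0 < d) (κ : ℕ → ℝ) (hκ : ∀ q, 1 ≤ κ q) (f : V d → ℝ≥0∞) (r : ℝ) (hs : IsSymmFun f)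
    (hf : mass f = 1) (hr : 0 < r) (h1 : mom 1 f = ENNReal.ofReal (r^2))
    (h2 : ∀ q ≤ 2*d, mom q f ≤ ENNReal.ofReal (κ q * r^(2*q))) (k : ℕ) (x : V d) :
    conv (cpow f k) (box r) x ≤
      ENNReal.ofReal (KD d κ / (Real.sqrt (k+1))^d * ((1 + supNorm x / (Real.sqrt (k+1) * r))^(4*d))⁻¹) := by
  have hκ0 : ∀ q, 0 ≤ κ q := fun q => by linarith [hκ q]
  have hK0 := Kmom_nonneg (d := d) κ hκ0 (2*d)
  set ν := Real.sqrt (k+1) with hν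
  have hν1 : 1 ≤ ν := Real.one_le_sqrt.mpr (by linarith [(Nat.cast_nonneg k : (0:ℝ) ≤ k)])
  have hν2 : ν^2 = k+1 := Real.sq_sqrt (by positivity)
  set s := ν * r with hsd
  have hs0 : 0 < s := by positivity
  have hrs : r ≤ s := by rw [hsd]; nlinarith
  have hKA : 0 ≤ KA d (κ 2) := by
    unfold KA; have := hκ0 2; positivity
  let A : V d → ℝ≥0∞ := fun y => ENNReal.ofReal ((1 + supNorm y / s)^(4*d))
  have hev : ∀ x, f (-x) = f x := IsSymmFun.even hs
  have hac : ∀ j : ℕ, k ≤ 2*j+1 → ∀ w, conv (cpow f j) (box r) w ≤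
      ENNReal.ofReal (KA d (κ 2) * 2^d / ν^d) := by
    intro j hj w
    refine (AC hd (κ 2) (hκ 2) f r hs hf hr h1 (h2 2 (by omega)) j w).trans ?_
    apply ENNReal.ofReal_le_ofReal
    have : ν ≤ 2 * Real.sqrt (j+1) := by
      apply Real.sqrt_le_iff.mpr
      refine ⟨by positivity, ?_⟩
      rw [mul_pow, Real.sq_sqrt (by positivity)]
      have : (k:ℝ) ≤ 2*j+1 := by exact_mod_cast hj
      nlinarith
    have hj0 : 0 < Real.sqrt ((j:ℝ)+1) := Real.sqrt_pos.mpr (by positivity)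
    rw [div_le_div_iff₀ (by positivity) (by positivity), mul_assoc, ← mul_pow]
    gcongr
  have hmo : ∀ j : ℕ, j ≤ k → mass (fun y => A y * cpow f j y) ≤
      ENNReal.ofReal (2^(4*d) * (1 + Kmom d κ (2*d))) := by
    intro j hj
    calc mass (fun y => A y * cpow f j y) ≤ mass (fun y => ENNReal.ofReal (2^(4*d)) * (cpow f j y +
            ENNReal.ofReal ((s^(4*d))⁻¹) * (ENNReal.ofReal (pw (2*d) y) * cpow f j y))) := by
          refine mass_mono fun y => ?_
          have hy := supNorm_nonneg y
          have : A y ≤ ENNReal.ofReal (2^(4*d)) * (1 + ENNReal.ofReal ((s^(4*d))⁻¹) * ENNReal.ofReal (pw (2*d) y)) := by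
            rw [← ENNReal.ofReal_one, ← ENNReal.ofReal_mul (by positivity),
              ← ENNReal.ofReal_add (by norm_num) (by have := pw_nonneg (2*d) y; positivity),
              ← ENNReal.ofReal_mul (by positivity)]
            apply ENNReal.ofReal_le_ofReal
            have h3 := pow_supNorm_le hd (2*d) y
            have e : 2*(2*d) = 4*d := by ring
            rw [e] at h3
            have hb : 0 ≤ supNorm y / s := by positivity
            have h4 : (1 + supNorm y / s)^(4*d) ≤ 2^(4*d) * (1 + (supNorm y / s)^(4*d)) := by
              have : (1 + supNorm y / s) ≤ 2 * max 1 (supNorm y / s) := by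
                have := le_max_left 1 (supNorm y / s)
                have := le_max_right 1 (supNorm y / s)
                linarith
              calc _ ≤ (2 * max 1 (supNorm y / s))^(4*d) := by gcongr
                _ = 2^(4*d) * (max 1 (supNorm y / s))^(4*d) := by rw [mul_pow]
                _ ≤ _ := by
                  gcongr
                  rcases max_cases 1 (supNorm y / s) with h | h
                  · rw [h.1, one_pow]; have : 0 ≤ (supNorm y / s)^(4*d) := by positivity
                    linarith
                  · rw [h.1]; linarith
            refine h4.trans ?_
            gcongr
            rw [div_pow, div_eq_inv_mul]
            gcongr
          calc A y * cpow f j y ≤ _ := mul_le_mul' this le_rfl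
            _ = _ := by ring
      _ = ENNReal.ofReal (2^(4*d)) * (1 + ENNReal.ofReal ((s^(4*d))⁻¹) * mom (2*d) (cpow f j)) := by
          rw [mass_smul, mass_add, mass_smul, mass_cpow, hf, one_pow]; rfl
      _ ≤ ENNReal.ofReal (2^(4*d)) * (1 + ENNReal.ofReal ((s^(4*d))⁻¹) *
            ENNReal.ofReal (Kmom d κ (2*d) * (j:ℝ)^(2*d) * r^(2*(2*d)))) := by
          gcongr
          exact mom_cpow κ hκ0 f hev hf r hr.le h1 (2*d) h2 (2*d) le_rfl j
      _ ≤ _ := by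
          rw [← ENNReal.ofReal_one, ← ENNReal.ofReal_mul (by positivity),
              ← ENNReal.ofReal_add (by norm_num) (by positivity),
              ← ENNReal.ofReal_mul (by positivity)]
          apply ENNReal.ofReal_le_ofReal
          gcongr
          rw [inv_mul_le_iff₀ (by positivity)]
          have e2 : s^(4*d) = ((k:ℝ)+1)^(2*d) * r^(2*(2*d)) := by
            rw [hsd, mul_pow, ← hν2, ← pow_mul]
            congr 2 <;> ring
          rw [e2]
          have hjk : (j:ℝ) ≤ k + 1 := by
            have : (j:ℝ) ≤ k := by exact_mod_cast hj
            linarith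
          calc Kmom d κ (2*d) * (j:ℝ)^(2*d) * r^(2*(2*d)) ≤
              Kmom d κ (2*d) * ((k:ℝ)+1)^(2*d) * r^(2*(2*d)) := by gcongr
            _ = _ := by ring
  set k1 := k/2 with hk1
  set k2 := k - k/2 with hk2
  have hkk : k = k1 + k2 := by omega
  have main : A x * conv (cpow f k) (box r) x ≤ ENNReal.ofReal (KD d κ / ν^d) := by
    rw [hkk, cpow_add, conv_assoc]
    have step : A x * conv (cpow f k1) (conv (cpow f k2) (box r)) x ≤
        ENNReal.ofReal (2^(4*d)) * (conv (fun y => A y * cpow f k1 y) (conv (cpow f k2) (box r)) x +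
          conv (cpow f k1) (conv (fun y => A y * cpow f k2 y) (box r)) x) := by
      unfold conv
      rw [← ENNReal.tsum_add, ← ENNReal.tsum_mul_left, ← ENNReal.tsum_mul_left]
      refine ENNReal.tsum_le_tsum fun y => ?_
      simp only [← ENNReal.tsum_mul_left, ← ENNReal.tsum_add]
      refine ENNReal.tsum_le_tsum fun z => ?_
      by_cases hb : supNorm (x - y - z) ≤ r
      · have hA : A x ≤ ENNReal.ofReal (2^(4*d)) * (A y + A z) := by
          have hy := supNorm_nonneg y
          have hz := supNorm_nonneg z
          have hx := supNorm_nonneg x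
          simp only [A]
          rw [← ENNReal.ofReal_add (by positivity) (by positivity), ← ENNReal.ofReal_mul (by positivity)]
          apply ENNReal.ofReal_le_ofReal
          have t1 : supNorm x ≤ supNorm (x-y-z) + supNorm z + supNorm y := by
            have a1 := supNorm_add_le (x-y-z) z
            have a2 := supNorm_add_le (x-y-z+z) y
            have : x-y-z+z+y = x := by abel
            rw [this] at a2
            linarith
          have t2 : supNorm x / s ≤ 1 + supNorm z / s + supNorm y / s := by
            rw [div_le_iff₀ hs0]
            have : (1 + supNorm z / s + supNorm y / s)*s = s + supNorm z + supNorm y := by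
              field_simp
            linarith
          have t3 : 1 + supNorm x / s ≤ 2 * max (1 + supNorm y / s) (1 + supNorm z / s) := by
            have := le_max_left (1 + supNorm y / s) (1 + supNorm z / s)
            have := le_max_right (1 + supNorm y / s) (1 + supNorm z / s)
            linarith
          calc _ ≤ (2 * max (1 + supNorm y / s) (1 + supNorm z / s))^(4*d) := by gcongr
            _ = 2^(4*d) * (max (1 + supNorm y / s) (1 + supNorm z / s))^(4*d) := by rw [mul_pow]
            _ ≤ _ := by
              gcongr
              have p1 : 0 ≤ (1 + supNorm y / s)^(4*d) := by positivity
              have p2 : 0 ≤ (1 + supNorm z / s)^(4*d) := by positivity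
              rcases max_cases (1 + supNorm y / s) (1 + supNorm z / s) with h | h
              · rw [h.1]; linarith
              · rw [h.1]; linarith
        calc _ ≤ ENNReal.ofReal (2^(4*d)) * (A y + A z) * (cpow f k1 y * (cpow f k2 z * box r (x-y-z))) :=
              mul_le_mul' hA le_rfl
          _ = _ := by ring
      · simp [box, hb]
    refine step.trans ?_
    have s1 : conv (fun y => A y * cpow f k1 y) (conv (cpow f k2) (box r)) x ≤
        ENNReal.ofReal (2^(4*d) * (1 + Kmom d κ (2*d))) * ENNReal.ofReal (KA d (κ 2) * 2^d / ν^d) :=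
      (conv_le_mass_mul _ _ _ (hac k2 (by omega)) x).trans (mul_le_mul' (hmo k1 (by omega)) le_rfl)
    have s2 : conv (cpow f k1) (conv (fun y => A y * cpow f k2 y) (box r)) x ≤
        ENNReal.ofReal (2^(4*d) * (1 + Kmom d κ (2*d))) * ENNReal.ofReal (KA d (κ 2) * 2^d / ν^d) := by
      rw [← conv_assoc, conv_comm (cpow f k1), conv_assoc]
      exact (conv_le_mass_mul _ _ _ (hac k1 (by omega)) x).trans (mul_le_mul' (hmo k2 (by omega)) le_rfl)
    refine (mul_le_mul' le_rfl (add_le_add s1 s2)).trans (le_of_eq ?_)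
    rw [← ENNReal.ofReal_mul (by positivity), ← ENNReal.ofReal_add (by positivity) (by positivity),
      ← ENNReal.ofReal_mul (by positivity)]
    congr 1
    unfold KD; ring
  have hx := supNorm_nonneg x
  have hW : 0 < (1 + supNorm x / s)^(4*d) := by positivity
  have hKD : 0 ≤ KD d κ / ν^d := by unfold KD; positivity
  have hne : A x ≠ 0 := by simpa [A] using hW
  rw [← ENNReal.mul_le_mul_iff_right hne ENNReal.ofReal_ne_top]
  refine main.trans (le_of_eq ?_)
  simp only [A]
  rw [← ENNReal.ofReal_mul hW.le]
  congr 1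
  field_simp

end S18

namespace S18
open Set Filter Topology

structure Flow (β δ : ℝ) (X Y : ℝ → ℝ) : Prop where
  X1 : ∀ t ∈ Icc 0 β, 1 ≤ X t
  Y1 : ∀ t ∈ Icc 0 β, 1 ≤ Y t
  Xmono : MonotoneOn X (Icc 0 β)
  Ymono : MonotoneOn Y (Icc 0 β)
  Xup : ∀ t z, 0 ≤ t → t ≤ z → z ≤ β → X z ≤ X t + (z-t) * (X t * X z)
  Yup : ∀ t z, 0 ≤ t → t ≤ z → z ≤ β → Y z ≤ Y t + (z-t) * (Y t * X z + X t * Y z)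
  Xlow : ∀ t ∈ Ico 0 β, ∀ L < (1-δ) * X t^2, ∀ᶠ z in 𝓝[>] t, L * (z-t) ≤ X z - X t
  Ylow : ∀ t ∈ Ico 0 β, ∀ L < (2-3*δ) * (X t * Y t), ∀ᶠ z in 𝓝[>] t, L * (z-t) ≤ Y z - Y t

lemma lip_cont {W : ℝ → ℝ} {β C : ℝ} (hm : MonotoneOn W (Icc 0 β))
    (h : ∀ t z, 0 ≤ t → t ≤ z → z ≤ β → W z ≤ W t + (z-t) * C) : ContinuousOn W (Icc 0 β) := by
  have hC : LipschitzOnWith (Real.toNNReal C) W (Icc 0 β) := by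
    apply LipschitzOnWith.of_dist_le_mul
    have key : ∀ t ∈ Icc 0 β, ∀ z ∈ Icc 0 β, t ≤ z → dist (W t) (W z) ≤ Real.toNNReal C * dist t z := by
      intro t ht z hz htz
      rw [dist_comm, dist_comm t z, Real.dist_eq, Real.dist_eq, abs_of_nonneg (sub_nonneg.mpr (hm ht hz htz)),
        abs_of_nonneg (sub_nonneg.mpr htz)]
      have h1 := h t z ht.1 htz hz.2
      have h2 : C ≤ Real.toNNReal C := Real.le_coe_toNNReal C
      nlinarith
    intro t ht z hz
    rcases le_total t z with h | h
    · exact key t ht z hz h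
    · rw [dist_comm, dist_comm t z]; exact key z hz t ht h
  exact hC.continuousOn

lemma tends_right {W : ℝ → ℝ} {β t : ℝ} (hc : ContinuousOn W (Icc 0 β)) (ht : t ∈ Ico 0 β) :
    Tendsto W (𝓝[>] t) (𝓝 (W t)) := by
  have h1 := (hc t ⟨ht.1, ht.2.le⟩).tendsto
  refine h1.mono_left (nhdsWithin_le_of_mem ?_)
  exact mem_of_superset (Ioo_mem_nhdsGT ht.2) fun z hz => ⟨ht.1.trans hz.1.le, hz.2.le⟩

lemma ev_mem {β t : ℝ} (ht : t ∈ Ico 0 β) : ∀ᶠ z in 𝓝[>] t, t < z ∧ z ≤ β :=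
  mem_of_superset (Ioo_mem_nhdsGT ht.2) fun z hz => ⟨hz.1, hz.2.le⟩

lemma slope_lt {f U : ℝ → ℝ} {t u r : ℝ} (h : ∀ᶠ z in 𝓝[>] t, f z - f t ≤ U z * (z - t))
    (hU : Tendsto U (𝓝[>] t) (𝓝 u)) (hr : u < r) : ∃ᶠ z in 𝓝[>] t, slope f t z < r := by
  refine Eventually.frequently ?_
  filter_upwards [h, hU.eventually_lt_const hr, self_mem_nhdsWithin] with z h1 h2 h3
  have h3' : 0 < z - t := sub_pos.mpr h3
  rw [slope_def_field, div_lt_iff₀ h3']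
  calc f z - f t ≤ U z * (z-t) := h1
    _ < r * (z-t) := by gcongr

namespace Flow
variable {β δ : ℝ} {X Y : ℝ → ℝ}

lemma Xcont (h : Flow β δ X Y) : ContinuousOn X (Icc 0 β) := by
  refine lip_cont (C := X β * X β) h.Xmono fun t z h0 htz hz => ?_
  refine (h.Xup t z h0 htz hz).trans ?_
  have hb : β ∈ Icc 0 β := ⟨by linarith, le_rfl⟩
  have a1 := h.Xmono ⟨h0, htz.trans hz⟩ hb (htz.trans hz)
  have a2 := h.Xmono ⟨h0.trans htz, hz⟩ hb hz
  have a3 := h.X1 t ⟨h0, htz.trans hz⟩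
  have a4 := h.X1 z ⟨h0.trans htz, hz⟩
  have : 0 ≤ z - t := by linarith
  have : 0 ≤ X β := by linarith
  have : 0 ≤ X z := by linarith
  gcongr

lemma Ycont (h : Flow β δ X Y) : ContinuousOn Y (Icc 0 β) := by
  refine lip_cont (C := Y β * X β + X β * Y β) h.Ymono fun t z h0 htz hz => ?_
  refine (h.Yup t z h0 htz hz).trans ?_
  have hb : β ∈ Icc 0 β := ⟨by linarith, le_rfl⟩
  have a1 := h.Xmono ⟨h0, htz.trans hz⟩ hb (htz.trans hz)
  have a2 := h.Xmono ⟨h0.trans htz, hz⟩ hb hz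
  have a3 := h.X1 t ⟨h0, htz.trans hz⟩
  have a4 := h.X1 z ⟨h0.trans htz, hz⟩
  have b1 := h.Ymono ⟨h0, htz.trans hz⟩ hb (htz.trans hz)
  have b2 := h.Ymono ⟨h0.trans htz, hz⟩ hb hz
  have b3 := h.Y1 t ⟨h0, htz.trans hz⟩
  have b4 := h.Y1 z ⟨h0.trans htz, hz⟩
  have : 0 ≤ z - t := by linarith
  have : 0 ≤ X β := by linarith
  have : 0 ≤ X z := by linarith
  have : 0 ≤ Y β := by linarith
  have : 0 ≤ Y z := by linarith
  gcongr

lemma restrict (h : Flow β δ X Y) {b : ℝ} (hb : b ≤ β) : Flow b δ X Y where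
  X1 := fun t ht => h.X1 t ⟨ht.1, ht.2.trans hb⟩
  Y1 := fun t ht => h.Y1 t ⟨ht.1, ht.2.trans hb⟩
  Xmono := h.Xmono.mono (Icc_subset_Icc le_rfl hb)
  Ymono := h.Ymono.mono (Icc_subset_Icc le_rfl hb)
  Xup := fun t z h0 h1 h2 => h.Xup t z h0 h1 (h2.trans hb)
  Yup := fun t z h0 h1 h2 => h.Yup t z h0 h1 (h2.trans hb)
  Xlow := fun t ht => h.Xlow t ⟨ht.1, ht.2.trans_le hb⟩
  Ylow := fun t ht => h.Ylow t ⟨ht.1, ht.2.trans_le hb⟩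

/-- (A) -/
lemma inv_bound (h : Flow β δ X Y) {s t : ℝ} (hs : 0 ≤ s) (hst : s ≤ t) (ht : t ≤ β) :
    (1-δ) * (t - s) + 1 / X t ≤ 1 / X s := by
  have hX0 : ∀ z ∈ Icc 0 β, 0 < X z := fun z hz => by linarith [h.X1 z hz]
  have hc : ContinuousOn (fun z => 1 / X z + (1-δ) * z) (Icc 0 β) := by
    refine ContinuousOn.add (continuousOn_const.div h.Xcont fun z hz => (hX0 z hz).ne') ?_
    fun_prop
  have hsub : Icc s t ⊆ Icc 0 β := Icc_subset_Icc hs ht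
  have := image_le_of_liminf_slope_right_le_deriv_boundary (f := fun z => 1 / X z + (1-δ) * z)
    (a := s) (b := t) (hc.mono hsub) (B := fun _ => 1 / X s + (1-δ) * s) (B' := fun _ => 0) le_rfl
    continuousOn_const (fun x _ => hasDerivWithinAt_const _ _ _) (by
      intro x hx r hr
      have hx' : x ∈ Ico 0 β := ⟨hs.trans hx.1, hx.2.trans_le ht⟩
      have hXx := hX0 x ⟨hx'.1, hx'.2.le⟩
      have hT := tends_right h.Xcont hx'
      set L := (1-δ) * X x^2 - r/2 * X x^2 with hL
      have hLlt : L < (1-δ) * X x^2 := by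
        have : 0 < r/2 * X x^2 := by positivity
        linarith
      refine slope_lt (U := fun z => (1-δ) - L / (X x * X z)) (u := (1-δ) - L/(X x * X x)) ?_ ?_ ?_
      · filter_upwards [h.Xlow x hx' L hLlt, ev_mem hx'] with z h1 h2
        have hXz := hX0 z ⟨hx'.1.trans h2.1.le, h2.2⟩
        have e : 1 / X z - 1 / X x = - ((X z - X x) / (X x * X z)) := by field_simp; ring
        have e2 : L*(z-x)/(X x * X z) ≤ (X z - X x) / (X x * X z) := by gcongr
        have e3 : L*(z-x)/(X x * X z) = L/(X x * X z) * (z-x) := by ring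
        rw [e3] at e2
        have : (1 / X z + (1-δ)*z) - (1/X x + (1-δ)*x) = (1/X z - 1/X x) + (1-δ)*(z-x) := by ring
        rw [this, e]
        linarith
      · refine tendsto_const_nhds.sub (tendsto_const_nhds.div (tendsto_const_nhds.mul hT) ?_)
        positivity
      · have : L/(X x * X x) = (1-δ) - r/2 := by rw [hL]; field_simp
        rw [this]; linarith)
  have h1 := this (right_mem_Icc.mpr hst)
  linarith

/-- (B) -/
lemma log_bound (h : Flow β δ X Y) (hδ : 3*δ ≤ 2) {s t : ℝ} (hs : 0 ≤ s) (hst : s ≤ t) (ht : t ≤ β) :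
    (2-3*δ) * (Real.log (X t) - Real.log (X s)) ≤ Real.log (Y t) - Real.log (Y s) := by
  have hX0 : ∀ z ∈ Icc 0 β, 0 < X z := fun z hz => by linarith [h.X1 z hz]
  have hY0 : ∀ z ∈ Icc 0 β, 0 < Y z := fun z hz => by linarith [h.Y1 z hz]
  have hc : ContinuousOn (fun z => (2-3*δ) * Real.log (X z) - Real.log (Y z)) (Icc 0 β) :=
    (continuousOn_const.mul (h.Xcont.log fun z hz => (hX0 z hz).ne')).sub
      (h.Ycont.log fun z hz => (hY0 z hz).ne')
  have hsub : Icc s t ⊆ Icc 0 β := Icc_subset_Icc hs ht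
  have := image_le_of_liminf_slope_right_le_deriv_boundary
    (f := fun z => (2-3*δ) * Real.log (X z) - Real.log (Y z))
    (a := s) (b := t) (hc.mono hsub) (B := fun _ => (2-3*δ) * Real.log (X s) - Real.log (Y s))
    (B' := fun _ => 0) le_rfl
    continuousOn_const (fun x _ => hasDerivWithinAt_const _ _ _) (by
      intro x hx r hr
      have hx' : x ∈ Ico 0 β := ⟨hs.trans hx.1, hx.2.trans_le ht⟩
      have hXx := hX0 x ⟨hx'.1, hx'.2.le⟩
      have hYx := hY0 x ⟨hx'.1, hx'.2.le⟩
      have hT := tends_right h.Xcont hx'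
      have hTY := tends_right h.Ycont hx'
      set L := (2-3*δ) * (X x * Y x) - r/2 * Y x with hL
      have hLlt : L < (2-3*δ) * (X x * Y x) := by
        have : 0 < r/2 * Y x := by positivity
        linarith
      refine slope_lt (U := fun z => (2-3*δ) * X z - L / Y z) (u := (2-3*δ) * X x - L / Y x) ?_ ?_ ?_
      · filter_upwards [h.Ylow x hx' L hLlt, ev_mem hx'] with z h1 h2
        have hzm : z ∈ Icc 0 β := ⟨hx'.1.trans h2.1.le, h2.2⟩
        have hXz := hX0 z hzm
        have hYz := hY0 z hzm
        have l1 : Real.log (X z) - Real.log (X x) ≤ (z-x) * X z := by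
          rw [← Real.log_div hXz.ne' hXx.ne']
          have a := Real.log_le_sub_one_of_pos (div_pos hXz hXx)
          have b := h.Xup x z hx'.1 h2.1.le h2.2
          have : X z / X x ≤ 1 + (z-x) * X z := by
            rw [div_le_iff₀ hXx]; linarith
          linarith
        have l2 : L / Y z * (z-x) ≤ Real.log (Y z) - Real.log (Y x) := by
          have a := Real.log_le_sub_one_of_pos (div_pos hYx hYz)
          rw [Real.log_div hYx.ne' hYz.ne'] at a
          have : L / Y z * (z-x) ≤ (Y z - Y x)/Y z := by
            rw [div_mul_eq_mul_div]; gcongr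
          have e : (Y z - Y x)/Y z = 1 - Y x / Y z := by field_simp
          linarith
        have l3 : (2-3*δ) * (Real.log (X z) - Real.log (X x)) ≤ (2-3*δ) * ((z-x) * X z) :=
          mul_le_mul_of_nonneg_left l1 (by linarith)
        nlinarith
      · exact (tendsto_const_nhds.mul hT).sub (tendsto_const_nhds.div hTY hYx.ne')
      · have : L / Y x = (2-3*δ) * X x - r/2 := by rw [hL]; field_simp
        rw [this]; linarith)
  have h1 := this (right_mem_Icc.mpr hst)
  linarith

/-- (C), one step -/
lemma moment_step (h : Flow β δ X Y) (hδ0 : 0 ≤ δ) (j : ℕ) (hδ : 3*(j+2)*δ ≤ 1/4) (Mj M1 : ℝ → ℝ)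
    (Mpos : ∀ t ∈ Icc 0 β, 0 < Mj t) (M1nn : ∀ t ∈ Icc 0 β, 0 ≤ M1 t)
    (Mmono : MonotoneOn Mj (Icc 0 β)) (M1c : ContinuousOn M1 (Icc 0 β)) (M1mono : MonotoneOn M1 (Icc 0 β))
    (Mup : ∀ t z, 0 ≤ t → t ≤ z → z ≤ β → Mj z ≤ Mj t + (z-t) * (Mj t * X z + X t * Mj z +
      4^(j+2) * (M1 t * Y z + Y t * M1 z)))
    (K1 K : ℝ) (hK1 : ∀ t ∈ Icc 0 β, M1 t * X t^j ≤ K1 * Y t^(j+1))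
    (hK1p : 0 < K1) (hK : 8*4^(j+2)*K1 ≤ K) (hM0 : Mj 0 * X 0^(j+1) ≤ K * Y 0^(j+2)) :
    ContinuousOn Mj (Icc 0 β) ∧ ∀ t ∈ Icc 0 β, Mj t * X t^(j+1) ≤ K * Y t^(j+2) := by
  have hX0 : ∀ z ∈ Icc 0 β, 0 < X z := fun z hz => by linarith [h.X1 z hz]
  have hY0 : ∀ z ∈ Icc 0 β, 0 < Y z := fun z hz => by linarith [h.Y1 z hz]
  have hKp : 0 < K := lt_of_lt_of_le (by positivity) hK
  have Mc : ContinuousOn Mj (Icc 0 β) := by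
    refine lip_cont (C := Mj β * X β + X β * Mj β + 4^(j+2) * (M1 β * Y β + Y β * M1 β)) Mmono
      fun t z h0 htz hz => ?_
    refine (Mup t z h0 htz hz).trans ?_
    have hb : β ∈ Icc 0 β := ⟨by linarith, le_rfl⟩
    have ht : t ∈ Icc 0 β := ⟨h0, htz.trans hz⟩
    have hz' : z ∈ Icc 0 β := ⟨h0.trans htz, hz⟩
    have a1 := h.Xmono ht hb ht.2
    have a2 := h.Xmono hz' hb hz
    have b1 := h.Ymono ht hb ht.2
    have b2 := h.Ymono hz' hb hz
    have c1 := Mmono ht hb ht.2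
    have c2 := Mmono hz' hb hz
    have d1 := M1mono ht hb ht.2
    have d2 := M1mono hz' hb hz
    have := hX0 t ht
    have := hX0 z hz'
    have := hX0 β hb
    have := hY0 t ht
    have := hY0 z hz'
    have := hY0 β hb
    have := Mpos t ht
    have := Mpos z hz'
    have := Mpos β hb
    have := M1nn t ht
    have := M1nn z hz'
    have := M1nn β hb
    have : 0 ≤ z - t := by linarith
    gcongr
  refine ⟨Mc, ?_⟩
  intro t ht
  have hz0 : (0:ℝ) ∈ Icc 0 β := ⟨le_rfl, ht.1.trans ht.2⟩
  have lM : ∀ z ∈ Icc 0 β, (Real.log (Mj z) - (j+2) * Real.log (Y z) + (j+1) * Real.log (X z) ≤ Real.log K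
      ↔ Mj z * X z^(j+1) ≤ K * Y z^(j+2)) := by
    intro z hz
    have a := Mpos z hz
    have b := hX0 z hz
    have c := hY0 z hz
    have hll := Real.log_le_log_iff (x := Mj z * X z^(j+1)) (y := K * Y z^(j+2)) (by positivity) (by positivity)
    rw [← hll, Real.log_mul (by positivity) (by positivity),
      Real.log_mul (by positivity) (by positivity), Real.log_pow, Real.log_pow]
    push_cast
    constructor <;> intro h <;> linarith
  have hc : ContinuousOn (fun z => Real.log (Mj z) - (j+2) * Real.log (Y z) + (j+1) * Real.log (X z)) (Icc 0 β) :=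
    ((Mc.log fun z hz => (Mpos z hz).ne').sub (continuousOn_const.mul (h.Ycont.log fun z hz => (hY0 z hz).ne'))).add
      (continuousOn_const.mul (h.Xcont.log fun z hz => (hX0 z hz).ne'))
  refine (lM t ht).mp ?_
  refine image_le_of_liminf_slope_right_lt_deriv_boundary' (a := 0) (b := β)
    (f' := fun t => (Mj t * X t + X t * Mj t + 4^(j+2) * (M1 t * Y t + Y t * M1 t))/Mj t
      - (j+2)*((2-3*δ) * X t) + (j+1) * X t)
    (B := fun _ => Real.log K) (B' := fun _ => 0) hc ?_ ((lM 0 hz0).mpr hM0) continuousOn_const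
    (fun x _ => hasDerivWithinAt_const _ _ _) ?_ ht
  · intro x hx r hr
    have hxm : x ∈ Icc 0 β := ⟨hx.1, hx.2.le⟩
    have hXx := hX0 x hxm
    have hYx := hY0 x hxm
    have hMx := Mpos x hxm
    have hT := tends_right h.Xcont hx
    have hTY := tends_right h.Ycont hx
    have hTM := tends_right Mc hx
    have hTM1 := tends_right M1c hx
    set u := (Mj x * X x + X x * Mj x + 4^(j+2) * (M1 x * Y x + Y x * M1 x))/Mj x
      - (j+2)*((2-3*δ) * X x) + (j+1) * X x with hu
    have hru : 0 < r - u := by simpa [hu] using hr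
    set η := (r-u)/(2*(j+2)) with hη
    have hη0 : 0 < η := by positivity
    set L := (2-3*δ) * (X x * Y x) - η * Y x with hL
    have hLlt : L < (2-3*δ) * (X x * Y x) := by
      have : 0 < η * Y x := by positivity
      linarith
    refine slope_lt (U := fun z => (Mj x * X z + X x * Mj z + 4^(j+2) * (M1 x * Y z + Y x * M1 z))/Mj x
      - (j+2)*(L / Y z) + (j+1) * X z) (u := (Mj x * X x + X x * Mj x + 4^(j+2) * (M1 x * Y x + Y x * M1 x))/Mj x
      - (j+2)*(L / Y x) + (j+1) * X x) ?_ ?_ ?_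
    · filter_upwards [h.Ylow x hx L hLlt, ev_mem hx] with z h1 h2
      have hzm : z ∈ Icc 0 β := ⟨hx.1.trans h2.1.le, h2.2⟩
      have hXz := hX0 z hzm
      have hYz := hY0 z hzm
      have hMz := Mpos z hzm
      have l1 : Real.log (X z) - Real.log (X x) ≤ (z-x) * X z := by
        rw [← Real.log_div hXz.ne' hXx.ne']
        have a := Real.log_le_sub_one_of_pos (div_pos hXz hXx)
        have b := h.Xup x z hx.1 h2.1.le h2.2
        have : X z / X x ≤ 1 + (z-x) * X z := by
          rw [div_le_iff₀ hXx]; linarith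
        linarith
      have l2 : L / Y z * (z-x) ≤ Real.log (Y z) - Real.log (Y x) := by
        have a := Real.log_le_sub_one_of_pos (div_pos hYx hYz)
        rw [Real.log_div hYx.ne' hYz.ne'] at a
        have : L / Y z * (z-x) ≤ (Y z - Y x)/Y z := by
          rw [div_mul_eq_mul_div]; gcongr
        have e : (Y z - Y x)/Y z = 1 - Y x / Y z := by field_simp
        linarith
      have l3 : Real.log (Mj z) - Real.log (Mj x) ≤
          (Mj x * X z + X x * Mj z + 4^(j+2) * (M1 x * Y z + Y x * M1 z))/Mj x * (z-x) := by
        rw [← Real.log_div hMz.ne' hMx.ne']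
        have a := Real.log_le_sub_one_of_pos (div_pos hMz hMx)
        have b := Mup x z hx.1 h2.1.le h2.2
        refine a.trans ?_
        rw [div_mul_eq_mul_div, le_div_iff₀ hMx, sub_mul, div_mul_cancel₀ _ hMx.ne']
        linarith
      have l4 : ((j:ℝ)+1) * (Real.log (X z) - Real.log (X x)) ≤ ((j:ℝ)+1) * ((z-x) * X z) :=
        mul_le_mul_of_nonneg_left l1 (by positivity)
      have l5 : ((j:ℝ)+2) * (L / Y z * (z-x)) ≤ ((j:ℝ)+2) * (Real.log (Y z) - Real.log (Y x)) :=
        mul_le_mul_of_nonneg_left l2 (by positivity)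
      nlinarith
    · refine Tendsto.add (Tendsto.sub (Tendsto.div_const (Tendsto.add (Tendsto.add ?_ ?_) ?_) _) ?_) ?_
      · exact tendsto_const_nhds.mul hT
      · exact tendsto_const_nhds.mul hTM
      · exact tendsto_const_nhds.mul ((tendsto_const_nhds.mul hTY).add (tendsto_const_nhds.mul hTM1))
      · exact tendsto_const_nhds.mul (tendsto_const_nhds.div hTY hYx.ne')
      · exact tendsto_const_nhds.mul hT
    · have e1 : L / Y x = (2-3*δ) * X x - η := by rw [hL]; field_simp
      have e2 : ((j:ℝ)+2) * η = (r-u)/2 := by rw [hη]; field_simp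
      rw [e1]
      have : (Mj x * X x + X x * Mj x + 4^(j+2) * (M1 x * Y x + Y x * M1 x))/Mj x
        - (j+2)*((2-3*δ) * X x - η) + (j+1) * X x = u + (j+2)*η := by rw [hu]; ring
      rw [this, e2]; linarith
  · intro x hx hfx
    have hxm : x ∈ Icc 0 β := ⟨hx.1, hx.2.le⟩
    have hXx := hX0 x hxm
    have hYx := hY0 x hxm
    have hMx := Mpos x hxm
    change _ < (0:ℝ)
    have heq : Mj x * X x^(j+1) = K * Y x^(j+2) := by
      have : Real.log (Mj x * X x^(j+1)) = Real.log (K * Y x^(j+2)) := by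
        rw [Real.log_mul (by positivity) (by positivity),
          Real.log_mul (by positivity) (by positivity), Real.log_pow, Real.log_pow]
        push_cast; linarith
      exact Real.log_injOn_pos (Set.mem_Ioi.mpr (by positivity)) (Set.mem_Ioi.mpr (by positivity)) this
    have hq : M1 x * Y x / Mj x ≤ K1/K * X x := by
      rw [div_le_iff₀ hMx]
      have a := hK1 x hxm
      have e : K1/K * X x * Mj x * X x^j = K1 * Y x^(j+2) := by
        calc K1/K * X x * Mj x * X x^j = K1/K*(Mj x * X x^(j+1)) := by ring
          _ = _ := by rw [heq]; field_simp
      have hp : 0 < X x^j := by positivity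
      refine le_of_mul_le_mul_right ?_ hp
      rw [e]
      calc M1 x * Y x * X x^j = M1 x * X x^j * Y x := by ring
        _ ≤ K1 * Y x^(j+1) * Y x := by gcongr
        _ = _ := by ring
    have hq2 : 2*4^(j+2)*(K1/K) ≤ 1/4 := by
      rw [← mul_div_assoc, div_le_iff₀ hKp]; linarith
    have e1 : (Mj x * X x + X x * Mj x + 4^(j+2) * (M1 x * Y x + Y x * M1 x))/Mj x =
        2 * X x + 2*4^(j+2)*(M1 x * Y x / Mj x) := by field_simp; ring
    rw [e1]
    have e2 : 2*4^(j+2)*(M1 x * Y x / Mj x) ≤ 1/4 * X x := by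
      calc 2*4^(j+2)*(M1 x * Y x / Mj x) ≤ 2*4^(j+2)*(K1/K * X x) := by gcongr
        _ = 2*4^(j+2)*(K1/K) * X x := by ring
        _ ≤ _ := by gcongr
    have e3 : 3*(j+2)*δ*X x ≤ 1/4*X x := by gcongr
    have hj : (0:ℝ) ≤ j * X x := by positivity
    nlinarith

end Flow
end S18

namespace S18
set_option linter.unusedVariables false
open Set Filter Topology
variable {d : ℕ}

lemma exp_weight (c : ℝ) (hc : 0 < c) (N : ℕ) : ∃ A > (0:ℝ), ∀ n : ℝ, 0 ≤ n →
    Real.exp (-c*n) ≤ A * ((1+n)^N)⁻¹ := by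
  refine ⟨Real.exp c * N.factorial / c^N, by positivity, fun n hn => ?_⟩
  have h := Real.pow_div_factorial_le_exp (c*(1+n)) (by positivity) N
  have e : Real.exp (c*(1+n)) = Real.exp c * (Real.exp (-c*n))⁻¹ := by
    rw [← Real.exp_neg, ← Real.exp_add]; congr 1; ring
  rw [e, ← div_eq_mul_inv, div_le_div_iff₀ (by positivity) (Real.exp_pos _)] at h
  rw [← div_eq_mul_inv, le_div_iff₀ (by positivity), le_div_iff₀ (by positivity)]
  rw [mul_pow] at h
  linarith

lemma exp_mom (f : V d → ℝ≥0∞) (C c : ℝ) (hC : 0 < C) (hc : 0 < c)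
    (h : ∀ x, f x ≤ ENNReal.ofReal (C * Real.exp (-c * supNorm x))) (q : ℕ) : mom q f ≠ ⊤ := by
  obtain ⟨A, hA, hw⟩ := exp_weight c hc (2*d+2*q)
  have : mom q f ≤ ENNReal.ofReal (d * C * A) * ENNReal.ofReal ((4*1)^d) := by
    refine le_trans ?_ (mul_le_mul' le_rfl (wsum (d := d) 1 le_rfl))
    rw [← ENNReal.tsum_mul_left]
    refine ENNReal.tsum_le_tsum fun x => ?_
    refine (mul_le_mul' le_rfl (h x)).trans ?_
    have hn := supNorm_nonneg x
    rw [← ENNReal.ofReal_mul (pw_nonneg _ _), ← ENNReal.ofReal_mul (by positivity)]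
    refine ENNReal.ofReal_le_ofReal ?_
    have h1 := hw (supNorm x) hn
    have h2 := pw_le_pow q x
    calc pw q x * (C * Real.exp (-c*supNorm x)) ≤ (d * (1+supNorm x)^(2*q)) * (C * (A * ((1+supNorm x)^(2*d+2*q))⁻¹)) := by
          gcongr
          exact h2.trans (by gcongr; linarith)
      _ = _ := by rw [pow_add]; field_simp
  exact ne_top_of_le_ne_top (ENNReal.mul_ne_top ENNReal.ofReal_ne_top ENNReal.ofReal_ne_top) this

lemma mass_ne_top (hd : 0 < d) {f : V d → ℝ≥0∞} (h : mom 0 f ≠ ⊤) : mass f ≠ ⊤ := by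
  rw [mom_zero] at h
  intro e
  apply h
  rw [e, ENNReal.mul_top]
  exact_mod_cast hd.ne'

lemma conv_add_le (f g h k : V d → ℝ≥0∞) (c : ℝ≥0∞) (H : ∀ x, g x ≤ h x + c * k x) (x : V d) :
    conv f g x ≤ conv f h x + c * conv f k x := by
  have h1 := conv_mono (f := f) (f' := f) (fun _ => le_rfl) H x
  rw [conv_add_right f h (fun x => c * k x), conv_smul_right] at h1
  exact h1

lemma mom_conv_top (f g : V d → ℝ≥0∞) (hg : ∀ x, g (-x) = g x) (hf : mass f ≠ ⊤) (hg0 : mass g ≠ ⊤)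
    (hfm : ∀ q, mom q f ≠ ⊤) (hgm : ∀ q, mom q g ≠ ⊤) (q : ℕ) : mom q (conv f g) ≠ ⊤ := by
  rcases q with _ | n
  · rw [mom_zero, mass_conv]
    exact ENNReal.mul_ne_top (by simp) (ENNReal.mul_ne_top hf hg0)
  · refine ne_top_of_le_ne_top ?_ (mom_conv f g hg n)
    have a := hfm n
    have b := hfm 1
    have c := hgm n
    have d' := hgm 1
    have e := hgm (n+1)
    have f' := hfm (n+1)
    simp only [ne_eq, ENNReal.add_eq_top, ENNReal.mul_eq_top, not_or, not_and]
    simp_all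

section
variable {c₀ : ℝ} (M : Model d c₀)

def Jt : V d → ℝ≥0∞ := fun x => ENNReal.ofReal (M.K.J x)
def Ht (t : ℝ) : V d → ℝ≥0∞ := fun x => ENNReal.ofReal (M.H t x)

lemma F_eq (t : ℝ) : M.F t = conv (Jt M) (M.G t) := rfl

lemma mass_Jt : mass (Jt M) = 1 := by
  unfold mass Jt
  rw [← ENNReal.ofReal_tsum_of_nonneg M.K.nonneg M.K.summable, M.K.norm_one, ENNReal.ofReal_one]

lemma Jt_symm : IsSymmFun (Jt M) := fun π e x => by
  unfold Jt; rw [M.K.symm π e x]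

lemma mom_Jt_le (q : ℕ) : mom q (Jt M) ≤ ENNReal.ofReal (d * M.K.R^(2*q)) := by
  calc mom q (Jt M) ≤ ∑' x, ENNReal.ofReal (d * M.K.R^(2*q)) * Jt M x := by
        refine ENNReal.tsum_le_tsum fun x => ?_
        unfold Jt
        rcases (M.K.nonneg x).eq_or_lt with h | h
        · simp [← h]
        · refine mul_le_mul' (ENNReal.ofReal_le_ofReal ?_) le_rfl
          refine (pw_le_pow q x).trans ?_
          gcongr
          · exact supNorm_nonneg x
          · exact M.K.range_le x h
    _ = _ := by
      rw [ENNReal.tsum_mul_left]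
      have := mass_Jt M
      unfold mass at this
      rw [this, mul_one]

lemma mom_Jt_ge (hd : 0 < d) (q : ℕ) : 1 ≤ mom q (Jt M) := by
  rw [← mass_Jt M]
  refine ENNReal.tsum_le_tsum fun x => ?_
  by_cases hx : x = 0
  · subst hx; simp [Jt, M.K.zero_at_zero]
  · have h1 : 1 ≤ supNorm x := by
      obtain ⟨i, hi⟩ := Function.ne_iff.mp hx
      refine le_trans ?_ (abs_le_supNorm x i)
      have := Int.one_le_abs hi
      exact_mod_cast this
    have h2 : 1 ≤ pw q x := (one_le_pow₀ h1).trans (pow_supNorm_le hd q x)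
    have h3 : (1:ℝ≥0∞) ≤ ENNReal.ofReal (pw q x) := by
      rw [← ENNReal.ofReal_one]; exact ENNReal.ofReal_le_ofReal h2
    calc Jt M x = 1 * Jt M x := (one_mul _).symm
      _ ≤ _ := mul_le_mul' h3 le_rfl

lemma sigma_nonneg : 0 ≤ M.sigma := Real.sqrt_nonneg _

lemma mom_one_Jt : mom 1 (Jt M) = ENNReal.ofReal (M.sigma^2) := by
  unfold mom Jt Model.sigma AdmissibleKernel.sigma
  have hnn : ∀ x, 0 ≤ sqNorm x * M.K.J x := fun x => mul_nonneg (sqNorm_nonneg x) (M.K.nonneg x)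
  rw [Real.sq_sqrt (tsum_nonneg hnn),
    ENNReal.ofReal_tsum_of_nonneg hnn M.K.summable_sq]
  refine tsum_congr fun x => ?_
  rw [pw_one, ENNReal.ofReal_mul (sqNorm_nonneg x)]

lemma sigma_ge_one (hd : 0 < d) : 1 ≤ M.sigma := by
  have h := mom_Jt_ge M hd 1
  rw [mom_one_Jt, ENNReal.one_le_ofReal] at h
  nlinarith [sigma_nonneg M]

lemma G_zero : M.G 0 = delta := by funext x; exact M.init x

lemma F_zero : M.F 0 = Jt M := by rw [F_eq, G_zero, conv_delta]

lemma G_even (t : ℝ) (x : V d) : M.G t (-x) = M.G t x := IsSymmFun.even (M.symm t) x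
lemma Jt_even (x : V d) : Jt M (-x) = Jt M x := IsSymmFun.even (Jt_symm M) x
lemma F_symm (t : ℝ) : IsSymmFun (M.F t) := conv_symm (Jt_symm M) (M.symm t)
lemma F_even (t : ℝ) (x : V d) : M.F t (-x) = M.F t x := IsSymmFun.even (F_symm M t) x

lemma mom_Jt_top (q : ℕ) : mom q (Jt M) ≠ ⊤ := ne_top_of_le_ne_top ENNReal.ofReal_ne_top (mom_Jt_le M q)

lemma conv_double (f g h : V d → ℝ≥0∞) (x : V d) :
    ∑' p : V d × V d, f p.1 * g p.2 * h (x - p.1 - p.2) = conv f (conv g h) x := by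
  rw [ENNReal.tsum_prod']
  unfold conv
  refine tsum_congr fun y => ?_
  rw [← ENNReal.tsum_mul_left]
  refine tsum_congr fun z => ?_
  simp only; ring

/-- admissible time -/
def Ok (t : ℝ) : Prop := 0 ≤ t ∧ ENNReal.ofReal t < M.βc

variable {M}

lemma Ok.mono {t z : ℝ} (hz : Ok M z) (h0 : 0 ≤ t) (h : t ≤ z) : Ok M t :=
  ⟨h0, (ENNReal.ofReal_le_ofReal h).trans_lt hz.2⟩

lemma Ok.momG {t : ℝ} (h : Ok M t) (q : ℕ) : mom q (M.G t) ≠ ⊤ := by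
  obtain ⟨C, hC, c, hc, hb⟩ := M.expDecay h.1 h.2
  exact exp_mom _ C c hC hc hb q

lemma Ok.momH {t : ℝ} (h : Ok M t) (q : ℕ) : mom q (Ht M t) ≠ ⊤ := by
  obtain ⟨C, hC, c, hc, hb⟩ := M.H_expDecay h.1 h.2
  exact exp_mom _ C c hC hc (fun x => ENNReal.ofReal_le_ofReal (hb x)) q

lemma Ok.massG (hd : 0 < d) {t : ℝ} (h : Ok M t) : mass (M.G t) ≠ ⊤ := mass_ne_top hd (h.momG 0)
lemma Ok.massH (hd : 0 < d) {t : ℝ} (h : Ok M t) : mass (Ht M t) ≠ ⊤ := mass_ne_top hd (h.momH 0)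

lemma massF (t : ℝ) : mass (M.F t) = mass (M.G t) := by rw [F_eq, mass_conv, mass_Jt, one_mul]

lemma Ok.momF (hd : 0 < d) {t : ℝ} (h : Ok M t) (q : ℕ) : mom q (M.F t) ≠ ⊤ := by
  rw [F_eq]
  exact mom_conv_top _ _ (G_even M t) (by rw [mass_Jt]; simp) (h.massG hd) (mom_Jt_top M) h.momG q

lemma mom1F (t : ℝ) : mom 1 (M.F t) = ENNReal.ofReal (M.sigma^2) * mass (M.G t) + mom 1 (M.G t) := by
  rw [F_eq, mom_one_conv _ _ (G_even M t), mom_one_Jt, mass_Jt, one_mul]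

lemma Fmono {t z : ℝ} (h0 : 0 ≤ t) (h : t ≤ z) (hz : Ok M z) (x : V d) : M.F t x ≤ M.F z x :=
  conv_mono (fun _ => le_rfl) (fun y => M.mono y h0 h hz.2.le) x

lemma Fup {t z : ℝ} (h0 : 0 ≤ t) (h : t ≤ z) (hz : Ok M z) (x : V d) :
    M.F z x ≤ M.F t x + ENNReal.ofReal (z-t) * conv (M.F t) (M.F z) x := by
  have h1 : ∀ x, M.G z x ≤ M.G t x + ENNReal.ofReal (z-t) * conv (M.G t) (M.F z) x := by
    intro x
    have := M.I1 h0 h hz.2 x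
    rw [show (∑' p : (Fin d → ℤ) × (Fin d → ℤ),
        M.G t p.1 * ENNReal.ofReal (M.K.J p.2) * M.G z (x - p.1 - p.2)) =
        conv (M.G t) (conv (Jt M) (M.G z)) x from conv_double (M.G t) (Jt M) (M.G z) x] at this
    exact this
  have h2 := conv_add_le (Jt M) _ _ _ _ h1 x
  rw [← conv_assoc] at h2
  exact h2

lemma I2conv (hd : 0 < d) {t : ℝ} (h : Ok M t) (x : V d) :
    conv (M.G t) (conv (Jt M) (M.G t)) x ≤
      ENNReal.ofReal (M.G' t x) + conv (M.G t) (conv (Ht M t) (M.G t)) x := by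
  have htop : ∀ f : V d → ℝ≥0∞, mass f ≠ ⊤ → conv (M.G t) (conv f (M.G t)) x ≠ ⊤ := by
    intro f hf
    have h1 : mass (conv (M.G t) (conv f (M.G t))) ≠ ⊤ := by
      rw [mass_conv, mass_conv]
      exact ENNReal.mul_ne_top (h.massG hd) (ENNReal.mul_ne_top hf (h.massG hd))
    exact ne_top_of_mass h1 x
  have hA := htop (Jt M) (by rw [mass_Jt]; simp)
  have hB := htop (Ht M t) (h.massH hd)
  have h2 := M.I2 h.1 h.2 x
  have hA' := hA
  have hB' := hB
  rw [← conv_double] at hA hB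
  have sA := ENNReal.summable_toReal hA
  have sB := ENNReal.summable_toReal hB
  have e : ∀ p : V d × V d, (M.G t p.1).toReal * (M.K.J p.2 - M.H t p.2) * (M.G t (x - p.1 - p.2)).toReal
      = (M.G t p.1 * Jt M p.2 * M.G t (x - p.1 - p.2)).toReal - (M.G t p.1 * Ht M t p.2 * M.G t (x - p.1 - p.2)).toReal := by
    intro p
    simp only [ENNReal.toReal_mul, Jt, Ht, ENNReal.toReal_ofReal (M.K.nonneg _), ENNReal.toReal_ofReal (M.H_nonneg _ _)]
    ring
  rw [tsum_congr e, Summable.tsum_sub sA sB] at h2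
  rw [← ENNReal.tsum_toReal_eq (fun p => ENNReal.ne_top_of_tsum_ne_top hA p),
    ← ENNReal.tsum_toReal_eq (fun p => ENNReal.ne_top_of_tsum_ne_top hB p), conv_double, conv_double] at h2
  rw [← ENNReal.ofReal_toReal hA', ← ENNReal.ofReal_toReal hB']
  refine le_trans (ENNReal.ofReal_le_ofReal (sub_le_iff_le_add.mp h2)) ?_
  exact ENNReal.ofReal_add_le

lemma dini {t β : ℝ} (hβ : Ok M β) (ht : t ∈ Ico 0 β) (v : V d → ℝ) (hv : ∀ x, 0 ≤ v x)
    (hfin : ∀ z ∈ Icc 0 β, ∑' x, ENNReal.ofReal (v x) * M.G z x ≠ ⊤) (L : ℝ)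
    (hL : ENNReal.ofReal L < ∑' x, ENNReal.ofReal (v x) * ENNReal.ofReal (M.G' t x)) :
    ∀ᶠ z in 𝓝[>] t, L * (z-t) ≤ (∑' x, ENNReal.ofReal (v x) * M.G z x).toReal -
      (∑' x, ENNReal.ofReal (v x) * M.G t x).toReal := by
  have htm : t ∈ Icc 0 β := ⟨ht.1, ht.2.le⟩
  have hOk : Ok M t := hβ.mono ht.1 ht.2.le
  rw [ENNReal.tsum_eq_iSup_sum, lt_iSup_iff] at hL
  obtain ⟨S₀, hS₀⟩ := hL
  classical
  set S := S₀.filter (fun x => 0 < M.G' t x) with hS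
  have hLS : L < ∑ x ∈ S, v x * M.G' t x := by
    have e : ∑ x ∈ S₀, ENNReal.ofReal (v x) * ENNReal.ofReal (M.G' t x) =
        ENNReal.ofReal (∑ x ∈ S, v x * M.G' t x) := by
      rw [ENNReal.ofReal_sum_of_nonneg, hS, Finset.sum_filter]
      · refine Finset.sum_congr rfl fun x _ => ?_
        split_ifs with h
        · rw [ENNReal.ofReal_mul (hv x)]
        · rw [ENNReal.ofReal_of_nonpos (not_lt.mp h), mul_zero]
      · intro x hx
        exact mul_nonneg (hv x) (Finset.mem_filter.mp hx).2.le
    rw [e] at hS₀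
    exact (ENNReal.ofReal_lt_ofReal_iff'.mp hS₀).1
  have hder : HasDerivWithinAt (fun z => ∑ x ∈ S, v x * (M.G z x).toReal) (∑ x ∈ S, v x * M.G' t x) (Ioi t) t := by
    refine HasDerivWithinAt.fun_sum fun x _ => ?_
    refine HasDerivWithinAt.const_mul (v x) ?_
    exact (M.deriv x hOk.1 hOk.2).mono fun z hz => ht.1.trans (le_of_lt hz)
  rw [hasDerivWithinAt_iff_tendsto_slope' (by simp)] at hder
  filter_upwards [hder.eventually_const_lt hLS, ev_mem ht] with z h1 h2
  have h3 : 0 < z - t := sub_pos.mpr h2.1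
  rw [slope_def_field, lt_div_iff₀ h3] at h1
  refine h1.le.trans ?_
  have hzm : z ∈ Icc 0 β := ⟨ht.1.trans h2.1.le, h2.2⟩
  have fz := hfin z hzm
  have ft := hfin t htm
  rw [ENNReal.tsum_toReal_eq (fun p => ENNReal.ne_top_of_tsum_ne_top fz p),
    ENNReal.tsum_toReal_eq (fun p => ENNReal.ne_top_of_tsum_ne_top ft p),
    ← Summable.tsum_sub (ENNReal.summable_toReal fz) (ENNReal.summable_toReal ft), ← Finset.sum_sub_distrib]
  have hdiff : ∀ x, 0 ≤ (ENNReal.ofReal (v x) * M.G z x).toReal - (ENNReal.ofReal (v x) * M.G t x).toReal := by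
    intro x
    rw [sub_nonneg]
    exact ENNReal.toReal_mono (ENNReal.ne_top_of_tsum_ne_top fz x)
      (mul_le_mul' le_rfl (M.mono x ht.1 h2.1.le (hβ.mono hzm.1 h2.2).2.le))
  refine le_trans (le_of_eq ?_) (Summable.sum_le_tsum S (fun x _ => hdiff x)
    ((ENNReal.summable_toReal fz).sub (ENNReal.summable_toReal ft)))
  refine Finset.sum_congr rfl fun x _ => ?_
  simp [ENNReal.toReal_mul, ENNReal.toReal_ofReal (hv x)]

/-- variant of the lower derivative bound with the convolution inequality -/
lemma dini2 (hd : 0 < d) {t β : ℝ} (hβ : Ok M β) (ht : t ∈ Ico 0 β) (v : V d → ℝ) (hv : ∀ x, 0 ≤ v x)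
    (hfin : ∀ z ∈ Icc 0 β, ∑' x, ENNReal.ofReal (v x) * M.G z x ≠ ⊤) (L A B : ℝ)
    (hA0 : 0 ≤ A) (hB0 : 0 ≤ B)
    (hA : ENNReal.ofReal A ≤ ∑' x, ENNReal.ofReal (v x) * conv (M.G t) (conv (Jt M) (M.G t)) x)
    (hB : ∑' x, ENNReal.ofReal (v x) * conv (M.G t) (conv (Ht M t) (M.G t)) x ≤ ENNReal.ofReal B)
    (hL : L < A - B) :
    ∀ᶠ z in 𝓝[>] t, L * (z-t) ≤ (∑' x, ENNReal.ofReal (v x) * M.G z x).toReal -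
      (∑' x, ENNReal.ofReal (v x) * M.G t x).toReal := by
  have hOk : Ok M t := hβ.mono ht.1 ht.2.le
  rcases lt_or_ge L 0 with h0 | h0
  · filter_upwards [ev_mem ht] with z h2
    have hzm : z ∈ Icc 0 β := ⟨ht.1.trans h2.1.le, h2.2⟩
    have : (∑' x, ENNReal.ofReal (v x) * M.G t x).toReal ≤ (∑' x, ENNReal.ofReal (v x) * M.G z x).toReal := by
      refine ENNReal.toReal_mono (hfin z hzm) (ENNReal.tsum_le_tsum fun x => ?_)
      exact mul_le_mul' le_rfl (M.mono x ht.1 h2.1.le (hβ.mono hzm.1 h2.2).2.le)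
    nlinarith [h2.1]
  · refine dini hβ ht v hv hfin L ?_
    have h1 : ENNReal.ofReal A ≤ (∑' x, ENNReal.ofReal (v x) * ENNReal.ofReal (M.G' t x)) + ENNReal.ofReal B := by
      refine hA.trans (le_trans ?_ (add_le_add le_rfl hB))
      rw [← ENNReal.tsum_add]
      refine ENNReal.tsum_le_tsum fun x => ?_
      rw [← mul_add]
      exact mul_le_mul' le_rfl (I2conv hd hOk x)
    by_contra hcon
    push Not at hcon
    have h2 := h1.trans (add_le_add hcon le_rfl)
    rw [← ENNReal.ofReal_add h0 hB0, ENNReal.ofReal_le_ofReal_iff (by positivity)] at h2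
    linarith

variable (M) in
def Xr (t : ℝ) : ℝ := (mass (M.G t)).toReal
variable (M) in
def Mr (q : ℕ) (t : ℝ) : ℝ := (mom q (M.F t)).toReal

lemma Ok.X (hd : 0 < d) {t : ℝ} (h : Ok M t) : mass (M.G t) = ENNReal.ofReal (Xr M t) :=
  (ENNReal.ofReal_toReal (h.massG hd)).symm
lemma Ok.XF (hd : 0 < d) {t : ℝ} (h : Ok M t) : mass (M.F t) = ENNReal.ofReal (Xr M t) := by
  rw [massF, h.X hd]
lemma Ok.mM (hd : 0 < d) {t : ℝ} (h : Ok M t) (q : ℕ) : mom q (M.F t) = ENNReal.ofReal (Mr M q t) :=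
  (ENNReal.ofReal_toReal (h.momF hd q)).symm

lemma Xr_nonneg (t : ℝ) : 0 ≤ Xr M t := ENNReal.toReal_nonneg
lemma Mr_nonneg (q : ℕ) (t : ℝ) : 0 ≤ Mr M q t := ENNReal.toReal_nonneg

lemma Ok.X1 (hd : 0 < d) {t : ℝ} (h : Ok M t) : 1 ≤ Xr M t := by
  have := mass_mono (fun x => M.mono x le_rfl h.1 h.2.le)
  rw [G_zero, mass_delta, h.X hd, ENNReal.one_le_ofReal] at this
  exact this

lemma Ok.M1 (hd : 0 < d) {t : ℝ} (h : Ok M t) (q : ℕ) : 1 ≤ Mr M q t := by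
  have := (mom_Jt_ge M hd q).trans (F_zero M ▸ mom_mono (fun x => Fmono le_rfl h.1 h x) q)
  rwa [h.mM hd, ENNReal.one_le_ofReal] at this

lemma Ok.Mup (hd : 0 < d) {t z : ℝ} (h0 : 0 ≤ t) (htz : t ≤ z) (hz : Ok M z) (n : ℕ) :
    Mr M (n+1) z ≤ Mr M (n+1) t + (z-t) * (Mr M (n+1) t * Xr M z + Xr M t * Mr M (n+1) z +
      4^(n+1) * (Mr M n t * Mr M 1 z + Mr M 1 t * Mr M n z)) := by
  have ht : Ok M t := hz.mono h0 htz
  have h1 := mom_mono (fun x => Fup h0 htz hz x) (n+1)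
  rw [mom_add (M.F t) (fun x => ENNReal.ofReal (z-t) * conv (M.F t) (M.F z) x), mom_smul] at h1
  have h2 := h1.trans (add_le_add le_rfl (mul_le_mul' le_rfl (mom_conv (M.F t) (M.F z) (F_even M z) n)))
  simp only [hz.mM hd, ht.mM hd, hz.XF hd, ht.XF hd] at h2
  have a1 := Mr_nonneg (M := M) (n+1) t
  have a2 := Mr_nonneg (M := M) (n+1) z
  have a3 := Mr_nonneg (M := M) n t
  have a4 := Mr_nonneg (M := M) n z
  have a5 := Mr_nonneg (M := M) 1 t
  have a6 := Mr_nonneg (M := M) 1 z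
  have a7 := Xr_nonneg (M := M) t
  have a8 := Xr_nonneg (M := M) z
  have a9 : 0 ≤ z - t := by linarith
  have e4 : (4:ℝ≥0∞)^(n+1) = ENNReal.ofReal (4^(n+1)) := by
    rw [ENNReal.ofReal_pow (by norm_num)]; norm_num
  rw [e4, ← ENNReal.ofReal_mul a1, ← ENNReal.ofReal_mul a7, ← ENNReal.ofReal_mul a3, ← ENNReal.ofReal_mul a5,
    ← ENNReal.ofReal_add (by positivity) (by positivity), ← ENNReal.ofReal_add (by positivity) (by positivity),
    ← ENNReal.ofReal_mul (by positivity), ← ENNReal.ofReal_add (by positivity) (by positivity),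
    ← ENNReal.ofReal_mul (by positivity), ← ENNReal.ofReal_add (by positivity) (by positivity),
    ENNReal.ofReal_le_ofReal_iff (by positivity)] at h2
  exact h2

lemma Ok.Yup (hd : 0 < d) {t z : ℝ} (h0 : 0 ≤ t) (htz : t ≤ z) (hz : Ok M z) :
    Mr M 1 z ≤ Mr M 1 t + (z-t) * (Mr M 1 t * Xr M z + Xr M t * Mr M 1 z) := by
  have ht : Ok M t := hz.mono h0 htz
  have h2 := mom_mono (fun x => Fup h0 htz hz x) 1
  rw [mom_add (M.F t) (fun x => ENNReal.ofReal (z-t) * conv (M.F t) (M.F z) x), mom_smul,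
    mom_one_conv _ _ (F_even M z)] at h2
  simp only [hz.mM hd, ht.mM hd, hz.XF hd, ht.XF hd] at h2
  have a5 := Mr_nonneg (M := M) 1 t
  have a6 := Mr_nonneg (M := M) 1 z
  have a7 := Xr_nonneg (M := M) t
  have a8 := Xr_nonneg (M := M) z
  have a9 : 0 ≤ z - t := by linarith
  rw [← ENNReal.ofReal_mul a5, ← ENNReal.ofReal_mul a7, ← ENNReal.ofReal_add (by positivity) (by positivity),
    ← ENNReal.ofReal_mul (by positivity), ← ENNReal.ofReal_add (by positivity) (by positivity),
    ENNReal.ofReal_le_ofReal_iff (by positivity)] at h2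
  exact h2

lemma Ok.Xup (hd : 0 < d) {t z : ℝ} (h0 : 0 ≤ t) (htz : t ≤ z) (hz : Ok M z) :
    Xr M z ≤ Xr M t + (z-t) * (Xr M t * Xr M z) := by
  have ht : Ok M t := hz.mono h0 htz
  have h2 := mass_mono (fun x => Fup h0 htz hz x)
  rw [mass_add (M.F t) (fun x => ENNReal.ofReal (z-t) * conv (M.F t) (M.F z) x), mass_smul,
    mass_conv] at h2
  simp only [hz.XF hd, ht.XF hd] at h2
  have a7 := Xr_nonneg (M := M) t
  have a8 := Xr_nonneg (M := M) z
  have a9 : 0 ≤ z - t := by linarith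
  rw [← ENNReal.ofReal_mul a7,
    ← ENNReal.ofReal_mul (by positivity), ← ENNReal.ofReal_add (by positivity) (by positivity),
    ENNReal.ofReal_le_ofReal_iff (by positivity)] at h2
  exact h2

lemma Ok.Mmono (hd : 0 < d) {β : ℝ} (h : Ok M β) (q : ℕ) : MonotoneOn (Mr M q) (Icc 0 β) :=
  fun t ht z hz htz => ENNReal.toReal_mono ((h.mono hz.1 hz.2).momF hd q)
    (mom_mono (fun x => Fmono ht.1 htz (h.mono hz.1 hz.2) x) q)

lemma Ok.Xmono (hd : 0 < d) {β : ℝ} (h : Ok M β) : MonotoneOn (Xr M) (Icc 0 β) :=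
  fun t ht z hz htz => ENNReal.toReal_mono ((h.mono hz.1 hz.2).massG hd)
    (mass_mono (fun x => M.mono x ht.1 htz (h.mono hz.1 hz.2).2.le))

lemma Ok.flow (hd : 0 < d) {β δ : ℝ} (h : Ok M β) (hδ : 0 ≤ δ)
    (h0 : ∀ t ∈ Icc 0 β, mass (Ht M t) ≤ ENNReal.ofReal δ)
    (h2 : ∀ t ∈ Icc 0 β, mom 1 (Ht M t) ≤ ENNReal.ofReal (δ * (Mr M 1 t / Xr M t))) :
    Flow β δ (Xr M) (Mr M 1) where
  X1 := fun t ht => (h.mono ht.1 ht.2).X1 hd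
  Y1 := fun t ht => (h.mono ht.1 ht.2).M1 hd 1
  Xmono := h.Xmono hd
  Ymono := h.Mmono hd 1
  Xup := fun t z a b c => Ok.Xup hd a b (h.mono (a.trans b) c)
  Yup := fun t z a b c => Ok.Yup hd a b (h.mono (a.trans b) c)
  Xlow := by
    intro t ht L hL
    have hOk : Ok M t := h.mono ht.1 ht.2.le
    have e : ∀ f : V d → ℝ≥0∞, ∑' x, ENNReal.ofReal ((fun _ => 1 : V d → ℝ) x) * f x = mass f := by
      intro f; simp [mass]
    have hX := Xr_nonneg (M := M) t
    have := dini2 hd h ht (fun _ => 1) (fun _ => zero_le_one) (fun z hz => by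
      rw [e]; exact (h.mono hz.1 hz.2).massG hd) L (Xr M t^2) (δ * Xr M t^2) (by positivity) (by positivity)
      (by
        rw [e, mass_conv, mass_conv, mass_Jt, one_mul, hOk.X hd, ← ENNReal.ofReal_mul hX, sq])
      (by
        rw [e, mass_conv, mass_conv, hOk.X hd]
        refine (mul_le_mul' le_rfl (mul_le_mul' (h0 t ⟨ht.1, ht.2.le⟩) le_rfl)).trans ?_
        rw [← ENNReal.ofReal_mul hδ, ← ENNReal.ofReal_mul hX]
        exact ENNReal.ofReal_le_ofReal (le_of_eq (by ring)))
      (by linarith)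
    simp only [e] at this
    exact this
  Ylow := by
    intro t ht L hL
    have htm : t ∈ Icc 0 β := ⟨ht.1, ht.2.le⟩
    have hOk : Ok M t := h.mono ht.1 ht.2.le
    have e : ∀ f : V d → ℝ≥0∞, ∑' x, ENNReal.ofReal ((fun x => pw 1 x + M.sigma^2 : V d → ℝ) x) * f x =
        ENNReal.ofReal (M.sigma^2) * mass f + mom 1 f := by
      intro f
      simp only [mass, mom]
      rw [← ENNReal.tsum_mul_left, ← ENNReal.tsum_add]
      refine tsum_congr fun x => ?_
      rw [ENNReal.ofReal_add (pw_nonneg _ _) (by positivity)]; ring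
    have e2 : ∀ z, ∑' x, ENNReal.ofReal ((fun x => pw 1 x + M.sigma^2 : V d → ℝ) x) * M.G z x = mom 1 (M.F z) := by
      intro z; rw [e, mom1F]
    have hX1 := hOk.X1 hd
    have hX : 0 < Xr M t := by linarith
    have hY := Mr_nonneg (M := M) 1 t
    have hg : mom 1 (M.G t) = ENNReal.ofReal (mom 1 (M.G t)).toReal := (ENNReal.ofReal_toReal (hOk.momG 1)).symm
    set g := (mom 1 (M.G t)).toReal with hgdef
    have hg0 : 0 ≤ g := ENNReal.toReal_nonneg
    have hYe : Mr M 1 t = M.sigma^2 * Xr M t + g := by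
      have := mom1F (M := M) t
      rw [hOk.mM hd, hOk.X hd, hg, ← ENNReal.ofReal_mul (by positivity), ← ENNReal.ofReal_add (by positivity) hg0,
        ENNReal.ofReal_eq_ofReal_iff hY (by positivity)] at this
      exact this
    have hs : 0 ≤ M.sigma^2 := by positivity
    have := dini2 hd h ht (fun x => pw 1 x + M.sigma^2) (fun x => add_nonneg (pw_nonneg _ _) (by positivity))
      (fun z hz => by rw [e2]; exact (h.mono hz.1 hz.2).momF hd 1) L (2 * (Xr M t * Mr M 1 t)) (3*δ*(Xr M t * Mr M 1 t))
      (by positivity) (by positivity)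
      (by
        rw [e, mom_one_conv _ _ (conv_even (Jt_even M) (G_even M t)), mass_conv, mass_conv,
          mom_one_conv _ _ (G_even M t), mom_one_Jt, mass_Jt, one_mul, one_mul, hOk.X hd, hg,
          ← ENNReal.ofReal_mul hX.le, ← ENNReal.ofReal_mul hs, ← ENNReal.ofReal_mul hg0, ← ENNReal.ofReal_mul hs,
          ← ENNReal.ofReal_add (by positivity) (by positivity), ← ENNReal.ofReal_mul (by positivity),
          ← ENNReal.ofReal_add (by positivity) (by positivity), ← ENNReal.ofReal_add (by positivity) (by positivity)]
        refine ENNReal.ofReal_le_ofReal (le_of_eq ?_)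
        rw [hYe]; ring)
      (by
        have hHe : ∀ x, Ht M t (-x) = Ht M t x := fun x => by simp [Ht, M.H_symm]
        rw [e, mom_one_conv _ _ (conv_even hHe (G_even M t)), mass_conv, mass_conv,
          mom_one_conv _ _ (G_even M t), hOk.X hd, hg]
        have b0 := h0 t htm
        have b2 := h2 t htm
        calc _ ≤ ENNReal.ofReal (M.sigma^2) * (ENNReal.ofReal (Xr M t) * (ENNReal.ofReal δ * ENNReal.ofReal (Xr M t))) +
            (ENNReal.ofReal g * (ENNReal.ofReal δ * ENNReal.ofReal (Xr M t)) + ENNReal.ofReal (Xr M t) *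
            (ENNReal.ofReal (δ * (Mr M 1 t / Xr M t)) * ENNReal.ofReal (Xr M t) + ENNReal.ofReal δ * ENNReal.ofReal g)) := by
              gcongr
          _ = ENNReal.ofReal (M.sigma^2 * (Xr M t * (δ * Xr M t)) + (g * (δ * Xr M t) + Xr M t *
              (δ * (Mr M 1 t / Xr M t) * Xr M t + δ * g))) := by
            have : 0 ≤ Mr M 1 t / Xr M t := by positivity
            repeat rw [ENNReal.ofReal_add (by positivity) (by positivity)]
            repeat rw [ENNReal.ofReal_mul (by positivity)]
            repeat rw [ENNReal.ofReal_add (by positivity) (by positivity)]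
            repeat rw [ENNReal.ofReal_mul (by positivity)]
          _ ≤ _ := by
            refine ENNReal.ofReal_le_ofReal ?_
            have : δ * (Mr M 1 t / Xr M t) * Xr M t = δ * Mr M 1 t := by field_simp
            rw [this]
            have hle : 0 ≤ δ * (Xr M t * (M.sigma^2 * Xr M t)) := by positivity
            rw [hYe]
            nlinarith)
      (by linarith)
    simp only [e2] at this
    exact this

end
end S18

namespace S18
set_option linter.unusedVariables false
open Set Filter Topology
variable {d : ℕ}

structure Sys (κ : ℕ → ℝ) (β δ : ℝ) (F : ℝ → V d → ℝ≥0∞) (X r : ℝ → ℝ) : Prop where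
  symm : ∀ t, IsSymmFun (F t)
  mass : ∀ t ∈ Icc 0 β, mass (F t) = ENNReal.ofReal (X t)
  mom1 : ∀ t ∈ Icc 0 β, mom 1 (F t) = ENNReal.ofReal (X t * r t^2)
  momq : ∀ t ∈ Icc 0 β, ∀ q ≤ 2*d, mom q (F t) ≤ ENNReal.ofReal (κ q * (X t * r t^(2*q)))
  X1 : ∀ t ∈ Icc 0 β, 1 ≤ X t
  r1 : ∀ t ∈ Icc 0 β, 1 ≤ r t
  rc : ContinuousOn r (Icc 0 β)
  rmono : MonotoneOn r (Icc 0 β)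
  Xmono : MonotoneOn X (Icc 0 β)
  recur : ∀ t z, 0 ≤ t → t ≤ z → z ≤ β → ∀ x, F z x ≤ F t x + ENNReal.ofReal (z-t) * conv (F t) (F z) x
  tau : ∀ t z, 0 ≤ t → t ≤ z → z ≤ β → (1-δ) * ((z-t) * X t) ≤ 1
  ratio : ∀ t z, 0 ≤ t → t ≤ z → z ≤ β → (1-3*δ) * (Real.log (X z) - Real.log (X t)) ≤
    2 * (Real.log (r z) - Real.log (r t))
  X0 : X 0 = 1

def kap (d : ℕ) (c₀ : ℝ) : ℕ → ℝ
  | 0 => d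
  | 1 => 1
  | q+2 => 8*4^(q+2)*kap d c₀ (q+1) + d * (c₀⁻¹)^(2*(q+2))

lemma kap_ge (hd : 0 < d) {c₀ : ℝ} (hc : 0 < c₀) : ∀ q, 1 ≤ kap d c₀ q
  | 0 => by simp only [kap]; exact_mod_cast hd
  | 1 => by simp [kap]
  | q+2 => by
    have h := kap_ge hd hc (q+1)
    have h2 : (1:ℝ) ≤ 4^(q+2) := one_le_pow₀ (by norm_num)
    have h3 : 0 ≤ d * (c₀⁻¹)^(2*(q+2)) := by positivity
    simp only [kap]
    nlinarith

section
variable {c₀ : ℝ} {M : Model d c₀}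

lemma xiSq_eq (hd : 0 < d) {t : ℝ} (h : Ok M t) : M.xiSq t = ENNReal.ofReal (Mr M 1 t / Xr M t) := by
  have hX := h.X1 hd
  have e1 : (∑' x, ENNReal.ofReal (sqNorm x) * M.F t x) = mom 1 (M.F t) := by
    unfold mom; simp only [pw_one]
  have e2 : M.chi t = mass (M.G t) := rfl
  unfold Model.xiSq
  rw [e1, e2, h.mM hd, h.X hd, ENNReal.ofReal_div_of_pos (by linarith)]

lemma xi_sq (hd : 0 < d) {t : ℝ} (h : Ok M t) : M.xi t^2 = Mr M 1 t / Xr M t := by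
  have hX := h.X1 hd
  have hY := h.M1 hd 1
  have : 0 ≤ Mr M 1 t / Xr M t := div_nonneg (by linarith) (by linarith)
  unfold Model.xi
  rw [xiSq_eq hd h, ENNReal.toReal_ofReal this, Real.sq_sqrt this]

lemma xi_nonneg (t : ℝ) : 0 ≤ M.xi t := Real.sqrt_nonneg _

lemma Ok.zero : Ok M 0 := ⟨le_rfl, by simpa using M.βc_pos⟩

lemma Xr_zero : Xr M 0 = 1 := by unfold Xr; rw [G_zero, mass_delta]; rfl

lemma xi_zero (hd : 0 < d) : M.xi 0 = M.sigma := by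
  have h := xi_sq hd (Ok.zero (M := M))
  have h2 : Mr M 1 0 = M.sigma^2 := by
    unfold Mr
    rw [F_zero, mom_one_Jt, ENNReal.toReal_ofReal (by positivity)]
  rw [Xr_zero, h2, div_one] at h
  exact (pow_left_inj₀ (xi_nonneg 0) (sigma_nonneg M) (by norm_num)).mp h

lemma betaOf_spec (hd : 0 < d) {β δ : ℝ} (hδ : 0 ≤ δ) (h0 : 0 ≤ β) (h : β < M.betaOf δ) : Ok M β ∧ Flow β δ (Xr M) (Mr M 1) := by
  unfold Model.betaOf at h
  have hne : {β : ℝ | 0 ≤ β ∧ ENNReal.ofReal β < M.βc ∧ M.E β < ENNReal.ofReal δ}.Nonempty := by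
    rw [Set.nonempty_iff_ne_empty]
    intro e
    rw [e, Real.sSup_empty] at h
    linarith
  obtain ⟨b, ⟨hb0, hbc, hbE⟩, hb⟩ := exists_lt_of_lt_csSup hne h
  have hOkb : Ok M b := ⟨hb0, hbc⟩
  have hOk : Ok M β := hOkb.mono h0 hb.le
  refine ⟨hOk, ?_⟩
  have key : ∀ t ∈ Icc 0 β, mass (Ht M t) ≤ ENNReal.ofReal δ ∧
      mom 1 (Ht M t) ≤ ENNReal.ofReal (δ * (Mr M 1 t / Xr M t)) := by
    intro t ht
    have hOt := hOk.mono ht.1 ht.2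
    have h1 : ENNReal.ofReal (∑' x, M.H t x) +
      ENNReal.ofReal (∑' x, sqNorm x * M.H t x) / M.xiSq t ≤ M.E b :=
      le_iSup₂ (f := fun t (_ : t ∈ Set.Icc (0 : ℝ) b) => ENNReal.ofReal (∑' x, M.H t x) +
      ENNReal.ofReal (∑' x, sqNorm x * M.H t x) / M.xiSq t) t ⟨ht.1, ht.2.trans hb.le⟩
    have h2 := h1.trans hbE.le
    have s0 : Summable (M.H t) := by
      have := ENNReal.summable_toReal (hOt.massH hd)
      simpa [Ht, ENNReal.toReal_ofReal (M.H_nonneg t _)] using this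
    have nn1 : ∀ x, 0 ≤ sqNorm x * M.H t x := fun x => mul_nonneg (sqNorm_nonneg x) (M.H_nonneg t x)
    have s1 : Summable (fun x => sqNorm x * M.H t x) := by
      have := ENNReal.summable_toReal (hOt.momH 1)
      simpa [Ht, pw_one, ENNReal.toReal_mul, ENNReal.toReal_ofReal (M.H_nonneg t _), ENNReal.toReal_ofReal (sqNorm_nonneg _)] using this
    have e0 : mass (Ht M t) = ENNReal.ofReal (∑' x, M.H t x) := by
      rw [ENNReal.ofReal_tsum_of_nonneg (M.H_nonneg t) s0]; rfl
    have e1 : mom 1 (Ht M t) = ENNReal.ofReal (∑' x, sqNorm x * M.H t x) := by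
      rw [ENNReal.ofReal_tsum_of_nonneg nn1 s1]
      refine tsum_congr fun x => ?_
      rw [pw_one, ENNReal.ofReal_mul (sqNorm_nonneg x)]; rfl
    rw [← e0, ← e1, xiSq_eq hd hOt] at h2
    have hX := hOt.X1 hd
    have hY := hOt.M1 hd 1
    have hp : 0 < Mr M 1 t / Xr M t := div_pos (by linarith) (by linarith)
    refine ⟨le_trans le_self_add h2, ?_⟩
    have h3 := le_trans le_add_self h2
    rw [ENNReal.div_le_iff (by simpa using hp) ENNReal.ofReal_ne_top, ← ENNReal.ofReal_mul hδ] at h3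
    exact h3
  exact hOk.flow hd hδ (fun t ht => (key t ht).1) (fun t ht => (key t ht).2)

lemma R_le (hc : 0 < c₀) : M.K.R ≤ c₀⁻¹ * M.sigma := by
  have h : c₀ * M.K.R ≤ M.sigma := M.K.sigma_lower
  rw [inv_mul_eq_div, le_div_iff₀ hc]; linarith

lemma moments (hd : 0 < d) (hc : 0 < c₀) {β δ : ℝ} (hOk : Ok M β) (hδ : 0 ≤ δ) (h : Flow β δ (Xr M) (Mr M 1)) (j : ℕ)
    (hj : 3*((j:ℝ)+1)*δ ≤ 1/4) : ContinuousOn (Mr M (j+1)) (Icc 0 β) ∧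
    ∀ t ∈ Icc 0 β, Mr M (j+1) t * Xr M t^j ≤ kap d c₀ (j+1) * Mr M 1 t^(j+1) := by
  induction j with
  | zero =>
    refine ⟨h.Ycont, fun t ht => ?_⟩
    simp [kap]
  | succ j ih =>
    have ih' := ih (by push_cast at hj; nlinarith)
    refine h.moment_step hδ j (by push_cast at hj; linarith) (Mr M (j+2)) (Mr M (j+1))
      (fun t ht => by linarith [(hOk.mono ht.1 ht.2).M1 hd (j+2)])
      (fun t ht => Mr_nonneg _ _) (hOk.Mmono hd _) ih'.1 (hOk.Mmono hd _) ?_ (kap d c₀ (j+1)) _ ih'.2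
      (by linarith [kap_ge hd hc (j+1)]) ?_ ?_
    · intro t z h0 htz hz
      exact Ok.Mup hd h0 htz (hOk.mono (h0.trans htz) hz) (j+1)
    · simp only [kap]
      have : 0 ≤ d * (c₀⁻¹)^(2*(j+2)) := by positivity
      linarith
    · have hsig : Mr M 1 0 = M.sigma^2 := by
        unfold Mr
        rw [F_zero, mom_one_Jt, ENNReal.toReal_ofReal (by positivity)]
      have hR := M.K.R_ge_one
      have hM : Mr M (j+2) 0 ≤ d * M.K.R^(2*(j+2)) := by
        unfold Mr
        rw [F_zero]
        exact ENNReal.toReal_le_of_le_ofReal (by positivity) (mom_Jt_le M (j+2))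
      rw [Xr_zero, hsig, one_pow, mul_one]
      refine hM.trans ?_
      have hRs := R_le (M := M) hc
      have hs := sigma_nonneg M
      have hk := kap_ge hd hc (j+1)
      calc d * M.K.R^(2*(j+2)) ≤ d * (c₀⁻¹ * M.sigma)^(2*(j+2)) := by gcongr
        _ = (d * c₀⁻¹^(2*(j+2))) * (M.sigma^2)^(j+2) := by rw [mul_pow, ← pow_mul]; ring
        _ ≤ _ := by
          gcongr
          simp only [kap]
          have : 0 ≤ 8*4^(j+2)*kap d c₀ (j+1) := by positivity
          linarith

lemma sys_of (hd : 0 < d) (hc : 0 < c₀) {β δ : ℝ} (hδ : 0 ≤ δ) (hδ2 : 24*d*δ ≤ 1) (h0 : 0 ≤ β) (h : β < M.betaOf δ) :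
    Sys (kap d c₀) β δ M.F (Xr M) M.xi := by
  obtain ⟨hOk, hF⟩ := betaOf_spec hd hδ h0 h
  have hd1 : (1:ℝ) ≤ d := by exact_mod_cast hd
  have hδ3 : 24 * δ ≤ 1 := by nlinarith
  have hX0 : ∀ t ∈ Icc 0 β, 0 < Xr M t := fun t ht => by linarith [hF.X1 t ht]
  have hY0 : ∀ t ∈ Icc 0 β, 0 < Mr M 1 t := fun t ht => by linarith [hF.Y1 t ht]
  have hsq : ∀ t ∈ Icc 0 β, M.xi t^2 = Mr M 1 t / Xr M t := fun t ht => xi_sq hd (hOk.mono ht.1 ht.2)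
  have hxp : ∀ t ∈ Icc 0 β, 0 < M.xi t := by
    intro t ht
    have : 0 < M.xi t^2 := by rw [hsq t ht]; exact div_pos (hY0 t ht) (hX0 t ht)
    exact (xi_nonneg t).lt_of_ne' (by rintro e; simp [e] at this)
  have hratio : ∀ t z, 0 ≤ t → t ≤ z → z ≤ β → (1-3*δ) * (Real.log (Xr M z) - Real.log (Xr M t)) ≤
      2 * (Real.log (M.xi z) - Real.log (M.xi t)) := by
    intro t z h0 htz hz
    have ht : t ∈ Icc 0 β := ⟨h0, htz.trans hz⟩
    have hz' : z ∈ Icc 0 β := ⟨h0.trans htz, hz⟩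
    have e : ∀ s ∈ Icc 0 β, 2 * Real.log (M.xi s) = Real.log (Mr M 1 s) - Real.log (Xr M s) := by
      intro s hs
      rw [← Real.log_div (hY0 s hs).ne' (hX0 s hs).ne', ← hsq s hs, Real.log_pow]; norm_num
    have := hF.log_bound (by linarith) h0 htz hz
    have e1 := e t ht
    have e2 := e z hz'
    linarith
  have hmono : MonotoneOn M.xi (Icc 0 β) := by
    intro t ht z hz htz
    have h1 := hratio t z ht.1 htz hz.2
    have h2 : Real.log (Xr M t) ≤ Real.log (Xr M z) := Real.log_le_log (hX0 t ht) (hF.Xmono ht hz htz)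
    have h3 : 0 ≤ (1-3*δ) * (Real.log (Xr M z) - Real.log (Xr M t)) := mul_nonneg (by linarith) (by linarith)
    exact (Real.log_le_log_iff (hxp t ht) (hxp z hz)).mp (by linarith)
  refine ⟨fun t => F_symm M t, fun t ht => (hOk.mono ht.1 ht.2).XF hd, ?_, ?_, hF.X1, ?_, ?_, hmono, hF.Xmono, ?_, ?_, hratio, Xr_zero⟩
  · intro t ht
    rw [hsq t ht, (hOk.mono ht.1 ht.2).mM hd, mul_div_cancel₀ _ (hX0 t ht).ne']
  · intro t ht q hq
    have hOt := hOk.mono ht.1 ht.2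
    have hX := hX0 t ht
    rcases q with _ | j
    · rw [mom_zero, hOt.XF hd]
      simp [kap, ENNReal.ofReal_mul]
    · rw [hOt.mM hd]
      refine ENNReal.ofReal_le_ofReal ?_
      have hjd : ((j:ℝ)+1) ≤ 2*d := by exact_mod_cast hq
      have := (moments hd hc hOk hδ hF j (by nlinarith)).2 t ht
      rw [pow_mul, hsq t ht, div_pow]
      have e : kap d c₀ (j+1) * (Xr M t * (Mr M 1 t ^(j+1) / Xr M t^(j+1))) = kap d c₀ (j+1) * Mr M 1 t ^(j+1) / Xr M t^j := by
        field_simp; ring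
      rw [e, le_div_iff₀ (by positivity)]
      exact this
  · intro t ht
    have h1 := hmono ⟨le_rfl, h0⟩ ht ht.1
    rw [xi_zero hd] at h1
    exact (sigma_ge_one M hd).trans h1
  · have : ContinuousOn (fun t => Real.sqrt (Mr M 1 t / Xr M t)) (Icc 0 β) :=
      (hF.Ycont.div hF.Xcont fun t ht => (hX0 t ht).ne').sqrt
    refine this.congr fun t ht => ?_
    simp only
    rw [← hsq t ht, Real.sqrt_sq (xi_nonneg t)]
  · intro t z a b c x
    exact Fup a b (hOk.mono (a.trans b) c) x
  · intro t z a b c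
    have h1 := hF.inv_bound a b c
    have hX := hX0 t ⟨a, b.trans c⟩
    have h2 : 0 < 1 / Xr M z := div_pos one_pos (hX0 z ⟨a.trans b, c⟩)
    have h3 : (1-δ)*(z-t) ≤ 1 / Xr M t := by linarith
    rw [le_div_iff₀ hX] at h3
    linarith

/-- pointwise bound on the kernel -/
lemma Jt_bound (hd : 0 < d) (hc : 0 < c₀) (hc1 : c₀ ≤ 1) (x : V d) :
    Jt M x ≤ ENNReal.ofReal (c₀⁻¹ * d^d * (2*c₀⁻¹)^(4*d) / M.sigma^d * ((1 + supNorm x / M.sigma)^(4*d))⁻¹) := by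
  unfold Jt
  have hn := supNorm_nonneg x
  have hs := sigma_ge_one M hd
  have hR := M.K.R_ge_one
  refine ENNReal.ofReal_le_ofReal ?_
  rcases (M.K.nonneg x).eq_or_lt with h | h
  · rw [← h]; positivity
  have h1 := M.K.range_le x h
  have h2 := M.K.J_upper x
  have h3 := R_le (M := M) hc
  have hci : 1 ≤ c₀⁻¹ := (one_le_inv₀ hc).mpr hc1
  have hsR : M.sigma ≤ d * M.K.R := by
    have h4 := mom_Jt_le M 1
    have hd1 : (1:ℝ) ≤ d := by exact_mod_cast hd
    rw [mom_one_Jt, ENNReal.ofReal_le_ofReal_iff (by positivity)] at h4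
    refine le_of_sq_le_sq ?_ (by positivity)
    calc M.sigma^2 ≤ d * M.K.R^(2*1) := h4
      _ ≤ (d * d) * M.K.R^(2*1) := by gcongr; nlinarith
      _ = _ := by ring
  have hw : (1 + supNorm x / M.sigma) ≤ 2 * c₀⁻¹ := by
    have : supNorm x / M.sigma ≤ c₀⁻¹ := by rw [div_le_iff₀ (by linarith)]; linarith
    linarith
  calc M.K.J x ≤ c₀⁻¹ / M.K.R^d := h2
    _ ≤ c₀⁻¹ * d^d / M.sigma^d := by
      rw [div_le_div_iff₀ (by positivity) (by positivity)]
      calc c₀⁻¹ * M.sigma^d ≤ c₀⁻¹ * (d * M.K.R)^d := by gcongr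
        _ = _ := by rw [mul_pow]; ring
    _ = c₀⁻¹ * d^d / M.sigma^d * 1 := by ring
    _ ≤ c₀⁻¹ * d^d / M.sigma^d * ((2*c₀⁻¹)^(4*d) * ((1 + supNorm x / M.sigma)^(4*d))⁻¹) := by
      gcongr
      rw [← div_eq_mul_inv, one_le_div (by positivity)]
      gcongr
    _ = _ := by ring

end
end S18

namespace S18
set_option linter.unusedVariables false
open Set Filter Topology
variable {d : ℕ}

lemma iterate_le (A P F : V d → ℝ≥0∞) (c : ℝ≥0∞) (h : ∀ x, F x ≤ A x + c * conv P F x) (n : ℕ) (x : V d) :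
    F x ≤ (∑ i ∈ Finset.range n, c^i * conv (cpow P i) A x) + c^n * conv (cpow P n) F x := by
  induction n with
  | zero => simp [cpow, delta_conv]
  | succ n ih =>
    refine ih.trans ?_
    rw [Finset.sum_range_succ, add_assoc]
    refine add_le_add le_rfl ?_
    have h1 := conv_add_le (cpow P n) _ _ _ _ h x
    rw [← conv_assoc, conv_comm (cpow P n) P] at h1
    refine (mul_le_mul' le_rfl h1).trans ?_
    rw [mul_add, pow_succ, ← mul_assoc]
    rfl

lemma conv_sum_left {ι : Type*} (s : Finset ι) (f : ι → V d → ℝ≥0∞) (g : V d → ℝ≥0∞) (x : V d) :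
    conv (fun y => ∑ i ∈ s, f i y) g x = ∑ i ∈ s, conv (f i) g x := by
  classical
  induction s using Finset.induction_on with
  | empty => simp [conv]
  | insert a s ha ih =>
    simp only [Finset.sum_insert ha]
    have h := congrFun (conv_add_left g (f a) (fun y => ∑ i ∈ s, f i y)) x
    refine h.trans ?_
    show _ + _ = _
    rw [ih]

lemma rpow_scale (u s μ a : ℝ) (hu : 0 ≤ u) (hs : 0 < s) (hμ : 1 ≤ μ) (ha : 0 ≤ a) :
    (1 + u/(μ*s))^(-a) ≤ μ^a * (1+u/s)^(-a) := by
  have h1 : 0 ≤ u/s := by positivity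
  have hμ0 : 0 < μ := by linarith
  have h2 : (1+u/s) ≤ μ * (1 + u/(μ*s)) := by
    have : μ * (1 + u/(μ*s)) = μ + u/s := by field_simp
    linarith
  have h3 : 0 < 1 + u/(μ*s) := by positivity
  have h4 : (1+u/s)^a ≤ μ^a * (1 + u/(μ*s))^a := by
    rw [← Real.mul_rpow hμ0.le h3.le]
    exact Real.rpow_le_rpow (by positivity) h2 ha
  rw [Real.rpow_neg h3.le, Real.rpow_neg (by positivity), ← div_eq_mul_inv, le_div_iff₀ (by positivity),
    inv_mul_le_iff₀ (by positivity)]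
  linarith

lemma pow_inv_le_rpow (v a : ℝ) (hv : 0 ≤ v) (N : ℕ) (ha : a ≤ N) : ((1+v)^N)⁻¹ ≤ (1+v)^(-a) := by
  rw [← Real.rpow_natCast, ← Real.rpow_neg (by positivity)]
  exact Real.rpow_le_rpow_of_exponent_le (by linarith) (by linarith)

lemma box_mono {s t : ℝ} (h : s ≤ t) (x : V d) : box s x ≤ box t x := by
  unfold box
  split_ifs with h1 h2
  · exact le_rfl
  · exact absurd (h1.trans h) h2
  · exact zero_le_one
  · exact le_rfl

lemma KD_pos (hd : 0 < d) (κ : ℕ → ℝ) (hκ : ∀ q, 1 ≤ κ q) : 0 < KD d κ := by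
  have h := Kmom_nonneg (d := d) κ (fun q => by linarith [hκ q]) (2*d)
  have h2 := hκ 2
  have hd' : (0:ℝ) < d := by exact_mod_cast hd
  unfold KD KA
  positivity

namespace Sys
variable {κ : ℕ → ℝ} {β δ : ℝ} {F : ℝ → V d → ℝ≥0∞} {X r : ℝ → ℝ}

/-- normalised step -/
def PP (F : ℝ → V d → ℝ≥0∞) (X : ℝ → ℝ) (t : ℝ) : V d → ℝ≥0∞ := fun x => ENNReal.ofReal (X t)⁻¹ * F t x

lemma F_PP (S : Sys κ β δ F X r) {t : ℝ} (ht : t ∈ Icc 0 β) (x : V d) :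
    F t x = ENNReal.ofReal (X t) * PP F X t x := by
  have h := S.X1 t ht
  unfold PP
  rw [← mul_assoc, ← ENNReal.ofReal_mul (by linarith), mul_inv_cancel₀ (by linarith), ENNReal.ofReal_one, one_mul]

lemma PP_decay (S : Sys κ β δ F X r) (hd : 0 < d) (hκ : ∀ q, 1 ≤ κ q) {t : ℝ} (ht : t ∈ Icc 0 β) (k : ℕ) (x : V d) :
    conv (cpow (PP F X t) k) (box (r t)) x ≤
      ENNReal.ofReal (KD d κ / (Real.sqrt (k+1))^d * ((1 + supNorm x / (Real.sqrt (k+1) * r t))^(4*d))⁻¹) := by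
  have hX := S.X1 t ht
  have hX0 : 0 < X t := by linarith
  have hr := S.r1 t ht
  refine decay hd κ hκ (PP F X t) (r t) ?_ ?_ (by linarith) ?_ ?_ k x
  · intro π e x; unfold PP; rw [S.symm t π e x]
  · unfold PP
    rw [mass_smul, S.mass t ht, ← ENNReal.ofReal_mul (by positivity), inv_mul_cancel₀ hX0.ne', ENNReal.ofReal_one]
  · unfold PP
    rw [mom_smul, S.mom1 t ht, ← ENNReal.ofReal_mul (by positivity), inv_mul_cancel_left₀ hX0.ne']
  · intro q hq
    unfold PP
    rw [mom_smul]
    refine (mul_le_mul' le_rfl (S.momq t ht q hq)).trans ?_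
    rw [← ENNReal.ofReal_mul (by positivity)]
    refine ENNReal.ofReal_le_ofReal (le_of_eq ?_)
    field_simp

lemma expand (S : Sys κ β δ F X r) (hδ : 0 ≤ δ) (hδ2 : δ ≤ 1/2) (n : ℕ) (hn : n * δ ≤ 1/2) {t : ℝ} (ht : t ∈ Icc 0 β)
    (B : V d → ℝ≥0∞) (x : V d) :
    conv (F β) B x ≤ (∑ i ∈ Finset.range n, ENNReal.ofReal (2 * X t) * conv (cpow (PP F X t) (i+1)) B x) +
      ENNReal.ofReal 2 * conv (F β) (conv (cpow (PP F X t) n) B) x := by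
  have hX := S.X1 t ht
  have hX0 : 0 < X t := by linarith
  obtain ⟨q, hq⟩ : ∃ q : ℝ, q = (β - t) * X t := ⟨_, rfl⟩
  have hq0 : 0 ≤ q := hq ▸ mul_nonneg (by linarith [ht.2]) hX0.le
  have hq1 := S.tau t β ht.1 ht.2 le_rfl
  rw [← hq] at hq1
  have hqi : ∀ i ≤ n, q^i ≤ 2 := by
    intro i hi
    have h1 : (1-δ)^i * q^i ≤ 1 := by
      rw [← mul_pow]; exact pow_le_one₀ (mul_nonneg (by linarith) hq0) hq1
    have h2 : 1 + (i:ℝ) * (-δ) ≤ (1 + -δ)^i := one_add_mul_le_pow (by linarith) i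
    have h3 : (i:ℝ) * δ ≤ 1/2 := le_trans (by gcongr) hn
    have h4 : 1/2 ≤ (1-δ)^i := by rw [← sub_eq_add_neg] at h2; linarith
    nlinarith [pow_nonneg hq0 i]
  have hqi' : ∀ i ≤ n, (ENNReal.ofReal q)^i ≤ ENNReal.ofReal 2 := by
    intro i hi
    rw [← ENNReal.ofReal_pow hq0]; exact ENNReal.ofReal_le_ofReal (hqi i hi)
  have h1 : ∀ y, F β y ≤ ENNReal.ofReal (X t) * PP F X t y + ENNReal.ofReal q * conv (PP F X t) (F β) y := by
    intro y
    refine (S.recur t β ht.1 ht.2 le_rfl y).trans (le_of_eq ?_)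
    have this : F t = fun y => ENNReal.ofReal (X t) * PP F X t y := funext fun y => S.F_PP ht y
    have e : conv (F t) (F β) y = ENNReal.ofReal (X t) * conv (PP F X t) (F β) y := by
      calc conv (F t) (F β) y = conv (fun y => ENNReal.ofReal (X t) * PP F X t y) (F β) y := by rw [← this]
        _ = _ := by rw [conv_smul_left]
    rw [e, ← S.F_PP ht, hq, ENNReal.ofReal_mul (by linarith [ht.2]), mul_assoc]
  have h2 : ∀ y, F β y ≤ (∑ i ∈ Finset.range n, ENNReal.ofReal (2 * X t) * cpow (PP F X t) (i+1) y) +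
      ENNReal.ofReal 2 * conv (cpow (PP F X t) n) (F β) y := by
    intro y
    refine (iterate_le _ _ _ _ h1 n y).trans ?_
    refine add_le_add (Finset.sum_le_sum fun i hi => ?_) (mul_le_mul' (hqi' n le_rfl) le_rfl)
    rw [conv_smul_right, ← mul_assoc, ENNReal.ofReal_mul (p := 2) (by norm_num)]
    have : conv (cpow (PP F X t) i) (fun y => PP F X t y) = cpow (PP F X t) (i+1) := by
      rw [cpow, conv_comm]
    rw [this]
    exact mul_le_mul' (mul_le_mul' (hqi' i (Finset.mem_range.mp hi).le) le_rfl) le_rfl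
  refine (conv_mono h2 (fun _ => le_rfl) x).trans (le_of_eq ?_)
  rw [conv_add_left B (fun y => ∑ i ∈ Finset.range n, ENNReal.ofReal (2 * X t) * cpow (PP F X t) (i+1) y)
    (fun y => ENNReal.ofReal 2 * conv (cpow (PP F X t) n) (F β) y)]
  show _ + _ = _
  rw [conv_sum_left, conv_smul_left,
    conv_comm (cpow _ n) (F β), conv_assoc]
  congr 1
  refine Finset.sum_congr rfl fun i _ => ?_
  rw [conv_smul_left]

lemma growth (S : Sys κ β δ F X r) (hδ : 0 ≤ δ) {t z ν : ℝ} (h0 : 0 ≤ t) (htz : t ≤ z) (hz : z ≤ β) (hν : 1 ≤ ν)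
    (hδν : 12 * δ * ν^2 ≤ 1) (h : r z ≤ ν * r t) : X z ≤ 2 * ν^2 * X t := by
  have ht' : t ∈ Icc 0 β := ⟨h0, htz.trans hz⟩
  have hz' : z ∈ Icc 0 β := ⟨h0.trans htz, hz⟩
  have a1 := S.X1 t ht'
  have a2 := S.X1 z hz'
  have b1 := S.r1 t ht'
  have b2 := S.r1 z hz'
  have hr := S.ratio t z h0 htz hz
  have h1 : Real.log (r z) ≤ Real.log ν + Real.log (r t) := by
    rw [← Real.log_mul (by linarith) (by linarith)]
    exact Real.log_le_log (by linarith) h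
  have h2 : Real.log (2*ν^2) = Real.log 2 + 2 * Real.log ν := by
    rw [Real.log_mul (by norm_num) (by positivity), Real.log_pow]; norm_num
  have h3 : Real.log (2*ν^2) ≤ 2*ν^2 := (Real.log_le_sub_one_of_pos (by positivity)).trans (by linarith)
  have h4 : 1/2 ≤ Real.log 2 := by have := Real.log_two_gt_d9; linarith
  have h6 : 0 ≤ Real.log ν := Real.log_nonneg hν
  have h7 : 0 < 1 - 3*δ := by nlinarith
  have h8 : 3*δ*Real.log (2*ν^2) ≤ Real.log 2 := by
    calc 3*δ*Real.log (2*ν^2) ≤ 3*δ*(2*ν^2) := by gcongr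
      _ ≤ 1/2 := by linarith
      _ ≤ _ := h4
  have h5 : Real.log (X z) - Real.log (X t) ≤ Real.log (2*ν^2) := by
    refine le_of_mul_le_mul_left ?_ h7
    linarith
  rw [← Real.log_le_log_iff (by linarith) (by positivity), Real.log_mul (by positivity) (by linarith)]
  linarith

lemma ivt (S : Sys κ β δ F X r) {t s : ℝ} (ht : t ∈ Icc 0 β) (h1 : r t ≤ s) (h2 : s ≤ r β) :
    ∃ z, t ≤ z ∧ z ≤ β ∧ r z = s := by
  obtain ⟨z, hz, e⟩ := intermediate_value_Icc ht.2 (S.rc.mono (Icc_subset_Icc ht.1 le_rfl)) ⟨h1, h2⟩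
  exact ⟨z, hz.1, hz.2, e⟩

lemma top_bound (S : Sys κ β δ F X r) (hd : 0 < d) (hκ : ∀ q, 1 ≤ κ q) {t l a : ℝ} (ht : t ∈ Icc 0 β) (hl : 1 ≤ l)
    (hr : r β ≤ l * r t) (ha : 0 ≤ a) (had : a ≤ d) (x : V d) :
    conv (F β) (box (r t)) x ≤ ENNReal.ofReal (X β * (KD d κ * (2*l)^d) * (1 + supNorm x / r t)^(-a)) := by
  have hβ : β ∈ Icc 0 β := ⟨ht.1.trans ht.2, le_rfl⟩
  have hK := KD_pos hd κ hκ
  have hX := S.X1 β hβ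
  have hrt := S.r1 t ht
  have hrb := S.r1 β hβ
  have hn := supNorm_nonneg x
  have h1 : conv (F β) (box (r t)) x ≤ ENNReal.ofReal (X β) * conv (cpow (PP F X β) 1) (box (r β)) x := by
    rw [cpow_one]
    have : (fun x => ENNReal.ofReal (X β) * conv (PP F X β) (box (r β)) x) x = conv (fun x => ENNReal.ofReal (X β) * PP F X β x) (box (r β)) x := by
      rw [conv_smul_left]
    rw [show ENNReal.ofReal (X β) * conv (PP F X β) (box (r β)) x = _ from this]
    exact conv_mono (fun y => (S.F_PP hβ y).le) (fun y => box_mono (S.rmono ht hβ ht.2) y) x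
  refine (h1.trans (mul_le_mul' le_rfl (S.PP_decay hd hκ hβ 1 x))).trans ?_
  rw [← ENNReal.ofReal_mul (by linarith)]
  refine ENNReal.ofReal_le_ofReal ?_
  rw [mul_assoc (X β)]
  refine mul_le_mul_of_nonneg_left ?_ (by linarith)
  have hs1 : 1 ≤ Real.sqrt ((1:ℕ)+1) := by
    rw [Real.one_le_sqrt]; norm_num
  have hs2 : Real.sqrt ((1:ℕ)+1) ≤ 2 := by
    rw [Real.sqrt_le_left (by norm_num)]; norm_num
  set s := Real.sqrt ((1:ℕ)+1) with hs
  have had4 : a ≤ ((4*d : ℕ):ℝ) := by push_cast; nlinarith [(Nat.cast_nonneg d : (0:ℝ) ≤ d)]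
  have hle : s * r β ≤ (2*l) * r t := by nlinarith
  calc KD d κ / s^d * ((1 + supNorm x/(s * r β))^(4*d))⁻¹ ≤ KD d κ * ((1 + supNorm x/(2*l* r t))^(4*d))⁻¹ := by
        gcongr
        exact div_le_self hK.le (one_le_pow₀ hs1)
    _ ≤ KD d κ * ((1 + supNorm x/(2*l* r t))^(-a)) := by
      gcongr
      exact pow_inv_le_rpow _ _ (by positivity) _ had4
    _ ≤ KD d κ * ((2*l)^a * (1 + supNorm x/r t)^(-a)) := by
      gcongr
      exact rpow_scale _ _ _ _ hn (by linarith) (by linarith) ha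
    _ ≤ KD d κ * ((2*l)^(d:ℝ) * (1 + supNorm x/r t)^(-a)) := by
      gcongr
      linarith
    _ = _ := by rw [Real.rpow_natCast]; ring

def Bd (β : ℝ) (F : ℝ → V d → ℝ≥0∞) (X r : ℝ → ℝ) (a D : ℝ) : Prop :=
  ∀ t ∈ Icc 0 β, ∀ x, conv (F β) (box (r t)) x ≤ ENNReal.ofReal (D * X t * (1 + supNorm x / r t)^(-a))

lemma bd_init (S : Sys κ β δ F X r) (hd : 0 < d) (hκ : ∀ q, 1 ≤ κ q) {a : ℝ} (hb : 0 ≤ β) (ha : 0 ≤ a) (had : a ≤ d) :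
    Bd β F X r a (X β * (KD d κ * (2*r β)^d)) := by
  have hβ : β ∈ Icc 0 β := ⟨hb, le_rfl⟩
  have hX := S.X1 β hβ
  have hr := S.r1 β hβ
  have hK := KD_pos hd κ hκ
  intro t ht x
  have h1 := S.r1 t ht
  have h2 := S.X1 t ht
  have hn := supNorm_nonneg x
  refine (S.top_bound hd hκ ht hr (by nlinarith) ha had x).trans (ENNReal.ofReal_le_ofReal ?_)
  have : 0 ≤ X β * (KD d κ * (2*r β)^d) := by positivity
  refine mul_le_mul_of_nonneg_right ?_ (by positivity)
  exact le_mul_of_one_le_right this h2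

lemma remainder (S : Sys κ β δ F X r) (hd : 0 < d) (hκ : ∀ q, 1 ≤ κ q) {t z s a D : ℝ} (ht : t ∈ Icc 0 β) (hz : z ∈ Icc 0 β)
    (hD : 0 ≤ D) (ha : 0 ≤ a) (had : a ≤ d) (k : ℕ) (hs : s = Real.sqrt (k+1) * r t)
    (hU : ∀ w, conv (F β) (box s) w ≤ ENNReal.ofReal (D * (1 + supNorm w / s)^(-a))) (x : V d) :
    conv (F β) (conv (cpow (PP F X t) k) (box (r t))) x ≤
      ENNReal.ofReal (KD d κ / (Real.sqrt (k+1))^d * (Kd d * (D * (1 + supNorm x / s)^(-a)))) := by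
  have hK := KD_pos hd κ hκ
  have hrt := S.r1 t ht
  have hν : 1 ≤ Real.sqrt (k+1) := by
    rw [Real.one_le_sqrt]; have : (0:ℝ) ≤ k := Nat.cast_nonneg k; linarith
  have hs1 : 1 ≤ s := by rw [hs]; nlinarith
  have h1 := sum_weight (F β) D a s hD ha had hs1 hU x
  have hc : 0 ≤ KD d κ / (Real.sqrt (k+1))^d := by positivity
  calc conv (F β) (conv (cpow (PP F X t) k) (box (r t))) x
      ≤ ∑' y, F β y * (ENNReal.ofReal (KD d κ / (Real.sqrt (k+1))^d) * ENNReal.ofReal (((1 + supNorm (x-y) / s)^(4*d))⁻¹)) := by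
        refine ENNReal.tsum_le_tsum fun y => mul_le_mul' le_rfl ?_
        rw [← ENNReal.ofReal_mul hc, hs]
        exact S.PP_decay hd hκ ht k (x-y)
    _ = ENNReal.ofReal (KD d κ / (Real.sqrt (k+1))^d) * ∑' y, F β y * ENNReal.ofReal (((1 + supNorm (x-y) / s)^(4*d))⁻¹) := by
        rw [← ENNReal.tsum_mul_left]
        refine tsum_congr fun y => by ring
    _ ≤ _ := by
        refine (mul_le_mul' le_rfl h1).trans ?_
        rw [← ENNReal.ofReal_mul hc]

def KN (d : ℕ) (κ : ℕ → ℝ) (k : ℕ) : ℝ :=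
  2 * (Real.sqrt (k+1))^2 * (KD d κ * (2*Real.sqrt (k+1))^d) + 2 * k * (KD d κ * (Real.sqrt (k+1))^d)

lemma bd_step (S : Sys κ β δ F X r) (hd : 2 < d) (hκ : ∀ q, 1 ≤ κ q) {a D : ℝ} (ha : 0 ≤ a) (had : a ≤ d) (hD : 0 ≤ D)
    (hδ : 0 ≤ δ) (k : ℕ) (hδk : 12 * δ * (k+1) ≤ 1)
    (hk : 4 * KD d κ * Kd d * (Real.sqrt (k+1))^(a+2-d) ≤ 1/2)
    (hB : Bd β F X r a D) : Bd β F X r a (KN d κ k + D/2) := by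
  intro t ht x
  have hd0 : 0 < d := by omega
  have hK := KD_pos hd0 κ hκ
  have hKd := Kd_pos d
  have hX := S.X1 t ht
  have hrt := S.r1 t ht
  have hn := supNorm_nonneg x
  have hk0 : (0:ℝ) ≤ k := Nat.cast_nonneg k
  have hν : 1 ≤ Real.sqrt (k+1) := by rw [Real.one_le_sqrt]; linarith
  have hν2 : Real.sqrt (k+1)^2 = k+1 := Real.sq_sqrt (by linarith)
  have hw : 0 ≤ (1 + supNorm x / r t)^(-a) := by positivity
  set ν := Real.sqrt (k+1) with hνdef
  have hδν : 12 * δ * ν^2 ≤ 1 := by rw [hν2]; exact hδk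
  have hβ : β ∈ Icc 0 β := ⟨ht.1.trans ht.2, le_rfl⟩
  rcases le_total (r β) (ν * r t) with hcase | hcase
  · refine (S.top_bound hd0 hκ ht hν hcase ha had x).trans (ENNReal.ofReal_le_ofReal ?_)
    have hg := S.growth hδ ht.1 ht.2 le_rfl hν hδν hcase
    calc X β * (KD d κ * (2*ν)^d) * (1 + supNorm x / r t)^(-a)
        ≤ (2 * ν^2 * X t) * (KD d κ * (2*ν)^d) * (1 + supNorm x / r t)^(-a) := by gcongr
      _ = (2 * ν^2 * (KD d κ * (2*ν)^d)) * X t * (1 + supNorm x / r t)^(-a) := by ring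
      _ ≤ _ := by
        gcongr
        unfold KN
        rw [← hνdef]
        have h1 : 0 ≤ 2 * k * (KD d κ * ν^d) := by positivity
        linarith
  · obtain ⟨z, htz, hzβ, hz⟩ := S.ivt ht (by nlinarith) hcase
    have hz' : z ∈ Icc 0 β := ⟨ht.1.trans htz, hzβ⟩
    have hg := S.growth hδ ht.1 htz hzβ hν hδν hz.le
    have hXz := S.X1 z hz'
    have hrem := S.remainder hd0 hκ (s := r z) (D := D * X z) (a := a) ht hz' (by positivity) ha had k hz (fun w => hB z hz' w) x
    have hδ2 : δ ≤ 1/2 := by nlinarith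
    have hkd : k * δ ≤ 1/2 := by nlinarith
    refine (S.expand hδ hδ2 k hkd ht (box (r t)) x).trans ?_
    have had4 : a ≤ ((4*d : ℕ):ℝ) := by push_cast; nlinarith [(Nat.cast_nonneg d : (0:ℝ) ≤ d)]
    have hdir : (∑ i ∈ Finset.range k, ENNReal.ofReal (2 * X t) * conv (cpow (PP F X t) (i+1)) (box (r t)) x) ≤
        ENNReal.ofReal (2 * k * (KD d κ * ν^d) * X t * (1 + supNorm x / r t)^(-a)) := by
      have : ∀ i ∈ Finset.range k, ENNReal.ofReal (2 * X t) * conv (cpow (PP F X t) (i+1)) (box (r t)) x ≤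
          ENNReal.ofReal (2 * (KD d κ * ν^d) * X t * (1 + supNorm x / r t)^(-a)) := by
        intro i hi
        have hik : (i:ℝ) + 1 ≤ k := by exact_mod_cast Finset.mem_range.mp hi
        refine (mul_le_mul' le_rfl (S.PP_decay hd0 hκ ht (i+1) x)).trans ?_
        rw [← ENNReal.ofReal_mul (by positivity)]
        refine ENNReal.ofReal_le_ofReal ?_
        have hμ1 : 1 ≤ Real.sqrt (((i+1:ℕ):ℝ)+1) := by
          rw [Real.one_le_sqrt]; push_cast; have : (0:ℝ) ≤ i := Nat.cast_nonneg i; linarith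
        have hμν : Real.sqrt (((i+1:ℕ):ℝ)+1) ≤ ν := by
          apply Real.sqrt_le_sqrt; push_cast; linarith
        set μ := Real.sqrt (((i+1:ℕ):ℝ)+1) with hμ
        calc 2 * X t * (KD d κ / μ^d * ((1 + supNorm x/(μ * r t))^(4*d))⁻¹)
            ≤ 2 * X t * (KD d κ * ((1 + supNorm x/(ν * r t))^(4*d))⁻¹) := by
              gcongr
              exact div_le_self hK.le (one_le_pow₀ hμ1)
          _ ≤ 2 * X t * (KD d κ * ((1 + supNorm x/(ν * r t))^(-a))) := by
              gcongr
              exact pow_inv_le_rpow _ _ (by positivity) _ had4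
          _ ≤ 2 * X t * (KD d κ * (ν^a * (1 + supNorm x/r t)^(-a))) := by
              gcongr
              exact rpow_scale _ _ _ _ hn (by linarith) hν ha
          _ ≤ 2 * X t * (KD d κ * (ν^(d:ℝ) * (1 + supNorm x/r t)^(-a))) := by
              gcongr
          _ = _ := by rw [Real.rpow_natCast]; ring
      refine (Finset.sum_le_sum this).trans (le_of_eq ?_)
      rw [Finset.sum_const, Finset.card_range, nsmul_eq_mul, ← ENNReal.ofReal_natCast, ← ENNReal.ofReal_mul hk0]
      congr 1; ring
    have hrem2 : ENNReal.ofReal 2 * conv (F β) (conv (cpow (PP F X t) k) (box (r t))) x ≤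
        ENNReal.ofReal (D/2 * X t * (1 + supNorm x / r t)^(-a)) := by
      refine (mul_le_mul' le_rfl hrem).trans ?_
      rw [← ENNReal.ofReal_mul (by norm_num)]
      refine ENNReal.ofReal_le_ofReal ?_
      rw [hz]
      have e : ν^(a+2-d) = ν^a * ν^2 / ν^d := by
        rw [Real.rpow_sub (by linarith), Real.rpow_add (by linarith), Real.rpow_natCast]
        norm_num
      calc 2 * (KD d κ / ν^d * (Kd d * (D * X z * (1 + supNorm x / (ν * r t))^(-a))))
          ≤ 2 * (KD d κ / ν^d * (Kd d * (D * (2*ν^2*X t) * (ν^a * (1 + supNorm x / r t)^(-a))))) := by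
            gcongr
            exact rpow_scale _ _ _ _ hn (by linarith) hν ha
        _ = (4 * KD d κ * Kd d * (ν^(a+2-d))) * (D * X t * (1 + supNorm x / r t)^(-a)) := by
            rw [e]; ring
        _ ≤ 1/2 * (D * X t * (1 + supNorm x / r t)^(-a)) := by gcongr
        _ = _ := by ring
    refine (add_le_add hdir hrem2).trans ?_
    rw [← ENNReal.ofReal_add (by positivity) (by positivity)]
    refine ENNReal.ofReal_le_ofReal ?_
    have h2 : 0 ≤ 2 * ν^2 * (KD d κ * (2*ν)^d) := by positivity
    have e : (KN d κ k + D/2) * X t * (1 + supNorm x / r t)^(-a) = (2 * ν^2 * (KD d κ * (2*ν)^d)) * X t * (1 + supNorm x / r t)^(-a)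
      + 2 * k * (KD d κ * ν^d) * X t * (1 + supNorm x / r t)^(-a) + D/2 * X t * (1 + supNorm x / r t)^(-a) := by
      unfold KN; rw [← hνdef]; ring
    rw [e]
    have h3 : 0 ≤ (2 * ν^2 * (KD d κ * (2*ν)^d)) * X t * (1 + supNorm x / r t)^(-a) := by positivity
    linarith

end Sys

open Sys in
theorem bd_final (hd : 2 < d) (κ : ℕ → ℝ) (hκ : ∀ q, 1 ≤ κ q) (ε : ℝ) (he0 : 0 < ε) (he1 : ε ≤ 1/2) :
    ∃ D > (0:ℝ), ∃ δ₀ > (0:ℝ), ∀ (β δ : ℝ) (F : ℝ → V d → ℝ≥0∞) (X r : ℝ → ℝ), 0 ≤ β → 0 ≤ δ → δ ≤ δ₀ →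
      Sys κ β δ F X r → Bd β F X r (d-2-ε/2) D := by
  have hd0 : 0 < d := by omega
  have hd3 : (3:ℝ) ≤ d := by exact_mod_cast hd
  have hK := KD_pos hd0 κ hκ
  have hKd := Kd_pos d
  set a : ℝ := d-2-ε/2 with ha
  have ha0 : 0 ≤ a := by linarith
  have had : a ≤ d := by linarith
  obtain ⟨k, hk⟩ : ∃ k : ℕ, 4 * KD d κ * Kd d * (Real.sqrt (k+1))^(a+2-d) ≤ 1/2 := by
    have hlim : Tendsto (fun k : ℕ => 4 * KD d κ * Kd d * (Real.sqrt (k+1))^(-(ε/2))) atTop (𝓝 (4 * KD d κ * Kd d * 0)) := by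
      refine Tendsto.const_mul _ ?_
      refine (tendsto_rpow_neg_atTop (by linarith : 0 < ε/2)).comp ?_
      refine Real.tendsto_sqrt_atTop.comp ?_
      exact tendsto_atTop_add_const_right _ _ tendsto_natCast_atTop_atTop
    rw [mul_zero] at hlim
    obtain ⟨k, hk⟩ := (hlim.eventually_lt_const (by norm_num : (0:ℝ) < 1/2)).exists
    refine ⟨k, ?_⟩
    have : a + 2 - d = -(ε/2) := by rw [ha]; ring
    rw [this]; exact hk.le
  have hKN : 0 ≤ KN d κ k := by unfold KN; positivity
  refine ⟨2 * KN d κ k + 1, by linarith, 1/(12*(k+1)), by positivity, ?_⟩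
  intro β δ F X r hβ hδ hδ0 S
  have hδk : 12 * δ * (k+1) ≤ 1 := by
    rw [le_div_iff₀ (by positivity)] at hδ0; linarith
  set D0 := X β * (KD d κ * (2*r β)^d) with hD0
  have hXβ := S.X1 β ⟨hβ, le_rfl⟩
  have hrβ := S.r1 β ⟨hβ, le_rfl⟩
  have hD00 : 0 ≤ D0 := by rw [hD0]; positivity
  have hind : ∀ n : ℕ, Bd β F X r a (2 * KN d κ k + D0 / 2^n) := by
    intro n
    induction n with
    | zero =>
      intro t ht x
      refine (S.bd_init hd0 hκ hβ ha0 had t ht x).trans (ENNReal.ofReal_le_ofReal ?_)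
      have h1 := S.r1 t ht
      have h2 := S.X1 t ht
      have hn := supNorm_nonneg x
      gcongr
      rw [← hD0, pow_zero, div_one]; linarith
    | succ n ih =>
      have := S.bd_step hd hκ ha0 had (by positivity) hδ k hδk hk ih
      have e : KN d κ k + (2 * KN d κ k + D0 / 2^n)/2 = 2 * KN d κ k + D0 / 2^(n+1) := by
        rw [pow_succ]; field_simp; ring
      rwa [e] at this
  obtain ⟨n, hn⟩ := pow_unbounded_of_one_lt D0 (by norm_num : (1:ℝ) < 2)
  intro t ht x
  refine (hind n t ht x).trans (ENNReal.ofReal_le_ofReal ?_)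
  have h1 := S.r1 t ht
  have h2 := S.X1 t ht
  have hx := supNorm_nonneg x
  gcongr
  rw [div_le_one (by positivity)]; exact hn.le

end S18

namespace S18
set_option linter.unusedVariables false
open Set Filter Topology
variable {d : ℕ}

lemma tele_step (i : ℕ) (u : ℝ) (hu : 0 ≤ u) :
    ((Real.sqrt (((i+1:ℕ):ℝ)+1) + u)^3)⁻¹ ≤
      2 * ((Real.sqrt (i + (1+u)^2))⁻¹ - (Real.sqrt ((i+1:ℕ) + (1+u)^2))⁻¹) := by
  have hi : (0:ℝ) ≤ i := Nat.cast_nonneg i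
  push_cast
  have hp2 : Real.sqrt (i + (1+u)^2)^2 = i + (1+u)^2 := Real.sq_sqrt (by positivity)
  have hq2 : Real.sqrt (i + 1 + (1+u)^2)^2 = i + 1 + (1+u)^2 := Real.sq_sqrt (by positivity)
  have hp0 : 0 < Real.sqrt (i + (1+u)^2) := Real.sqrt_pos.mpr (by positivity)
  have hq0 : 0 < Real.sqrt (i + 1 + (1+u)^2) := Real.sqrt_pos.mpr (by positivity)
  have hm2 : Real.sqrt ((i:ℝ)+1+1)^2 = i + 1 + 1 := Real.sq_sqrt (by positivity)
  have hm1 : 1 ≤ Real.sqrt ((i:ℝ)+1+1) := by rw [Real.one_le_sqrt]; linarith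
  set p := Real.sqrt (i + (1+u)^2)
  set q := Real.sqrt (i + 1 + (1+u)^2)
  set m := Real.sqrt ((i:ℝ)+1+1)
  have hqm : q ≤ m + u := by
    refine (sq_le_sq₀ hq0.le (by linarith)).mp ?_
    nlinarith
  have hpq : p ≤ q := by nlinarith
  have h1 : ((m+u)^3)⁻¹ ≤ (q^3)⁻¹ := by gcongr
  refine h1.trans ?_
  have e : p⁻¹ - q⁻¹ = (p*q*(p+q))⁻¹ := by
    have : (q-p)*(q+p) = 1 := by nlinarith
    field_simp
    nlinarith
  rw [e]
  have h2 : p*q*(p+q) ≤ 2 * q^3 := by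
    have : p*q ≤ q*q := by gcongr
    calc p*q*(p+q) ≤ q*q*(q+q) := by gcongr
      _ = _ := by ring
  have h3 : (2*q^3)⁻¹ ≤ (p*q*(p+q))⁻¹ := by gcongr
  have h4 : 2 * (2*q^3)⁻¹ = (q^3)⁻¹ := by field_simp
  linarith

lemma tele (n : ℕ) (u : ℝ) (hu : 0 ≤ u) :
    ∑ i ∈ Finset.range n, ((Real.sqrt (((i+1:ℕ):ℝ)+1) + u)^3)⁻¹ ≤ 2 * (1+u)⁻¹ := by
  have h := Finset.sum_le_sum (s := Finset.range n) fun i _ => tele_step i u hu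
  refine h.trans ?_
  rw [← Finset.mul_sum, Finset.sum_range_sub' (fun i : ℕ => (Real.sqrt ((i:ℝ) + (1+u)^2))⁻¹)]
  have h0 : Real.sqrt (((0:ℕ):ℝ) + (1+u)^2) = 1+u := by
    rw [Nat.cast_zero, zero_add, Real.sqrt_sq (by linarith)]
  rw [h0]
  have : 0 ≤ (Real.sqrt ((n:ℝ) + (1+u)^2))⁻¹ := by positivity
  linarith

lemma tele_d (hd : 2 < d) (n : ℕ) (u : ℝ) (hu : 0 ≤ u) :
    ∑ i ∈ Finset.range n, ((Real.sqrt (((i+1:ℕ):ℝ)+1))^d)⁻¹ * ((1 + u/Real.sqrt (((i+1:ℕ):ℝ)+1))^(4*d))⁻¹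
      ≤ 2 * ((1+u)^(d-2))⁻¹ := by
  obtain ⟨m, rfl⟩ : ∃ m, d = m + 3 := ⟨d-3, by omega⟩
  have h1 : ∀ i ∈ Finset.range n, ((Real.sqrt (((i+1:ℕ):ℝ)+1))^(m+3))⁻¹ * ((1 + u/Real.sqrt (((i+1:ℕ):ℝ)+1))^(4*(m+3)))⁻¹
      ≤ ((1+u)^m)⁻¹ * ((Real.sqrt (((i+1:ℕ):ℝ)+1) + u)^3)⁻¹ := by
    intro i _
    have hm1 : 1 ≤ Real.sqrt (((i+1:ℕ):ℝ)+1) := by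
      rw [Real.one_le_sqrt]; have : (0:ℝ) ≤ ((i+1:ℕ):ℝ) := Nat.cast_nonneg _
      linarith
    set μ := Real.sqrt (((i+1:ℕ):ℝ)+1)
    rw [← mul_inv, ← mul_inv]
    have h2 : (1+u)^m * (μ+u)^3 ≤ μ^(m+3) * (1+u/μ)^(4*(m+3)) := by
      calc (1+u)^m * (μ+u)^3 ≤ (μ+u)^m * (μ+u)^3 := by gcongr
        _ = (μ * (1+u/μ))^(m+3) := by
          rw [← pow_add]; congr 1; field_simp
        _ = μ^(m+3) * (1+u/μ)^(m+3) := by rw [mul_pow]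
        _ ≤ _ := by
          gcongr
          · have : 0 ≤ u/μ := by positivity
            linarith
          · omega
    gcongr
  refine (Finset.sum_le_sum h1).trans ?_
  rw [← Finset.mul_sum]
  calc ((1+u)^m)⁻¹ * _ ≤ ((1+u)^m)⁻¹ * (2 * (1+u)⁻¹) := by
        gcongr; exact tele n u hu
    _ = _ := by
      rw [show m+3-2 = m+1 by omega, pow_succ, mul_inv]; ring

namespace Sys
variable {κ : ℕ → ℝ} {β δ : ℝ} {F : ℝ → V d → ℝ≥0∞} {X r : ℝ → ℝ}

lemma near (S : Sys κ β δ F X r) (hd : 2 < d) (hκ : ∀ q, 1 ≤ κ q) (hβ0 : 0 ≤ β) (hδ : 0 ≤ δ) {a D : ℝ} (ha : 0 ≤ a)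
    (hD : 0 ≤ D) (hB : Bd β F X r a D) (n : ℕ) (hδn : 12 * δ * (n+1) ≤ 1) (x : V d) :
    conv (F β) (box (r 0)) x ≤ ENNReal.ofReal (4 * KD d κ * ((1 + supNorm x / r 0)^(d-2))⁻¹ +
      4 * KD d κ * Kd d * (D+1) / Real.sqrt (n+1)) := by
  have hd0 : 0 < d := by omega
  have hK := KD_pos hd0 κ hκ
  have hKd := Kd_pos d
  have h0 : (0:ℝ) ∈ Icc 0 β := ⟨le_rfl, hβ0⟩
  have hβ : β ∈ Icc 0 β := ⟨hβ0, le_rfl⟩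
  have hr := S.r1 0 h0
  have hn := supNorm_nonneg x
  have hk0 : (0:ℝ) ≤ n := Nat.cast_nonneg n
  have hν : 1 ≤ Real.sqrt (n+1) := by rw [Real.one_le_sqrt]; linarith
  have hν2 : Real.sqrt (n+1)^2 = n+1 := Real.sq_sqrt (by linarith)
  have hδ2 : δ ≤ 1/2 := by nlinarith
  have hkd : n * δ ≤ 1/2 := by nlinarith
  have hδν : 12 * δ * (Real.sqrt (n+1))^2 ≤ 1 := by rw [hν2]; exact hδn
  have hU : ∀ w, conv (F β) (box (Real.sqrt (n+1) * r 0)) w ≤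
      ENNReal.ofReal (((D+1) * (2 * (Real.sqrt (n+1))^2)) * (1 + supNorm w / (Real.sqrt (n+1) * r 0))^(-(0:ℝ))) := by
    intro w
    rw [neg_zero, Real.rpow_zero, mul_one]
    rcases le_total (r β) (Real.sqrt (n+1) * r 0) with hcase | hcase
    · have hg := S.growth hδ le_rfl hβ0 le_rfl hν hδν hcase
      rw [S.X0, mul_one] at hg
      refine (conv_le_mass_mul (F β) _ 1 (fun y => box_le_one _ y) w).trans ?_
      rw [S.mass β hβ, mul_one]
      refine ENNReal.ofReal_le_ofReal (hg.trans ?_)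
      exact le_mul_of_one_le_left (by positivity) (by linarith)
    · obtain ⟨z, htz, hzβ, hz⟩ := S.ivt h0 (by nlinarith) hcase
      have hz' : z ∈ Icc 0 β := ⟨htz, hzβ⟩
      have hg := S.growth hδ le_rfl htz hzβ hν hδν hz.le
      rw [S.X0, mul_one] at hg
      have hXz := S.X1 z hz'
      have hrz := S.r1 z hz'
      rw [← hz]
      refine (hB z hz' w).trans (ENNReal.ofReal_le_ofReal ?_)
      have hw := supNorm_nonneg w
      have h1 : (1 + supNorm w / r z)^(-a) ≤ 1 :=
        Real.rpow_le_one_of_one_le_of_nonpos (by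
          have : 0 ≤ supNorm w / r z := by positivity
          linarith) (by linarith)
      calc D * X z * (1 + supNorm w / r z)^(-a) ≤ D * X z * 1 := by gcongr
        _ ≤ (D+1) * (2 * (Real.sqrt (n+1))^2) := by
          rw [mul_one]; gcongr; linarith
  have hrem := S.remainder hd0 hκ (t := 0) (z := 0) h0 h0 (by positivity) le_rfl (by positivity) n rfl hU x
  refine (S.expand hδ hδ2 n hkd h0 (box (r 0)) x).trans ?_
  rw [ENNReal.ofReal_add (by positivity) (by positivity)]
  refine add_le_add ?_ ?_
  · calc (∑ i ∈ Finset.range n, ENNReal.ofReal (2 * X 0) * conv (cpow (PP F X 0) (i+1)) (box (r 0)) x)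
        ≤ ∑ i ∈ Finset.range n, ENNReal.ofReal (2 * KD d κ * (((Real.sqrt (((i+1:ℕ):ℝ)+1))^d)⁻¹ *
            ((1 + supNorm x / r 0/Real.sqrt (((i+1:ℕ):ℝ)+1))^(4*d))⁻¹)) := by
          refine Finset.sum_le_sum fun i _ => ?_
          refine (mul_le_mul' le_rfl (S.PP_decay hd0 hκ h0 (i+1) x)).trans ?_
          rw [S.X0, ← ENNReal.ofReal_mul (by norm_num)]
          refine ENNReal.ofReal_le_ofReal (le_of_eq ?_)
          rw [div_div, mul_comm (r 0)]
          ring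
      _ = ENNReal.ofReal (∑ i ∈ Finset.range n, 2 * KD d κ * (((Real.sqrt (((i+1:ℕ):ℝ)+1))^d)⁻¹ *
            ((1 + supNorm x / r 0/Real.sqrt (((i+1:ℕ):ℝ)+1))^(4*d))⁻¹)) := by
          rw [ENNReal.ofReal_sum_of_nonneg]
          intro i _; positivity
      _ ≤ _ := by
          refine ENNReal.ofReal_le_ofReal ?_
          rw [← Finset.mul_sum]
          calc 2 * KD d κ * _ ≤ 2 * KD d κ * (2 * ((1 + supNorm x / r 0)^(d-2))⁻¹) := by
                gcongr
                exact tele_d hd n _ (by positivity)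
            _ = _ := by ring
  · refine (mul_le_mul' le_rfl hrem).trans ?_
    rw [← ENNReal.ofReal_mul (by norm_num)]
    refine ENNReal.ofReal_le_ofReal ?_
    rw [neg_zero, Real.rpow_zero, mul_one]
    set ν := Real.sqrt (n+1)
    have hp : ν^3 ≤ ν^d := pow_le_pow_right₀ hν (by omega)
    calc 2 * (KD d κ / ν^d * (Kd d * ((D+1) * (2*ν^2)))) ≤ 2 * (KD d κ / ν^3 * (Kd d * ((D+1) * (2*ν^2)))) := by
          gcongr
      _ = _ := by field_simp; ring

end Sys

open Sys in
theorem unif (hd : 2 < d) (κ : ℕ → ℝ) (hκ : ∀ q, 1 ≤ κ q) (ε : ℝ) (he0 : 0 < ε) (he1 : ε ≤ 1/2) :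
    ∃ δ₀ > (0:ℝ), ∀ (β δ : ℝ) (F : ℝ → V d → ℝ≥0∞) (X r : ℝ → ℝ), 0 ≤ β → 0 ≤ δ → δ ≤ δ₀ →
      Sys κ β δ F X r → ∀ x, conv (F β) (box (r 0)) x ≤
        ENNReal.ofReal (5 * KD d κ * (1 + supNorm x / r 0)^(-(d-2-ε:ℝ))) := by
  have hd0 : 0 < d := by omega
  have hd3 : (3:ℝ) ≤ d := by exact_mod_cast hd
  have hK := KD_pos hd0 κ hκ
  have hKd := Kd_pos d
  obtain ⟨D, hD, δ₁, hδ₁, hbd⟩ := bd_final hd κ hκ ε he0 he1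
  obtain ⟨L, hL0, hL⟩ : ∃ L : ℝ, 0 ≤ L ∧ D * (1+L)^(-(ε/2)) ≤ KD d κ := by
    have hlim : Tendsto (fun L : ℝ => D * (1+L)^(-(ε/2))) atTop (𝓝 (D * 0)) := by
      refine Tendsto.const_mul _ ?_
      refine (tendsto_rpow_neg_atTop (by linarith : 0 < ε/2)).comp ?_
      exact tendsto_atTop_add_const_left _ _ tendsto_id
    rw [mul_zero] at hlim
    obtain ⟨L, h1, h2⟩ := ((hlim.eventually_lt_const hK).and (eventually_ge_atTop 0)).exists
    exact ⟨L, h2, h1.le⟩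
  obtain ⟨n, hn⟩ : ∃ n : ℕ, 4 * KD d κ * Kd d * (D+1) / Real.sqrt (n+1) ≤ KD d κ * ((1+L)^(d-2))⁻¹ := by
    have hlim : Tendsto (fun n : ℕ => 4 * KD d κ * Kd d * (D+1) / Real.sqrt (n+1)) atTop (𝓝 0) := by
      refine Tendsto.const_div_atTop ?_ _
      refine Real.tendsto_sqrt_atTop.comp ?_
      exact tendsto_atTop_add_const_right _ _ tendsto_natCast_atTop_atTop
    obtain ⟨n, h⟩ := (hlim.eventually_lt_const (by positivity : 0 < KD d κ * ((1+L)^(d-2))⁻¹)).exists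
    exact ⟨n, h.le⟩
  refine ⟨min δ₁ (1/(12*(n+1))), lt_min hδ₁ (by positivity), ?_⟩
  intro β δ F X r hβ hδ hδ0 S x
  have hδn : 12 * δ * (n+1) ≤ 1 := by
    have := hδ0.trans (min_le_right _ _)
    rw [le_div_iff₀ (by positivity)] at this; linarith
  have hB := hbd β δ F X r hβ hδ (hδ0.trans (min_le_left _ _)) S
  have h0 : (0:ℝ) ∈ Icc 0 β := ⟨le_rfl, hβ⟩
  have hr := S.r1 0 h0
  have hx := supNorm_nonneg x
  have hu : 0 ≤ supNorm x / r 0 := by positivity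
  rcases le_total (supNorm x / r 0) L with h | h
  · refine (S.near hd hκ hβ hδ (by linarith) hD.le hB n hδn x).trans (ENNReal.ofReal_le_ofReal ?_)
    set u := supNorm x / r 0
    have h1 : ((1+u)^(d-2))⁻¹ ≤ (1+u)^(-(d-2-ε:ℝ)) := by
      refine pow_inv_le_rpow _ _ hu _ ?_
      rw [Nat.cast_sub (by omega)]; push_cast; linarith
    have h2 : ((1+L)^(d-2))⁻¹ ≤ ((1+u)^(d-2))⁻¹ := by gcongr
    have h3 : KD d κ * ((1+L)^(d-2))⁻¹ ≤ KD d κ * (1+u)^(-(d-2-ε:ℝ)) := by gcongr; exact h2.trans h1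
    have h4 : 4 * KD d κ * ((1+u)^(d-2))⁻¹ ≤ 4 * KD d κ * (1+u)^(-(d-2-ε:ℝ)) := by gcongr
    linarith
  · refine (hB 0 h0 x).trans (ENNReal.ofReal_le_ofReal ?_)
    rw [S.X0, mul_one]
    set u := supNorm x / r 0
    have e : (1+u)^(-(d-2-ε/2:ℝ)) = (1+u)^(-(ε/2)) * (1+u)^(-(d-2-ε:ℝ)) := by
      rw [← Real.rpow_add (by linarith)]; congr 1; ring
    have h1 : (1+u)^(-(ε/2)) ≤ (1+L)^(-(ε/2)) :=
      Real.rpow_le_rpow_of_nonpos (by linarith) (by linarith) (by linarith)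
    have h2 : 0 ≤ (1+u)^(-(d-2-ε:ℝ)) := by positivity
    rw [e, ← mul_assoc]
    refine mul_le_mul_of_nonneg_right ?_ h2
    calc D * (1+u)^(-(ε/2)) ≤ D * (1+L)^(-(ε/2)) := by gcongr
      _ ≤ 5 * KD d κ := by linarith

def K3 (d : ℕ) (c₀ : ℝ) : ℝ := c₀⁻¹ * d^d * (2*c₀⁻¹)^(4*d)

theorem final_bound (hd : 2 < d) {c₀ : ℝ} (hc : 0 < c₀) (hc1 : c₀ ≤ 1) (ε : ℝ) (he0 : 0 < ε) (he1 : ε ≤ 1/2) :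
    ∃ δ₀ > (0:ℝ), δ₀ ≤ 1/2 ∧ ∀ (M : Model d c₀) (β : ℝ), 0 ≤ β → β < M.betaOf δ₀ → ∀ x,
      M.F β x ≤ ENNReal.ofReal (K3 d c₀ * (1 + 10 * Kd d * KD d (kap d c₀)) / M.sigma^d *
        (1 + supNorm x / M.sigma)^(-(d-2-ε:ℝ))) := by
  have hd0 : 0 < d := by omega
  have hd3 : (3:ℝ) ≤ d := by exact_mod_cast hd
  have hκ := kap_ge hd0 hc
  have hK := KD_pos hd0 (kap d c₀) hκ
  have hKd := Kd_pos d
  obtain ⟨δ₁, hδ₁, hu⟩ := unif hd (kap d c₀) hκ ε he0 he1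
  refine ⟨min δ₁ (1/(24*d)), lt_min hδ₁ (by positivity), ?_, ?_⟩
  · refine (min_le_right _ _).trans ?_
    rw [div_le_div_iff₀ (by positivity) (by norm_num)]; linarith
  intro M β hβ hlt x
  set δ := min δ₁ (1/(24*d:ℝ)) with hδ
  have hδ0 : 0 ≤ δ := le_min hδ₁.le (by positivity)
  have hδ2 : 24 * d * δ ≤ 1 := by
    have : δ ≤ 1/(24*d:ℝ) := min_le_right _ _
    rw [le_div_iff₀ (by positivity)] at this; linarith
  have hδh : δ ≤ 1/2 := by nlinarith
  have S := sys_of hd0 hc hδ0 hδ2 hβ hlt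
  have h0 : (0:ℝ) ∈ Icc 0 β := ⟨le_rfl, hβ⟩
  have hb := hu β δ M.F (Xr M) M.xi hβ hδ0 (min_le_left _ _) S
  have hxi : M.xi 0 = M.sigma := xi_zero hd0
  have hσ : 1 ≤ M.sigma := hxi ▸ S.r1 0 h0
  rw [hxi] at hb
  have hK3 : 0 ≤ K3 d c₀ := by unfold K3; positivity
  have hβ2 : β ≤ 2 := by
    have := S.tau 0 β le_rfl hβ le_rfl
    rw [S.X0] at this
    nlinarith
  have hx := supNorm_nonneg x
  have hv : 0 ≤ supNorm x / M.sigma := by positivity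
  have hrec := S.recur 0 β le_rfl hβ le_rfl x
  rw [F_zero M, sub_zero] at hrec
  have hsw := sum_weight (M.F β) (5 * KD d (kap d c₀)) (d-2-ε) M.sigma (by positivity) (by linarith) (by linarith) hσ hb x
  have hc3 : 0 ≤ K3 d c₀ / M.sigma^d := by positivity
  have hconv : conv (Jt M) (M.F β) x ≤ ENNReal.ofReal (K3 d c₀ / M.sigma^d) *
      ENNReal.ofReal (Kd d * (5 * KD d (kap d c₀) * (1 + supNorm x / M.sigma)^(-(d-2-ε:ℝ)))) := by
    refine le_trans ?_ (mul_le_mul' le_rfl hsw)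
    rw [conv_comm, ← ENNReal.tsum_mul_left]
    refine ENNReal.tsum_le_tsum fun y => ?_
    rw [mul_left_comm, ← ENNReal.ofReal_mul hc3]
    exact mul_le_mul' le_rfl (Jt_bound hd0 hc hc1 (x-y))
  refine hrec.trans ((add_le_add (Jt_bound hd0 hc hc1 x) (mul_le_mul' (ENNReal.ofReal_le_ofReal hβ2) hconv)).trans ?_)
  rw [← ENNReal.ofReal_mul hc3, ← ENNReal.ofReal_mul (by norm_num), ← ENNReal.ofReal_add (by positivity) (by positivity)]
  refine ENNReal.ofReal_le_ofReal ?_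
  have h1 : ((1 + supNorm x / M.sigma)^(4*d))⁻¹ ≤ (1 + supNorm x / M.sigma)^(-(d-2-ε:ℝ)) := by
    refine pow_inv_le_rpow _ _ hv _ ?_
    push_cast; linarith
  have h2 : K3 d c₀ / M.sigma^d * ((1 + supNorm x / M.sigma)^(4*d))⁻¹ ≤ K3 d c₀ / M.sigma^d * (1 + supNorm x / M.sigma)^(-(d-2-ε:ℝ)) := by
    gcongr
  have h3 : c₀⁻¹ * d^d * (2*c₀⁻¹)^(4*d) = K3 d c₀ := rfl
  rw [h3]
  refine (add_le_add h2 le_rfl).trans (le_of_eq ?_)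
  ring

end S18

/-- improvement at intermediate scales (`prop:intermscales`). -/
theorem statement18 (d : ℕ) (hd : 2 < d) (c₀ : ℝ) (hc₀ : c₀ ∈ Set.Ioc (0:ℝ) 1) :
    ∃ cstar > (0:ℝ), ∃ Cstar > (0:ℝ), ∀ ε > (0:ℝ),
      ∀ c : ℝ, 0 < c → c ≤ cstar → ∀ C : ℝ, Cstar ≤ C →
        ∃ η : ℝ, η ∈ Set.Ioo (0:ℝ) 1 ∧ ∃ δ₂ : ℝ, δ₂ ∈ Set.Ioc (0:ℝ) (1/2) ∧
          ∀ M : Model d c₀, ∀ β : ℝ, 0 ≤ β → β < M.betaOf δ₂ →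
            (∀ β' : ℝ, 0 ≤ β' → β' ≤ β → ∀ x : Fin d → ℤ,
              M.F β' x ≤ ENNReal.ofReal (C / M.sigma ^ d *
                (M.sigma / max M.sigma (supNorm x)) ^ ((d:ℝ) - 2 - ε) *
                Real.exp (-c * supNorm x / M.xi β'))) →
            ∀ x : Fin d → ℤ, 2 * M.sigma ≤ supNorm x → supNorm x ≤ η * M.xi β →
              M.F β x ≤ ENNReal.ofReal (1/6 * (C / M.sigma ^ d *
                (M.sigma / max M.sigma (supNorm x)) ^ ((d:ℝ) - 2 - ε))) := by
  have hd0 : 0 < d := by omega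
  have hd3 : (3:ℝ) ≤ d := by exact_mod_cast hd
  have hc := hc₀.1
  have hK := S18.KD_pos hd0 (S18.kap d c₀) (S18.kap_ge hd0 hc)
  have hKd := S18.Kd_pos d
  have hK3 : 0 < S18.K3 d c₀ := by unfold S18.K3; positivity
  refine ⟨1, one_pos, 6 * (S18.K3 d c₀ * (1 + 10 * S18.Kd d * S18.KD d (S18.kap d c₀))), by positivity, ?_⟩
  intro ε he c _ _ C hC
  obtain ⟨δ, hδ, hδ2, h⟩ := S18.final_bound hd hc hc₀.2 (min ε (1/2)) (lt_min he (by norm_num)) (min_le_right _ _)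
  refine ⟨1/2, ⟨by norm_num, by norm_num⟩, δ, ⟨hδ, hδ2⟩, ?_⟩
  intro M β hβ hlt _ x hx _
  refine (h M β hβ hlt x).trans (ENNReal.ofReal_le_ofReal ?_)
  have hσ : 1 ≤ M.sigma := S18.sigma_ge_one M hd0
  have hxp : 0 < supNorm x := by linarith
  have hmax : max M.sigma (supNorm x) = supNorm x := max_eq_right (by linarith)
  rw [hmax]
  have hv : 0 < supNorm x / M.sigma := by positivity
  have hm : min ε (1/2) ≤ 1/2 := min_le_right _ _
  have h1 : (1 + supNorm x / M.sigma)^(-(d-2-min ε (1/2):ℝ)) ≤ (M.sigma / supNorm x)^((d:ℝ)-2-ε) := by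
    calc (1 + supNorm x / M.sigma)^(-(d-2-min ε (1/2):ℝ)) ≤ (supNorm x / M.sigma)^(-(d-2-min ε (1/2):ℝ)) :=
          Real.rpow_le_rpow_of_nonpos hv (by linarith) (by linarith)
      _ = (M.sigma / supNorm x)^((d:ℝ)-2-min ε (1/2)) := by
          rw [Real.rpow_neg hv.le, ← Real.inv_rpow hv.le, inv_div]
      _ ≤ _ := by
          refine Real.rpow_le_rpow_of_exponent_ge (by positivity) ?_ ?_
          · rw [div_le_one hxp]; linarith
          · have := min_le_left ε (1/2); linarith
  have hC0 : 0 ≤ C := le_trans (by positivity) hC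
  have h2 : S18.K3 d c₀ * (1 + 10 * S18.Kd d * S18.KD d (S18.kap d c₀)) ≤ C / 6 := by linarith
  calc _ ≤ (C/6) / M.sigma^d * (M.sigma / supNorm x)^((d:ℝ)-2-ε) := by gcongr
    _ = _ := by ring
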